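/- arXiv:2005.04465 — 17 statements merged into one kernel-verified Lean document; each statement's English description precedes it below -/
import Mathlib

section
/- Let U ⊆ ℝ be an open set, let S₁, S₂ : U → ℂ be twice differentiable functions with S₁(x) ≠ S₂(x) for every x ∈ U, and let z₁, z₂ : U → ℂ be four-times differentiable functions satisfying z₁'' = S₁·z₁ and z₂'' = S₂·z₂ on U. Then the product w := z₁·z₂ satisfies on U the fourth-order linear differential equation w'''' + f₃·w''' + f₂·w'' + f₁·w' + f₀·w = 0, where f₃ = −(S₁' − S₂')/(S₁ − S₂), f₂ = −2(S₁ + S₂), f₁ = −(S₁S₁' − S₂S₂' + 5(S₁S₂' − S₁'S₂))/(S₁ − S₂), and f₀ = −S₁'' − S₂'' + (S₁ − S₂)² + ((S₁')² − (S₂')²)/(S₁ − S₂). -/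
/-- `f` is `n`-times differentiable on `U` (the `k`-th derivative exists at each
point of `U` for every `k < n`). -/
def IterDiffOn (n : ℕ) (f : ℝ → ℂ) (U : Set ℝ) : Prop :=
  ∀ k < n, ∀ x ∈ U, DifferentiableAt ℝ (deriv^[k] f) x

theorem aux_step {U : Set ℝ} (hU : IsOpen U) {f g g' : ℝ → ℂ}
    (hfg : ∀ x ∈ U, f x = g x) (hg : ∀ x ∈ U, HasDerivAt g (g' x) x) :
    ∀ x ∈ U, deriv f x = g' x := by
  intro x hx
  have h : f =ᶠ[nhds x] g := by
    filter_upwards [hU.mem_nhds hx] with y hy using hfg y hy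
  rw [h.deriv_eq]
  exact (hg x hx).deriv

/-- The product `w = z₁ z₂` of solutions of `z₁'' = S₁ z₁` and `z₂'' = S₂ z₂`
(with `S₁ ≠ S₂` on `U`) satisfies the fourth-order equation
`w'''' + f₃ w''' + f₂ w'' + f₁ w' + f₀ w = 0`. -/
theorem stmt_0 (U : Set ℝ) (hU : IsOpen U)
    (S₁ S₂ z₁ z₂ : ℝ → ℂ)
    (hS₁ : IterDiffOn 2 S₁ U) (hS₂ : IterDiffOn 2 S₂ U)
    (hne : ∀ x ∈ U, S₁ x ≠ S₂ x)
    (hz₁ : IterDiffOn 4 z₁ U) (hz₂ : IterDiffOn 4 z₂ U)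
    (hode₁ : ∀ x ∈ U, deriv^[2] z₁ x = S₁ x * z₁ x)
    (hode₂ : ∀ x ∈ U, deriv^[2] z₂ x = S₂ x * z₂ x) :
    ∀ x ∈ U,
      deriv^[4] (fun t => z₁ t * z₂ t) x
        + (-(deriv S₁ x - deriv S₂ x) / (S₁ x - S₂ x))
            * deriv^[3] (fun t => z₁ t * z₂ t) x
        + (-2 * (S₁ x + S₂ x)) * deriv^[2] (fun t => z₁ t * z₂ t) x
        + (-(S₁ x * deriv S₁ x - S₂ x * deriv S₂ x
              + 5 * (S₁ x * deriv S₂ x - deriv S₁ x * S₂ x)) / (S₁ x - S₂ x))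
            * deriv (fun t => z₁ t * z₂ t) x
        + (-(deriv^[2] S₁ x) - deriv^[2] S₂ x + (S₁ x - S₂ x) ^ 2
            + ((deriv S₁ x) ^ 2 - (deriv S₂ x) ^ 2) / (S₁ x - S₂ x))
            * (z₁ x * z₂ x)
        = 0 := by
  have dS₁ : ∀ x ∈ U, HasDerivAt S₁ (deriv S₁ x) x :=
    fun x hx => (hS₁ 0 (by norm_num) x hx).hasDerivAt
  have dS₂ : ∀ x ∈ U, HasDerivAt S₂ (deriv S₂ x) x :=
    fun x hx => (hS₂ 0 (by norm_num) x hx).hasDerivAt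
  have ddS₁ : ∀ x ∈ U, HasDerivAt (deriv S₁) (deriv^[2] S₁ x) x :=
    fun x hx => (hS₁ 1 (by norm_num) x hx).hasDerivAt
  have ddS₂ : ∀ x ∈ U, HasDerivAt (deriv S₂) (deriv^[2] S₂ x) x :=
    fun x hx => (hS₂ 1 (by norm_num) x hx).hasDerivAt
  have da : ∀ x ∈ U, HasDerivAt z₁ (deriv z₁ x) x :=
    fun x hx => (hz₁ 0 (by norm_num) x hx).hasDerivAt
  have db : ∀ x ∈ U, HasDerivAt z₂ (deriv z₂ x) x :=
    fun x hx => (hz₂ 0 (by norm_num) x hx).hasDerivAt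
  have dda : ∀ x ∈ U, HasDerivAt (deriv z₁) (S₁ x * z₁ x) x := fun x hx => by
    rw [← hode₁ x hx]; exact (hz₁ 1 (by norm_num) x hx).hasDerivAt
  have ddb : ∀ x ∈ U, HasDerivAt (deriv z₂) (S₂ x * z₂ x) x := fun x hx => by
    rw [← hode₂ x hx]; exact (hz₂ 1 (by norm_num) x hx).hasDerivAt
  have w1 : ∀ x ∈ U, deriv (fun t => z₁ t * z₂ t) x = deriv z₁ x * z₂ x + z₁ x * deriv z₂ x :=
    aux_step hU (fun _ _ => rfl) (fun x hx => (da x hx).mul (db x hx))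
  have w2 : ∀ x ∈ U, deriv^[2] (fun t => z₁ t * z₂ t) x
      = (S₁ x * z₁ x * z₂ x + deriv z₁ x * deriv z₂ x)
        + (deriv z₁ x * deriv z₂ x + z₁ x * (S₂ x * z₂ x)) :=
    aux_step hU w1 (fun x hx =>
      ((dda x hx).mul (db x hx)).add ((da x hx).mul (ddb x hx)))
  have w3 := aux_step hU w2 (fun x hx =>
      ((((dS₁ x hx).mul (da x hx)).mul (db x hx)).add ((dda x hx).mul (ddb x hx))).add
        (((dda x hx).mul (ddb x hx)).add ((da x hx).mul ((dS₂ x hx).mul (db x hx)))))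
  have w3' : ∀ x ∈ U, deriv^[3] (fun t => z₁ t * z₂ t) x
      = deriv S₁ x * (z₁ x * z₂ x) + deriv S₂ x * (z₁ x * z₂ x)
        + S₁ x * (deriv z₁ x * z₂ x) + S₂ x * (z₁ x * deriv z₂ x)
        + 3 * (S₁ x * (z₁ x * deriv z₂ x)) + 3 * (S₂ x * (deriv z₁ x * z₂ x)) := by
    intro x hx
    refine (w3 x hx).trans ?_
    simp only [Pi.mul_apply]
    ring
  have w4 := aux_step hU w3' (fun x hx => by
      have p := (da x hx).mul (db x hx)
      have q := (dda x hx).mul (db x hx)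
      have r := (da x hx).mul (ddb x hx)
      exact (((((((ddS₁ x hx).mul p).add ((ddS₂ x hx).mul p)).add
        ((dS₁ x hx).mul q)).add ((dS₂ x hx).mul r)).add
        (((dS₁ x hx).mul r).const_mul 3)).add (((dS₂ x hx).mul q).const_mul 3)))
  intro x hx
  have h4 : deriv^[4] (fun t => z₁ t * z₂ t) x = _ := w4 x hx
  have hD : S₁ x - S₂ x ≠ 0 := sub_ne_zero.mpr (hne x hx)
  rw [h4, w3' x hx, w2 x hx, w1 x hx]
  simp only [Pi.mul_apply]
  field_simp
  ring
end

section
/- Let A = (A₀, A₁, A₂, A₃) ∈ ℂ⁴ and let ε > 0. If f : (0, ε) → ℂ is four-times differentiable and satisfies Z(−A₀, A₁, A₂, A₃)f = 0 on (0, ε), then the function g(x) := x^{2A₀}·f(x) (complex power of the positive real x) satisfies Z(A₀, A₁, A₂, A₃)g = 0 on (0, ε). -/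
/-- The fourth-order Fuchsian operator `Z(A)` of the paper, acting on functions of
a real variable. -/
noncomputable def Zop (A₀ A₁ A₂ A₃ : ℂ) (f : ℝ → ℂ) (x : ℝ) : ℂ :=
  ((x : ℂ) ^ 3 * ((x : ℂ) - 1) ^ 2) * deriv^[4] f x
    + (-2 * (x : ℂ) ^ 2 * ((x : ℂ) - 1) * (2 * A₀ * (x : ℂ) - 2 * A₀ - 5 * (x : ℂ) + 3))
        * deriv^[3] f x
    + ((x : ℂ) * ((6 * A₀ ^ 2 - A₂ ^ 2 - A₃ ^ 2 - 24 * A₀ + 25) * (x : ℂ) ^ 2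
        + (-11 * A₀ ^ 2 - A₁ ^ 2 + A₂ ^ 2 + A₃ ^ 2 + 36 * A₀ - 59 / 2) * (x : ℂ)
        + (10 * A₀ - 9) * (2 * A₀ - 3) / 4)) * deriv^[2] f x
    + (-((2 * A₀ - 3) * (2 * A₀ ^ 2 - A₂ ^ 2 - A₃ ^ 2 - 6 * A₀ + 5)) * (x : ℂ) ^ 2
        + (A₀ - 1) * (6 * A₀ ^ 2 + 2 * A₁ ^ 2 - 2 * A₂ ^ 2 - 2 * A₃ ^ 2 - 16 * A₀ + 11) * (x : ℂ)
        - (2 * A₀ - 3) * (2 * A₀ - 1) ^ 2 / 4) * deriv f x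
    + ((A₀ - 1 + A₃) * (A₀ - 1 - A₃) * (A₀ - 1 + A₂) * (A₀ - 1 - A₂) * (x : ℂ)
        - (2 * A₀ - 1) ^ 2 * (A₀ ^ 2 + A₁ ^ 2 - A₂ ^ 2 - A₃ ^ 2 - 2 * A₀ + 1) / 4) * f x

theorem aux_deriv {F G G' : ℝ → ℂ} {ε : ℝ} (h : ∀ x ∈ Set.Ioo (0 : ℝ) ε, F x = G x)
    (hG : ∀ x ∈ Set.Ioo (0 : ℝ) ε, HasDerivAt G (G' x) x) :
    ∀ x ∈ Set.Ioo (0 : ℝ) ε, deriv F x = G' x := by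
  intro x hx
  have : F =ᶠ[nhds x] G := by
    filter_upwards [isOpen_Ioo.mem_nhds hx] with t ht using h t ht
  rw [this.deriv_eq]
  exact (hG x hx).deriv

theorem aux_pow (c : ℂ) {x : ℝ} (hx : 0 < x) :
    HasDerivAt (fun t : ℝ => (t : ℂ) ^ c) (c * (x : ℂ) ^ (c - 1)) x := by
  have h1 : HasDerivAt (fun z : ℂ => z ^ c) (c * (x : ℂ) ^ (c - 1)) (x : ℂ) := by
    have := (hasDerivAt_id (x : ℂ)).cpow_const (c := c) (Or.inl (by simpa using hx))
    simpa using this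
  exact h1.comp_ofReal

theorem aux_mul (c : ℂ) {x : ℝ} (hx : 0 < x) {u : ℝ → ℂ} {u' : ℂ} (hu : HasDerivAt u u' x) :
    HasDerivAt (fun t : ℝ => (t : ℂ) ^ c * u t)
      (c * (x : ℂ) ^ (c - 1) * u x + (x : ℂ) ^ c * u') x :=
  (aux_pow c hx).mul hu

/-- If `f` solves `Z(−A₀,A₁,A₂,A₃)f = 0` on `(0, ε)`, then `g(x) = x^{2A₀} f(x)`
solves `Z(A₀,A₁,A₂,A₃)g = 0` there. -/
theorem stmt_1 (A₀ A₁ A₂ A₃ : ℂ) (ε : ℝ) (hε : 0 < ε) (f : ℝ → ℂ)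
    (hf : IterDiffOn 4 f (Set.Ioo 0 ε))
    (hode : ∀ x ∈ Set.Ioo (0 : ℝ) ε, Zop (-A₀) A₁ A₂ A₃ f x = 0) :
    ∀ x ∈ Set.Ioo (0 : ℝ) ε,
      Zop A₀ A₁ A₂ A₃ (fun t : ℝ => (t : ℂ) ^ (2 * A₀) * f t) x = 0 := by
  set c : ℂ := 2 * A₀ with hc
  have hd : ∀ k < 4, ∀ x ∈ Set.Ioo (0 : ℝ) ε,
      HasDerivAt (deriv^[k] f) (deriv^[k+1] f x) x := by
    intro k hk x hx
    rw [Function.iterate_succ_apply']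
    exact (hf k hk x hx).hasDerivAt
  have d0 := hd 0 (by norm_num)
  have d1 := hd 1 (by norm_num)
  have d2 := hd 2 (by norm_num)
  have d3 := hd 3 (by norm_num)
  simp only [Function.iterate_zero, id, zero_add] at d0
  norm_num only at d1 d2 d3
  set g : ℝ → ℂ := fun t : ℝ => (t : ℂ) ^ c * f t with hg
  set f1 := deriv^[1] f with hf1
  set f2 := deriv^[2] f with hf2
  set f3 := deriv^[3] f with hf3
  set f4 := deriv^[4] f with hf4
  have e1 : ∀ x ∈ Set.Ioo (0 : ℝ) ε, deriv^[1] g x =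
      c * ((x : ℂ) ^ (c - 1) * f x) + (x : ℂ) ^ c * f1 x := by
    refine aux_deriv (F := g) (G := g) (fun _ _ => rfl) (fun x hx => ?_)
    have key := aux_mul c hx.1 (d0 x hx)
    exact key.congr_deriv (by ring)
  have e2 : ∀ x ∈ Set.Ioo (0 : ℝ) ε, deriv^[2] g x =
      c * (c - 1) * ((x : ℂ) ^ (c - 1 - 1) * f x) + 2 * c * ((x : ℂ) ^ (c - 1) * f1 x)
        + (x : ℂ) ^ c * f2 x := by
    refine aux_deriv e1 (fun x hx => ?_)
    have key := ((aux_mul (c - 1) hx.1 (d0 x hx)).const_mul c).add (aux_mul c hx.1 (d1 x hx))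
    exact key.congr_deriv (by ring)
  have e3 : ∀ x ∈ Set.Ioo (0 : ℝ) ε, deriv^[3] g x =
      c * (c - 1) * (c - 2) * ((x : ℂ) ^ (c - 1 - 1 - 1) * f x)
        + 3 * c * (c - 1) * ((x : ℂ) ^ (c - 1 - 1) * f1 x)
        + 3 * c * ((x : ℂ) ^ (c - 1) * f2 x)
        + (x : ℂ) ^ c * f3 x := by
    refine aux_deriv (F := deriv^[2] g) e2 (fun x hx => ?_)
    have key := (((aux_mul (c - 1 - 1) hx.1 (d0 x hx)).const_mul (c * (c - 1))).add
      ((aux_mul (c - 1) hx.1 (d1 x hx)).const_mul (2 * c))).add (aux_mul c hx.1 (d2 x hx))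
    exact key.congr_deriv (by ring)
  have e4 : ∀ x ∈ Set.Ioo (0 : ℝ) ε, deriv^[4] g x =
      c * (c - 1) * (c - 2) * (c - 3) * ((x : ℂ) ^ (c - 1 - 1 - 1 - 1) * f x)
        + 4 * c * (c - 1) * (c - 2) * ((x : ℂ) ^ (c - 1 - 1 - 1) * f1 x)
        + 6 * c * (c - 1) * ((x : ℂ) ^ (c - 1 - 1) * f2 x)
        + 4 * c * ((x : ℂ) ^ (c - 1) * f3 x)
        + (x : ℂ) ^ c * f4 x := by
    intro x hx
    rw [Function.iterate_succ_apply']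
    revert x
    refine aux_deriv (F := deriv^[3] g) e3 (fun x hx => ?_)
    have key := ((((aux_mul (c - 1 - 1 - 1) hx.1 (d0 x hx)).const_mul (c * (c - 1) * (c - 2))).add
      ((aux_mul (c - 1 - 1) hx.1 (d1 x hx)).const_mul (3 * c * (c - 1)))).add
      ((aux_mul (c - 1) hx.1 (d2 x hx)).const_mul (3 * c))).add (aux_mul c hx.1 (d3 x hx))
    exact key.congr_deriv (by ring)
  intro x hx
  have hx0 : (x : ℂ) ≠ 0 := by exact_mod_cast hx.1.ne'
  have hp : ∀ a : ℂ, (x : ℂ) ^ a = (x : ℂ) ^ (a - 1) * x := by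
    intro a
    rw [Complex.cpow_sub _ _ hx0, Complex.cpow_one, div_mul_cancel₀ _ hx0]
  have h := hode x hx
  have g0 : g x = (x : ℂ) ^ c * f x := rfl
  have g1 : deriv g x = c * ((x : ℂ) ^ (c - 1) * f x) + (x : ℂ) ^ c * f1 x := e1 x hx
  have hf1x : deriv f x = f1 x := rfl
  unfold Zop at h ⊢
  rw [e4 x hx, e3 x hx, e2 x hx, g1, g0]
  rw [hf1x, ← hf2, ← hf3, ← hf4] at h
  rw [hp c, hp (c - 1), hp (c - 1 - 1), hp (c - 1 - 1 - 1)]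
  generalize (x : ℂ) ^ (c - 1 - 1 - 1 - 1) = y
  rw [hc]
  linear_combination (y * (x : ℂ) ^ 4) * h
end

section
/- For every A = (A₀, A₁, A₂, A₃) ∈ ℂ⁴, the operator Z̃(A) is self-adjoint: for every four-times differentiable f : ℝ → ℂ and every x ∈ ℝ, (P₀f)''''(x) − (P₁f)'''(x) + (P₂f)''(x) − (P₃f)'(x) + P₄(x)f(x) = P₀(x)f''''(x) + P₁(x)f'''(x) + P₂(x)f''(x) + P₃(x)f'(x) + P₄(x)f(x), where P₀ = x²(x−1)², P₁ = m₁, P₂ = m₂, P₃ = m₃, P₄ = m₄ are the coefficients of Z̃(A). -/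
namespace Stmt3

/-- Leading coefficient `x²(x−1)²` of `Z̃(A)`. -/
noncomputable def P0 (x : ℝ) : ℂ := (x : ℂ) ^ 2 * ((x : ℂ) - 1) ^ 2

/-- Coefficient `m₁` of `Z̃(A)`. -/
noncomputable def P1 (x : ℝ) : ℂ := 4 * ((x : ℂ) - 1) * (x : ℂ) * (2 * (x : ℂ) - 1)

/-- Coefficient `m₂` of `Z̃(A)`. -/
noncomputable def P2 (A₀ A₁ A₂ A₃ : ℂ) (x : ℝ) : ℂ :=
  (1 / 4) * (4 * A₀ ^ 2 * (x : ℂ) - 4 * A₀ ^ 2 - 4 * A₁ ^ 2 * (x : ℂ)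
    - 4 * A₂ ^ 2 * (x : ℂ) ^ 2 + 4 * A₂ ^ 2 * (x : ℂ) - 4 * A₃ ^ 2 * (x : ℂ) ^ 2
    + 4 * A₃ ^ 2 * (x : ℂ) + 58 * (x : ℂ) ^ 2 - 58 * (x : ℂ) + 9)

/-- Coefficient `m₃` of `Z̃(A)`. -/
noncomputable def P3 (A₀ A₁ A₂ A₃ : ℂ) (x : ℝ) : ℂ :=
  (1 / 2) * (2 * A₀ ^ 2 - 2 * A₁ ^ 2 - 4 * A₂ ^ 2 * (x : ℂ) + 2 * A₂ ^ 2
    - 4 * A₃ ^ 2 * (x : ℂ) + 2 * A₃ ^ 2 + 10 * (x : ℂ) - 5)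

/-- Coefficient `m₄` of `Z̃(A)`. -/
noncomputable def P4 (A₂ A₃ : ℂ) : ℂ :=
  (A₂ - 1 / 2) * (A₂ + 1 / 2) * (A₃ - 1 / 2) * (A₃ + 1 / 2)

/-- Quartic polynomial. -/
noncomputable def Q (a b c d e : ℂ) (t : ℝ) : ℂ :=
  a * (t : ℂ) ^ 4 + b * (t : ℂ) ^ 3 + c * (t : ℂ) ^ 2 + d * (t : ℂ) + e

lemma hQ (a b c d e : ℂ) (t : ℝ) :
    HasDerivAt (Q a b c d e) (Q 0 (4 * a) (3 * b) (2 * c) d t) t := by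
  have h1 : HasDerivAt (fun t : ℝ => (t : ℂ)) 1 t := Complex.ofRealCLM.hasDerivAt
  have h := (((((h1.pow 4).const_mul a).add ((h1.pow 3).const_mul b)).add
    ((h1.pow 2).const_mul c)).add (h1.const_mul d)).add_const e
  have h' : HasDerivAt (Q a b c d e) _ t := h
  refine h'.congr_deriv ?_
  simp only [Q]
  push_cast
  ring

lemma D1 (a b c d e : ℂ) (g : ℝ → ℂ) (hg : Differentiable ℝ g) :
    deriv (fun t => Q a b c d e t * g t)
      = fun t => Q 0 (4 * a) (3 * b) (2 * c) d t * g t + Q a b c d e t * deriv g t := by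
  funext t
  exact ((hQ a b c d e t).mul (hg t).hasDerivAt).deriv

lemma dQ (a b c d e : ℂ) (g : ℝ → ℂ) (hg : Differentiable ℝ g) :
    Differentiable ℝ (fun t => Q a b c d e t * g t) :=
  fun t => ((hQ a b c d e t).mul (hg t).hasDerivAt).differentiableAt

lemma dadd (u v : ℝ → ℂ) (hu : Differentiable ℝ u) (hv : Differentiable ℝ v) :
    deriv (fun t => u t + v t) = fun t => deriv u t + deriv v t := by
  funext t
  exact ((hu t).hasDerivAt.add (hv t).hasDerivAt).deriv

lemma fadd (u v : ℝ → ℂ) (hu : Differentiable ℝ u) (hv : Differentiable ℝ v) :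
    Differentiable ℝ (fun t => u t + v t) := hu.add hv

lemma D2 (a b c d e : ℂ) (g : ℝ → ℂ) (h0 : Differentiable ℝ g)
    (h1 : Differentiable ℝ (deriv g)) :
    deriv (deriv (fun t => Q a b c d e t * g t))
      = fun t => (Q 0 0 (12 * a) (6 * b) (2 * c) t * g t
        + Q 0 (8 * a) (6 * b) (4 * c) (2 * d) t * deriv g t)
        + Q a b c d e t * deriv (deriv g) t := by
  rw [D1 _ _ _ _ _ _ h0, dadd _ _ (dQ _ _ _ _ _ _ h0) (dQ _ _ _ _ _ _ h1),
    D1 _ _ _ _ _ _ h0, D1 _ _ _ _ _ _ h1]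
  funext t
  simp only [Q]
  ring

/-- The operator `Z̃(A)` is self-adjoint. -/
theorem stmt_3 (A₀ A₁ A₂ A₃ : ℂ) (f : ℝ → ℂ)
    (hf : ∀ k < 4, Differentiable ℝ (deriv^[k] f)) :
    ∀ x : ℝ,
      deriv^[4] (fun t => P0 t * f t) x
        - deriv^[3] (fun t => P1 t * f t) x
        + deriv^[2] (fun t => P2 A₀ A₁ A₂ A₃ t * f t) x
        - deriv (fun t => P3 A₀ A₁ A₂ A₃ t * f t) x
        + P4 A₂ A₃ * f x
      = P0 x * deriv^[4] f x + P1 x * deriv^[3] f x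
        + P2 A₀ A₁ A₂ A₃ x * deriv^[2] f x + P3 A₀ A₁ A₂ A₃ x * deriv f x
        + P4 A₂ A₃ * f x := by
  have h0 : Differentiable ℝ f := hf 0 (by norm_num)
  have h1 : Differentiable ℝ (deriv f) := hf 1 (by norm_num)
  have h2 : Differentiable ℝ (deriv (deriv f)) := hf 2 (by norm_num)
  have h3 : Differentiable ℝ (deriv (deriv (deriv f))) := hf 3 (by norm_num)
  intro x
  have e0 : P0 = Q 1 (-2) 1 0 0 := by
    funext t; simp only [P0, Q]; ring
  have e1 : P1 = Q 0 8 (-12) 4 0 := by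
    funext t; simp only [P1, Q]; ring
  have e2 : P2 A₀ A₁ A₂ A₃ = Q 0 0 (-A₂ ^ 2 - A₃ ^ 2 + 29 / 2)
      (A₀ ^ 2 - A₁ ^ 2 + A₂ ^ 2 + A₃ ^ 2 - 29 / 2) (-A₀ ^ 2 + 9 / 4) := by
    funext t; simp only [P2, Q]; ring
  have e3 : P3 A₀ A₁ A₂ A₃ = Q 0 0 0 (-2 * A₂ ^ 2 - 2 * A₃ ^ 2 + 5)
      (A₀ ^ 2 - A₁ ^ 2 + A₂ ^ 2 + A₃ ^ 2 - 5 / 2) := by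
    funext t; simp only [P3, Q]; ring
  rw [e0, e1, e2, e3]
  simp only [Function.iterate_succ, Function.iterate_zero, Function.comp_apply, id_eq]
  simp only [D2 _ _ _ _ _ f h0 h1]
  rw [D1 _ _ _ _ _ f h0]
  have a0 := fun a b c d e => dQ a b c d e f h0
  have a1 := fun a b c d e => dQ a b c d e _ h1
  have a2 := fun a b c d e => dQ a b c d e _ h2
  have b0 := fun a b c d e => (D1 a b c d e f h0)
  have b1 := fun a b c d e => (D1 a b c d e _ h1)
  have b2 := fun a b c d e => (D1 a b c d e _ h2)
  have b3 := fun a b c d e => (D1 a b c d e _ h3)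
  have a3 := fun a b c d e => dQ a b c d e _ h3
  rw [dadd _ _ (fadd _ _ (a0 _ _ _ _ _) (a1 _ _ _ _ _)) (a2 _ _ _ _ _),
    dadd _ _ (a0 _ _ _ _ _) (a1 _ _ _ _ _)]
  rw [dadd _ _ (fadd _ _ (a0 _ _ _ _ _) (a1 _ _ _ _ _)) (a2 _ _ _ _ _),
    dadd _ _ (a0 _ _ _ _ _) (a1 _ _ _ _ _)]
  simp only [b0, b1, b2]
  rw [dadd _ _ (fadd _ _ (fadd _ _ (a0 _ _ _ _ _) (a1 _ _ _ _ _)) 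
      (fadd _ _ (a1 _ _ _ _ _) (a2 _ _ _ _ _)))
      (fadd _ _ (a2 _ _ _ _ _) (a3 _ _ _ _ _)),
    dadd _ _ (fadd _ _ (a0 _ _ _ _ _) (a1 _ _ _ _ _)) (fadd _ _ (a1 _ _ _ _ _) (a2 _ _ _ _ _)),
    dadd _ _ (a0 _ _ _ _ _) (a1 _ _ _ _ _), dadd _ _ (a1 _ _ _ _ _) (a2 _ _ _ _ _),
    dadd _ _ (a2 _ _ _ _ _) (a3 _ _ _ _ _)]
  simp only [b0, b1, b2, b3]
  simp only [Q]
  ring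

end Stmt3
end

section
/- For every A = (A₀, A₁, A₂, A₃) ∈ ℂ⁴ and every four-times differentiable f : ℝ → ℂ (equivalently, on any open interval), one has the operator identity Z̃(A)f = [(θ + 1/2 − A₂)∘(θ + 1/2 + A₂)∘(θ + 1/2 − A₃)∘(θ + 1/2 + A₃)]f − [(θ + 1)∘(2θ∘θ + 4θ + (A₁² − A₀² − A₂² − A₃² + 5/2))∘∂]f + [(θ + 3/2 + A₀)∘(θ + 3/2 − A₀)∘∂∘∂]f, where ∂g = g', θg = x·g', and (θ + c)g = x·g' + c·g, with ∘ denoting composition of operators. -/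
namespace Stmt4

/-- The operator `Z̃(A)` in coefficient form. -/
noncomputable def Zt (A₀ A₁ A₂ A₃ : ℂ) (f : ℝ → ℂ) (x : ℝ) : ℂ :=
  (x : ℂ) ^ 2 * ((x : ℂ) - 1) ^ 2 * deriv^[4] f x
    + (4 * ((x : ℂ) - 1) * (x : ℂ) * (2 * (x : ℂ) - 1)) * deriv^[3] f x
    + ((1 / 4) * (4 * A₀ ^ 2 * (x : ℂ) - 4 * A₀ ^ 2 - 4 * A₁ ^ 2 * (x : ℂ)
        - 4 * A₂ ^ 2 * (x : ℂ) ^ 2 + 4 * A₂ ^ 2 * (x : ℂ) - 4 * A₃ ^ 2 * (x : ℂ) ^ 2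
        + 4 * A₃ ^ 2 * (x : ℂ) + 58 * (x : ℂ) ^ 2 - 58 * (x : ℂ) + 9)) * deriv^[2] f x
    + ((1 / 2) * (2 * A₀ ^ 2 - 2 * A₁ ^ 2 - 4 * A₂ ^ 2 * (x : ℂ) + 2 * A₂ ^ 2
        - 4 * A₃ ^ 2 * (x : ℂ) + 2 * A₃ ^ 2 + 10 * (x : ℂ) - 5)) * deriv f x
    + ((A₂ - 1 / 2) * (A₂ + 1 / 2) * (A₃ - 1 / 2) * (A₃ + 1 / 2)) * f x

/-- The derivation `∂`. -/
noncomputable def Dop (f : ℝ → ℂ) : ℝ → ℂ := deriv f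

/-- The Euler operator `θ = x∂`. -/
noncomputable def Th (f : ℝ → ℂ) : ℝ → ℂ := fun x => (x : ℂ) * deriv f x

/-- The operator `θ + c`. -/
noncomputable def ThC (c : ℂ) (f : ℝ → ℂ) : ℝ → ℂ := fun x => (x : ℂ) * deriv f x + c * f x

theorem thC_eq (c : ℂ) {u v : ℝ → ℂ} (h : ∀ x, HasDerivAt u (v x) x) :
    ThC c u = fun x : ℝ => (x : ℂ) * v x + c * u x := by
  funext x; simp only [ThC, (h x).deriv]

theorem th_eq {u v : ℝ → ℂ} (h : ∀ x, HasDerivAt u (v x) x) :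
    Th u = fun x : ℝ => (x : ℂ) * v x := by
  funext x; simp only [Th, (h x).deriv]

theorem hd_step (c : ℂ) {u v w : ℝ → ℂ} (h : ∀ x, HasDerivAt u (v x) x)
    (h' : ∀ x, HasDerivAt v (w x) x) (x : ℝ) :
    HasDerivAt (fun x : ℝ => (x : ℂ) * v x + c * u x) ((x : ℂ) * w x + (1 + c) * v x) x := by
  have hx : HasDerivAt (fun y : ℝ => (y : ℂ)) 1 x := Complex.ofRealCLM.hasDerivAt
  have := (hx.fun_mul (h' x)).fun_add ((h x).const_mul c)
  refine this.congr_deriv ?_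
  ring

theorem hd_step0 {v w : ℝ → ℂ}
    (h' : ∀ x, HasDerivAt v (w x) x) (x : ℝ) :
    HasDerivAt (fun x : ℝ => (x : ℂ) * v x) ((x : ℂ) * w x + 1 * v x) x := by
  have hx : HasDerivAt (fun y : ℝ => (y : ℂ)) 1 x := Complex.ofRealCLM.hasDerivAt
  have := hx.fun_mul (h' x)
  refine this.congr_deriv ?_
  ring

/-- The `θ`-`∂` expression of `Z̃(A)`:
`Z̃(A) = (θ+1/2−A₂)(θ+1/2+A₂)(θ+1/2−A₃)(θ+1/2+A₃)
        − (θ+1)(2θ² + 4θ + A₁²−A₀²−A₂²−A₃²+5/2)∂ + (θ+3/2+A₀)(θ+3/2−A₀)∂²`. -/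
theorem stmt_4 (A₀ A₁ A₂ A₃ : ℂ) (f : ℝ → ℂ)
    (hf : ∀ k < 4, Differentiable ℝ (deriv^[k] f)) :
    ∀ x : ℝ,
      Zt A₀ A₁ A₂ A₃ f x
        = ThC (1 / 2 - A₂) (ThC (1 / 2 + A₂) (ThC (1 / 2 - A₃) (ThC (1 / 2 + A₃) f))) x
          - ThC 1 (fun t => 2 * Th (Th (Dop f)) t + 4 * Th (Dop f) t
              + (A₁ ^ 2 - A₀ ^ 2 - A₂ ^ 2 - A₃ ^ 2 + 5 / 2) * Dop f t) x
          + ThC (3 / 2 + A₀) (ThC (3 / 2 - A₀) (Dop (Dop f))) x := by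
  have h0 : ∀ x, HasDerivAt f (deriv f x) x := fun x => (hf 0 (by norm_num) x).hasDerivAt
  have h1 : ∀ x, HasDerivAt (deriv f) (deriv^[2] f x) x :=
    fun x => (hf 1 (by norm_num) x).hasDerivAt
  have h2 : ∀ x, HasDerivAt (deriv^[2] f) (deriv^[3] f x) x := fun x => by
    have := (hf 2 (by norm_num) x).hasDerivAt
    rwa [← Function.iterate_succ_apply' deriv 2 f] at this
  have h3 : ∀ x, HasDerivAt (deriv^[3] f) (deriv^[4] f x) x := fun x => by
    have := (hf 3 (by norm_num) x).hasDerivAt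
    rwa [← Function.iterate_succ_apply' deriv 3 f] at this
  have hD : Dop f = deriv f := rfl
  have hDD : Dop (deriv f) = deriv^[2] f := rfl
  unfold Zt
  rw [hD, hDD]
  generalize deriv^[4] f = f4 at *
  generalize deriv^[3] f = f3 at *
  generalize deriv^[2] f = f2 at *
  generalize deriv f = f1 at *
  intro x
  have a1 := fun c => hd_step c h0 h1
  have b1 := fun c => hd_step c h1 h2
  have c1 := fun c => hd_step c h2 h3
  have a2 := fun c d => hd_step d (a1 c) (b1 (1 + c))
  have b2 := fun c d => hd_step d (b1 c) (c1 (1 + c))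
  have a3 := fun c d e => hd_step e (a2 c d) (b2 (1 + c) (1 + d))
  rw [thC_eq _ h0, thC_eq _ (a1 _), thC_eq _ (a2 _ _), thC_eq _ (a3 _ _ _),
    thC_eq _ h2, thC_eq _ (c1 _), th_eq h1, th_eq (hd_step0 h2)]
  have t2 := fun x => (((hd_step0 (hd_step 1 h2 h3) x).const_mul 2).fun_add
    ((hd_step0 h2 x).const_mul 4)).fun_add
    ((h1 x).const_mul (A₁ ^ 2 - A₀ ^ 2 - A₂ ^ 2 - A₃ ^ 2 + 5 / 2))
  rw [thC_eq _ t2]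
  ring

end Stmt4
end

section
/- For every A = (A₀, A₁, A₂, A₃) ∈ ℂ⁴ and every four-times differentiable f : ℝ → ℂ, one has the operator identity L(A)f = [(θ + 1 − A₂)∘(θ + 1 + A₂)∘(θ + 1 − A₃)∘(θ + 1 + A₃)]f − [(θ + 3/2)∘(2θ∘θ + 6θ + (A₁² − A₀² − A₂² − A₃² + 5))∘∂]f + [(θ + 2 + A₀)∘(θ + 2 − A₀)∘∂∘∂]f, where ∂g = g', θg = x·g', and (θ + c)g = x·g' + c·g, with ∘ denoting composition of operators. -/
namespace Stmt5

/-- The operator `L(A)` in coefficient form. -/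
noncomputable def Lop (A₀ A₁ A₂ A₃ : ℂ) (f : ℝ → ℂ) (x : ℝ) : ℂ :=
  (x : ℂ) ^ 2 * ((x : ℂ) - 1) ^ 2 * deriv^[4] f x
    + (5 * ((x : ℂ) - 1) * (x : ℂ) * (2 * (x : ℂ) - 1)) * deriv^[3] f x
    + (A₀ ^ 2 * (x : ℂ) - A₀ ^ 2 - A₁ ^ 2 * (x : ℂ) - A₂ ^ 2 * (x : ℂ) ^ 2
        + A₂ ^ 2 * (x : ℂ) - A₃ ^ 2 * (x : ℂ) ^ 2 + A₃ ^ 2 * (x : ℂ)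
        + 25 * (x : ℂ) ^ 2 - 25 * (x : ℂ) + 4) * deriv^[2] f x
    + (-(3 / 2) * (-A₀ ^ 2 + A₁ ^ 2 + 2 * A₂ ^ 2 * (x : ℂ) - A₂ ^ 2
        + 2 * A₃ ^ 2 * (x : ℂ) - A₃ ^ 2 - 10 * (x : ℂ) + 5)) * deriv f x
    + ((A₂ - 1) * (A₂ + 1) * (A₃ - 1) * (A₃ + 1)) * f x

/-- The derivation `∂`. -/
noncomputable def Dop (f : ℝ → ℂ) : ℝ → ℂ := deriv f

/-- The Euler operator `θ = x∂`. -/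
noncomputable def Th (f : ℝ → ℂ) : ℝ → ℂ := fun x => (x : ℂ) * deriv f x

/-- The operator `θ + c`. -/
noncomputable def ThC (c : ℂ) (f : ℝ → ℂ) : ℝ → ℂ := fun x => (x : ℂ) * deriv f x + c * f x

theorem hx (x : ℝ) : HasDerivAt (fun t : ℝ => (t : ℂ)) 1 x := Complex.ofRealCLM.hasDerivAt

theorem thc2 (u v w : ℝ → ℂ) (h0 : ∀ x, HasDerivAt u (v x) x) (h1 : ∀ x, HasDerivAt v (w x) x)
    (a b e : ℂ) : ThC e (fun x => a * u x + b * ((x : ℂ) * v x)) = fun x =>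
      (e * a) * u x + (a + b + e * b) * ((x : ℂ) * v x) + b * ((x : ℂ) ^ 2 * w x) := by
  funext x
  have h := ((h0 x).const_mul a).add (((hx x).mul (h1 x)).const_mul b)
  have h' : deriv (fun x : ℝ => a * u x + b * ((x : ℂ) * v x)) x = _ := h.deriv
  simp only [ThC, h']
  ring

theorem thc3 (u v w z : ℝ → ℂ) (h0 : ∀ x, HasDerivAt u (v x) x) (h1 : ∀ x, HasDerivAt v (w x) x)
    (h2 : ∀ x, HasDerivAt w (z x) x)
    (a b c e : ℂ) :
    ThC e (fun x => a * u x + b * ((x : ℂ) * v x) + c * ((x : ℂ) ^ 2 * w x)) = fun x =>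
      (e * a) * u x + (a + b + e * b) * ((x : ℂ) * v x)
        + (b + 2 * c + e * c) * ((x : ℂ) ^ 2 * w x) + c * ((x : ℂ) ^ 3 * z x) := by
  funext x
  have h := (((h0 x).const_mul a).add (((hx x).mul (h1 x)).const_mul b)).add
    ((((hx x).pow 2).mul (h2 x)).const_mul c)
  have h' : deriv (fun x : ℝ => a * u x + b * ((x : ℂ) * v x) + c * ((x : ℂ) ^ 2 * w x)) x = _ :=
    h.deriv
  simp only [ThC, h', Pi.pow_apply]
  push_cast
  ring

theorem thc4 (u v w z y : ℝ → ℂ) (h0 : ∀ x, HasDerivAt u (v x) x)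
    (h1 : ∀ x, HasDerivAt v (w x) x)
    (h2 : ∀ x, HasDerivAt w (z x) x) (h3 : ∀ x, HasDerivAt z (y x) x)
    (a b c d e : ℂ) :
    ThC e (fun x => a * u x + b * ((x : ℂ) * v x) + c * ((x : ℂ) ^ 2 * w x)
      + d * ((x : ℂ) ^ 3 * z x)) = fun x =>
      (e * a) * u x + (a + b + e * b) * ((x : ℂ) * v x)
        + (b + 2 * c + e * c) * ((x : ℂ) ^ 2 * w x)
        + (c + 3 * d + e * d) * ((x : ℂ) ^ 3 * z x) + d * ((x : ℂ) ^ 4 * y x) := by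
  funext x
  have h := ((((h0 x).const_mul a).add (((hx x).mul (h1 x)).const_mul b)).add
    ((((hx x).pow 2).mul (h2 x)).const_mul c)).add ((((hx x).pow 3).mul (h3 x)).const_mul d)
  have h' : deriv (fun x : ℝ => a * u x + b * ((x : ℂ) * v x) + c * ((x : ℂ) ^ 2 * w x)
      + d * ((x : ℂ) ^ 3 * z x)) x = _ :=
    h.deriv
  simp only [ThC, h', Pi.pow_apply]
  push_cast
  ring

theorem thc1 (u v : ℝ → ℂ) (h0 : ∀ x, HasDerivAt u (v x) x) (e : ℂ) :
    ThC e u = fun x => e * u x + 1 * ((x : ℂ) * v x) := by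
  funext x
  simp only [ThC, (h0 x).deriv]
  ring

theorem th_eq (g : ℝ → ℂ) : Th g = ThC 0 g := by
  funext x
  simp [Th, ThC]

/-- The `θ`-`∂` expression of `L(A)`:
`L(A) = (θ+1−A₂)(θ+1+A₂)(θ+1−A₃)(θ+1+A₃)
        − (θ+3/2)(2θ² + 6θ + A₁²−A₀²−A₂²−A₃²+5)∂ + (θ+2+A₀)(θ+2−A₀)∂²`. -/
theorem stmt_5 (A₀ A₁ A₂ A₃ : ℂ) (f : ℝ → ℂ)
    (hf : ∀ k < 4, Differentiable ℝ (deriv^[k] f)) :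
    ∀ x : ℝ,
      Lop A₀ A₁ A₂ A₃ f x
        = ThC (1 - A₂) (ThC (1 + A₂) (ThC (1 - A₃) (ThC (1 + A₃) f))) x
          - ThC (3 / 2) (fun t => 2 * Th (Th (Dop f)) t + 6 * Th (Dop f) t
              + (A₁ ^ 2 - A₀ ^ 2 - A₂ ^ 2 - A₃ ^ 2 + 5) * Dop f t) x
          + ThC (2 + A₀) (ThC (2 - A₀) (Dop (Dop f))) x := by
  intro x
  have k0 : ∀ x, HasDerivAt f (deriv f x) x := fun x => (hf 0 (by norm_num) x).hasDerivAt
  have k1 : ∀ x, HasDerivAt (deriv f) (deriv (deriv f) x) x :=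
    fun x => (hf 1 (by norm_num) x).hasDerivAt
  have k2 : ∀ x, HasDerivAt (deriv (deriv f)) (deriv (deriv (deriv f)) x) x :=
    fun x => (hf 2 (by norm_num) x).hasDerivAt
  have k3 : ∀ x, HasDerivAt (deriv (deriv (deriv f))) (deriv (deriv (deriv (deriv f))) x) x :=
    fun x => (hf 3 (by norm_num) x).hasDerivAt
  have e2 : (fun t => 2 * Th (Th (Dop f)) t + 6 * Th (Dop f) t
      + (A₁ ^ 2 - A₀ ^ 2 - A₂ ^ 2 - A₃ ^ 2 + 5) * Dop f t) = fun t : ℝ =>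
      (A₁ ^ 2 - A₀ ^ 2 - A₂ ^ 2 - A₃ ^ 2 + 5) * deriv f t + 8 * ((t : ℂ) * deriv (deriv f) t)
        + 2 * ((t : ℂ) ^ 2 * deriv (deriv (deriv f)) t) := by
    funext t
    simp only [Dop, th_eq]
    rw [thc1 _ _ k1, thc2 _ _ _ k1 k2]
    ring
  rw [e2, thc3 _ _ _ _ k1 k2 k3]
  simp only [Dop]
  rw [thc1 _ _ k0, thc2 _ _ _ k0 k1, thc3 _ _ _ _ k0 k1 k2, thc4 _ _ _ _ _ k0 k1 k2 k3,
    thc1 _ _ k2, thc2 _ _ _ k2 k3]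
  simp only [Lop, Function.iterate_succ, Function.iterate_zero, Function.comp, id]
  ring

end Stmt5
end

section
/- Let A = (A₀, A₁, A₂, A₃) ∈ ℂ⁴ and set α = (A₁² − A₀² − A₂² − A₃² + 5)/2. For every natural number k and every real x ≠ 0, L(A) applied to the monomial x^k gives L(A)(x^k) = p_k·x^k + q_{k−1}·x^{k−1} + r_{k−2}·x^{k−2}, where p_k = ((k+1)² − A₂²)((k+1)² − A₃²), q_{k−1} = −k(2k+1)(k² + k − 2 + α), and r_{k−2} = k(k−1)(k² − A₀²). (For k = 0 and k = 1 the coefficients of the terms with negative exponent vanish, so the identity holds with those terms omitted.) -/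
namespace Stmt6

/-- The operator `L(A)` in coefficient form. -/
noncomputable def Lop (A₀ A₁ A₂ A₃ : ℂ) (f : ℝ → ℂ) (x : ℝ) : ℂ :=
  (x : ℂ) ^ 2 * ((x : ℂ) - 1) ^ 2 * deriv^[4] f x
    + (5 * ((x : ℂ) - 1) * (x : ℂ) * (2 * (x : ℂ) - 1)) * deriv^[3] f x
    + (A₀ ^ 2 * (x : ℂ) - A₀ ^ 2 - A₁ ^ 2 * (x : ℂ) - A₂ ^ 2 * (x : ℂ) ^ 2
        + A₂ ^ 2 * (x : ℂ) - A₃ ^ 2 * (x : ℂ) ^ 2 + A₃ ^ 2 * (x : ℂ)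
        + 25 * (x : ℂ) ^ 2 - 25 * (x : ℂ) + 4) * deriv^[2] f x
    + (-(3 / 2) * (-A₀ ^ 2 + A₁ ^ 2 + 2 * A₂ ^ 2 * (x : ℂ) - A₂ ^ 2
        + 2 * A₃ ^ 2 * (x : ℂ) - A₃ ^ 2 - 10 * (x : ℂ) + 5)) * deriv f x
    + ((A₂ - 1) * (A₂ + 1) * (A₃ - 1) * (A₃ + 1)) * f x

theorem deriv_aux (c : ℂ) (n : ℕ) :
    deriv (fun t : ℝ => c * (t : ℂ) ^ n) = fun t : ℝ => (c * n) * (t : ℂ) ^ (n - 1) := by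
  funext t
  have h := ((hasDerivAt_pow n (t : ℂ)).comp_ofReal).const_mul c
  rw [h.deriv]; ring

/-- `L(A)(x^k) = p_k x^k + q_{k−1} x^{k−1} + r_{k−2} x^{k−2}` with
`p_k = ((k+1)²−A₂²)((k+1)²−A₃²)`, `q_{k−1} = −k(2k+1)(k²+k−2+α)`,
`r_{k−2} = k(k−1)(k²−A₀²)`, where `α = (A₁²−A₀²−A₂²−A₃²+5)/2`. -/
theorem stmt_6 (A₀ A₁ A₂ A₃ : ℂ) (k : ℕ) (x : ℝ) (hx : x ≠ 0) :
    Lop A₀ A₁ A₂ A₃ (fun t : ℝ => (t : ℂ) ^ k) x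
      = (((k : ℂ) + 1) ^ 2 - A₂ ^ 2) * (((k : ℂ) + 1) ^ 2 - A₃ ^ 2) * (x : ℂ) ^ (k : ℤ)
        + (-(k : ℂ) * (2 * (k : ℂ) + 1)
            * ((k : ℂ) ^ 2 + (k : ℂ) - 2 + (A₁ ^ 2 - A₀ ^ 2 - A₂ ^ 2 - A₃ ^ 2 + 5) / 2))
            * (x : ℂ) ^ ((k : ℤ) - 1)
        + ((k : ℂ) * ((k : ℂ) - 1) * ((k : ℂ) ^ 2 - A₀ ^ 2)) * (x : ℂ) ^ ((k : ℤ) - 2) := by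
  have hx' : (x : ℂ) ≠ 0 := by exact_mod_cast hx
  have e0 : (fun t : ℝ => (t : ℂ) ^ k) = fun t : ℝ => (1 : ℂ) * (t : ℂ) ^ k := by
    funext t; ring
  rw [e0]
  simp only [Lop, Function.iterate_succ, Function.iterate_zero, Function.comp_apply, id,
    deriv_aux]
  rw [zpow_sub₀ hx', zpow_sub₀ hx', zpow_natCast]
  rcases k with _ | _ | _ | _ | n
  · simp; ring
  · simp; field_simp; ring
  · simp; field_simp; ring
  · simp; field_simp; ring
  · have h1 : n + 4 - 1 = n + 3 := rfl
    have h2 : n + 3 - 1 = n + 2 := rfl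
    have h3 : n + 2 - 1 = n + 1 := rfl
    have h4 : n + 1 - 1 = n := rfl
    have z : (x : ℂ) ^ (2 : ℤ) = (x : ℂ) ^ 2 := by norm_cast
    simp only [add_assoc, Nat.reduceAdd, h1, h2, h3, h4, z, zpow_one]
    push_cast
    field_simp
    ring

end Stmt6
end

section
/- Let A = (A₀, A₁, A₂, A₃) ∈ ℂ⁴ and suppose A₂ = m + 1 or A₂ = −(m + 1) for some nonnegative integer m (i.e., A₂ is a nonzero integer with |A₂| = m + 1). Then there exists a nonzero polynomial u ∈ ℂ[x] of degree at most m such that L(A)u = 0 identically (as a function of x ∈ ℝ). -/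
namespace Stmt7

/-- The operator `L(A)` in coefficient form. -/
noncomputable def Lop (A₀ A₁ A₂ A₃ : ℂ) (f : ℝ → ℂ) (x : ℝ) : ℂ :=
  (x : ℂ) ^ 2 * ((x : ℂ) - 1) ^ 2 * deriv^[4] f x
    + (5 * ((x : ℂ) - 1) * (x : ℂ) * (2 * (x : ℂ) - 1)) * deriv^[3] f x
    + (A₀ ^ 2 * (x : ℂ) - A₀ ^ 2 - A₁ ^ 2 * (x : ℂ) - A₂ ^ 2 * (x : ℂ) ^ 2
        + A₂ ^ 2 * (x : ℂ) - A₃ ^ 2 * (x : ℂ) ^ 2 + A₃ ^ 2 * (x : ℂ)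
        + 25 * (x : ℂ) ^ 2 - 25 * (x : ℂ) + 4) * deriv^[2] f x
    + (-(3 / 2) * (-A₀ ^ 2 + A₁ ^ 2 + 2 * A₂ ^ 2 * (x : ℂ) - A₂ ^ 2
        + 2 * A₃ ^ 2 * (x : ℂ) - A₃ ^ 2 - 10 * (x : ℂ) + 5)) * deriv f x
    + ((A₂ - 1) * (A₂ + 1) * (A₃ - 1) * (A₃ + 1)) * f x

open Polynomial in
theorem deriv_ev (u : ℂ[X]) : deriv (fun t : ℝ => u.eval (t : ℂ)) = fun t : ℝ => (derivative u).eval (t : ℂ) := by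
  funext t
  exact ((u.hasDerivAt (t : ℂ)).comp_ofReal).deriv

open Polynomial in
/-- The operator on polynomials. -/
noncomputable def T (a₀ a₁ a b : ℂ) : ℂ[X] →ₗ[ℂ] ℂ[X] where
  toFun p :=
    (X ^ 4 * derivative (derivative (derivative (derivative p)))
      - C 2 * (X ^ 3 * derivative (derivative (derivative (derivative p))))
      + X ^ 2 * derivative (derivative (derivative (derivative p))))
    + (C 10 * (X ^ 3 * derivative (derivative (derivative p)))
      - C 15 * (X ^ 2 * derivative (derivative (derivative p)))
      + C 5 * (X ^ 1 * derivative (derivative (derivative p))))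
    + (C (25 - a - b) * (X ^ 2 * derivative (derivative p))
      + C (a₀ - a₁ + a + b - 25) * (X ^ 1 * derivative (derivative p))
      + C (4 - a₀) * derivative (derivative p))
    + (C (-3 * (a + b - 5)) * (X ^ 1 * derivative p)
      + C (-(3 / 2) * (- a₀ + a₁ - a - b + 5)) * derivative p)
    + C ((a - 1) * (b - 1)) * p
  map_add' p q := by simp only [derivative_add]; ring
  map_smul' c p := by simp only [smul_eq_C_mul, derivative_C_mul, RingHom.id_apply]; ring

open Polynomial in
theorem T_coeff (a₀ a₁ a b : ℂ) (p : ℂ[X]) (n : ℕ) (h1 : p.coeff (n + 1) = 0)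
    (h2 : p.coeff (n + 2) = 0) :
    (T a₀ a₁ a b p).coeff n = (((n : ℂ) + 1) ^ 2 - a) * (((n : ℂ) + 1) ^ 2 - b) * p.coeff n := by
  simp only [T, LinearMap.coe_mk, AddHom.coe_mk, coeff_add, coeff_sub, coeff_C_mul,
    coeff_X_pow_mul', coeff_derivative]
  rcases n with _ | _ | _ | _ | n <;>
  simp_all [add_assoc] <;> first | ring1 | (left; ring1)

open Polynomial in
/-- If `A₂ = ±(m+1)` is a nonzero integer, then `L(A)u = 0` has a nonzero polynomial
solution of degree at most `m`. -/
theorem stmt_7 (A₀ A₁ A₂ A₃ : ℂ) (m : ℕ)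
    (hA₂ : A₂ = (m : ℂ) + 1 ∨ A₂ = -((m : ℂ) + 1)) :
    ∃ u : Polynomial ℂ, u ≠ 0 ∧ u.natDegree ≤ m ∧
      ∀ x : ℝ, Lop A₀ A₁ A₂ A₃ (fun t : ℝ => u.eval (t : ℂ)) x = 0 := by
  have hsq : A₂ ^ 2 = ((m : ℂ) + 1) ^ 2 := by
    rcases hA₂ with h | h <;> rw [h] <;> ring
  let F : degreeLT ℂ (m + 1) →ₗ[ℂ] (Fin m → ℂ) :=
    (LinearMap.pi fun i : Fin m => lcoeff ℂ (i : ℕ)) ∘ₗ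
      (T (A₀ ^ 2) (A₁ ^ 2) (A₂ ^ 2) (A₃ ^ 2)) ∘ₗ (degreeLT ℂ (m + 1)).subtype
  have hfd : Module.finrank ℂ (degreeLT ℂ (m + 1)) = m + 1 := by
    rw [(degreeLTEquiv ℂ (m + 1)).finrank_eq]; simp
  have : FiniteDimensional ℂ (degreeLT ℂ (m + 1)) :=
    Module.Finite.equiv (degreeLTEquiv ℂ (m + 1)).symm
  have hker : LinearMap.ker F ≠ ⊥ := by
    apply LinearMap.ker_ne_bot_of_finrank_lt
    rw [hfd]; simp
  obtain ⟨⟨u, hu⟩, hF, hne⟩ := (Submodule.ne_bot_iff _).1 hker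
  have hdeg : ∀ k, m < k → u.coeff k = 0 := fun k hk =>
    coeff_eq_zero_of_degree_lt ((mem_degreeLT.1 hu).trans_le (by exact_mod_cast hk))
  have hT : T (A₀ ^ 2) (A₁ ^ 2) (A₂ ^ 2) (A₃ ^ 2) u = 0 := by
    ext n
    rw [coeff_zero]
    by_cases hn : n < m
    · exact congrFun (LinearMap.mem_ker.1 hF) ⟨n, hn⟩
    · rw [T_coeff _ _ _ _ _ _ (hdeg _ (by omega)) (hdeg _ (by omega))]
      rcases (not_lt.1 hn).eq_or_lt with h | h
      · rw [hsq, ← h]; ring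
      · rw [hdeg n h]; ring
  refine ⟨u, fun h => hne (Subtype.ext h), natDegree_le_iff_coeff_eq_zero.2 hdeg, fun x => ?_⟩
  have hx := congrArg (Polynomial.eval (x : ℂ)) hT
  simp only [T, LinearMap.coe_mk, AddHom.coe_mk, eval_add, eval_sub, eval_mul, eval_C, eval_pow,
    eval_X, eval_zero] at hx
  simp only [Lop, Function.iterate_succ, Function.iterate_zero, Function.comp_apply, id,
    deriv_ev]
  linear_combination hx

end Stmt7
end

section
/- Let A = (A₀, A₁, A₂, A₃) ∈ ℂ⁴ and let f : (1, ∞) → ℂ be three-times differentiable. Define g(x) := x^{−A₀−A₂}·(x−1)^{−A₁−A₂}·f(x), using complex powers of the positive reals x and x−1. Then for every x > 1, x^{A₀+A₂}·(x−1)^{A₁+A₂}·(Q(A)g)(x) = (R(A)f)(x); that is, R(A) = Ad(x^{A₀+A₂}(x−1)^{A₁+A₂})Q(A). -/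
namespace Stmt8

/-- `f` is `n`-times differentiable on `U`. -/
def IterDiffOn (n : ℕ) (f : ℝ → ℂ) (U : Set ℝ) : Prop :=
  ∀ k < n, ∀ x ∈ U, DifferentiableAt ℝ (deriv^[k] f) x

/-- The third-order operator `Q(A)`. -/
noncomputable def Qop (A₀ A₁ A₂ A₃ : ℂ) (g : ℝ → ℂ) (x : ℝ) : ℂ :=
  (x : ℂ) ^ 2 * ((x : ℂ) - 1) ^ 2 * deriv^[3] g x
    + ((2 * A₂ + 3) * ((x : ℂ) - 1) * (x : ℂ) * (2 * (x : ℂ) - 1)) * deriv^[2] g x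
    + (A₀ ^ 2 * (x : ℂ) - A₀ ^ 2 - A₁ ^ 2 * (x : ℂ) + 5 * A₂ ^ 2 * (x : ℂ) ^ 2
        - 5 * A₂ ^ 2 * (x : ℂ) + A₂ ^ 2 + 12 * A₂ * (x : ℂ) ^ 2 - 12 * A₂ * (x : ℂ)
        + 2 * A₂ - A₃ ^ 2 * (x : ℂ) ^ 2 + A₃ ^ 2 * (x : ℂ) + 7 * (x : ℂ) ^ 2
        - 7 * (x : ℂ) + 1) * deriv g x
    + ((1 / 2) * (2 * A₂ + 1) * (A₀ ^ 2 - A₁ ^ 2 + 2 * A₂ ^ 2 * (x : ℂ) - A₂ ^ 2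
        + 4 * A₂ * (x : ℂ) - 2 * A₂ - 2 * A₃ ^ 2 * (x : ℂ) + A₃ ^ 2
        + 2 * (x : ℂ) - 1)) * g x

/-- The third-order operator `R(A)`. -/
noncomputable def Rop (A₀ A₁ A₂ A₃ : ℂ) (f : ℝ → ℂ) (x : ℝ) : ℂ :=
  (x : ℂ) ^ 2 * ((x : ℂ) - 1) ^ 2 * deriv^[3] f x
    + ((1 - (x : ℂ)) * (x : ℂ) * (3 * A₀ * (x : ℂ) - 3 * A₀ + 3 * A₁ * (x : ℂ)
        + 2 * A₂ * (x : ℂ) - A₂ - 6 * (x : ℂ) + 3)) * deriv^[2] f x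
    + (3 * A₀ ^ 2 * (x : ℂ) ^ 2 - 5 * A₀ ^ 2 * (x : ℂ) + 2 * A₀ ^ 2
        + 6 * A₀ * A₁ * (x : ℂ) ^ 2 - 6 * A₀ * A₁ * (x : ℂ)
        + 4 * A₀ * A₂ * (x : ℂ) ^ 2 - 6 * A₀ * A₂ * (x : ℂ) + 2 * A₀ * A₂
        - 9 * A₀ * (x : ℂ) ^ 2 + 12 * A₀ * (x : ℂ) - 3 * A₀
        + 3 * A₁ ^ 2 * (x : ℂ) ^ 2 - A₁ ^ 2 * (x : ℂ)
        + 4 * A₁ * A₂ * (x : ℂ) ^ 2 - 2 * A₁ * A₂ * (x : ℂ)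
        - 9 * A₁ * (x : ℂ) ^ 2 + 6 * A₁ * (x : ℂ)
        + A₂ ^ 2 * (x : ℂ) ^ 2 - A₂ ^ 2 * (x : ℂ) - 6 * A₂ * (x : ℂ) ^ 2
        + 6 * A₂ * (x : ℂ) - A₂ - A₃ ^ 2 * (x : ℂ) ^ 2 + A₃ ^ 2 * (x : ℂ)
        + 7 * (x : ℂ) ^ 2 - 7 * (x : ℂ) + 1) * deriv f x
    + (-(1 / 2) * (2 * A₀ * (x : ℂ) - 2 * A₀ + 2 * A₁ * (x : ℂ) - 2 * (x : ℂ) + 1)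
        * (A₀ + A₁ + A₂ - A₃ - 1) * (A₀ + A₁ + A₂ + A₃ - 1)) * f x

lemma hasDerivAt_inv_sub (c : ℂ) (x : ℝ) (hx : (x : ℂ) - c ≠ 0) :
    HasDerivAt (fun t : ℝ => ((t : ℂ) - c)⁻¹) (-(((x : ℂ) - c)⁻¹) ^ 2) x := by
  have h1 : HasDerivAt (fun t : ℝ => (t : ℂ) - c) 1 x :=
    (Complex.ofRealCLM.hasDerivAt (x := x)).sub_const c
  have h2 := h1.inv hx
  refine h2.congr_deriv ?_
  field_simp

lemma hasDerivAt_u (c d : ℂ) (x : ℝ) (hx : 1 < x) :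
    HasDerivAt (fun t : ℝ => (t : ℂ) ^ c * ((t : ℂ) - 1) ^ d)
      ((x : ℂ) ^ c * ((x : ℂ) - 1) ^ d * (c * ((x : ℂ) - 0)⁻¹ + d * ((x : ℂ) - 1)⁻¹)) x := by
  have hs0 : (x : ℂ) ∈ Complex.slitPlane := Or.inl (by simpa using by linarith)
  have hs1 : (x : ℂ) - 1 ∈ Complex.slitPlane := Or.inl (by simpa using hx)
  have n0 : (x : ℂ) ≠ 0 := Complex.slitPlane_ne_zero hs0
  have n1 : (x : ℂ) - 1 ≠ 0 := Complex.slitPlane_ne_zero hs1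
  have h0 : HasDerivAt (fun z : ℂ => z ^ c) (c * (x : ℂ) ^ (c - 1) * 1) (x : ℂ) :=
    (hasDerivAt_id (x : ℂ)).cpow_const hs0
  have h1 : HasDerivAt (fun z : ℂ => (z - 1) ^ d) (d * ((x : ℂ) - 1) ^ (d - 1) * 1) (x : ℂ) :=
    ((hasDerivAt_id (x : ℂ)).sub_const 1).cpow_const hs1
  have h2 := (h0.mul h1).comp_ofReal
  refine h2.congr_deriv ?_
  rw [Complex.cpow_sub _ _ n0, Complex.cpow_sub _ _ n1, Complex.cpow_one, Complex.cpow_one,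
    sub_zero]
  field_simp

lemma deriv_step (c d : ℂ) (h F F' : ℝ → ℂ)
    (hh : ∀ x : ℝ, 1 < x → h x = (x : ℂ) ^ c * ((x : ℂ) - 1) ^ d * F x)
    (hF : ∀ x : ℝ, 1 < x → HasDerivAt F (F' x) x) :
    ∀ x : ℝ, 1 < x → deriv h x = (x : ℂ) ^ c * ((x : ℂ) - 1) ^ d *
      (F' x + (c * ((x : ℂ) - 0)⁻¹ + d * ((x : ℂ) - 1)⁻¹) * F x) := by
  intro x hx
  have e : h =ᶠ[nhds x] fun t : ℝ => (t : ℂ) ^ c * ((t : ℂ) - 1) ^ d * F t := by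
    filter_upwards [Ioi_mem_nhds hx] with t ht using hh t ht
  rw [e.deriv_eq]
  refine (((hasDerivAt_u c d x hx).mul (hF x hx)).deriv).trans ?_
  ring

/-- `R(A) = Ad(x^{A₀+A₂}(x−1)^{A₁+A₂}) Q(A)` on `(1, ∞)`. -/
theorem stmt_8 (A₀ A₁ A₂ A₃ : ℂ) (f : ℝ → ℂ)
    (hf : IterDiffOn 3 f (Set.Ioi 1)) :
    ∀ x ∈ Set.Ioi (1 : ℝ),
      (x : ℂ) ^ (A₀ + A₂) * ((x : ℂ) - 1) ^ (A₁ + A₂) *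
        Qop A₀ A₁ A₂ A₃
          (fun t : ℝ => (t : ℂ) ^ (-A₀ - A₂) * ((t : ℂ) - 1) ^ (-A₁ - A₂) * f t) x
        = Rop A₀ A₁ A₂ A₃ f x := by
  have hd : ∀ k < 3, ∀ x : ℝ, 1 < x → HasDerivAt (deriv^[k] f) (deriv^[k+1] f x) x := by
    intro k hk x hx
    rw [Function.iterate_succ_apply']
    exact (hf k hk x hx).hasDerivAt
  have hf0 : ∀ x : ℝ, 1 < x → HasDerivAt f (deriv f x) x := hd 0 (by norm_num)
  have hf1 : ∀ x : ℝ, 1 < x → HasDerivAt (deriv f) (deriv^[2] f x) x := hd 1 (by norm_num)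
  have hf2 : ∀ x : ℝ, 1 < x → HasDerivAt (deriv^[2] f) (deriv^[3] f x) x := hd 2 (by norm_num)
  generalize hc : -A₀ - A₂ = c
  generalize hdd : -A₁ - A₂ = d
  set g : ℝ → ℂ := fun t : ℝ => (t : ℂ) ^ c * ((t : ℂ) - 1) ^ d * f t with hg
  have n0 : ∀ x : ℝ, 1 < x → (x : ℂ) - 0 ≠ 0 := by
    intro x hx
    rw [sub_zero]
    exact_mod_cast (by linarith : x ≠ 0)
  have n1 : ∀ x : ℝ, 1 < x → (x : ℂ) - 1 ≠ 0 := by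
    intro x hx
    exact_mod_cast (by linarith : x - 1 ≠ 0)
  let p : ℝ → ℂ := fun x => c * ((x : ℂ) - 0)⁻¹ + d * ((x : ℂ) - 1)⁻¹
  let p1 : ℝ → ℂ := fun x => -(c * (((x : ℂ) - 0)⁻¹) ^ 2 + d * (((x : ℂ) - 1)⁻¹) ^ 2)
  let p2 : ℝ → ℂ := fun x => 2 * (c * (((x : ℂ) - 0)⁻¹) ^ 3 + d * (((x : ℂ) - 1)⁻¹) ^ 3)
  have hp : ∀ x : ℝ, 1 < x → HasDerivAt p (p1 x) x := by
    intro x hx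
    refine (((hasDerivAt_inv_sub 0 x (n0 x hx)).const_mul c).add
      ((hasDerivAt_inv_sub 1 x (n1 x hx)).const_mul d)).congr_deriv ?_
    simp only [p1]; ring
  have hp1 : ∀ x : ℝ, 1 < x → HasDerivAt p1 (p2 x) x := by
    intro x hx
    refine ((((hasDerivAt_inv_sub 0 x (n0 x hx)).pow 2).const_mul c).add
      (((hasDerivAt_inv_sub 1 x (n1 x hx)).pow 2).const_mul d)).neg.congr_deriv ?_
    simp only [p2]; push_cast; ring
  have s1 := deriv_step c d g f (deriv f) (fun x _ => rfl) hf0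
  have s2 := deriv_step c d (deriv g) (fun x => deriv f x + p x * f x)
    (fun x => deriv^[2] f x + (p1 x * f x + p x * deriv f x)) s1
    (fun x hx => (hf1 x hx).add ((hp x hx).mul (hf0 x hx)))
  have s3 := deriv_step c d (deriv (deriv g))
    (fun x => (deriv^[2] f x + (p1 x * f x + p x * deriv f x)) + p x * (deriv f x + p x * f x))
    (fun x => (deriv^[3] f x + ((p2 x * f x + p1 x * deriv f x)
        + (p1 x * deriv f x + p x * deriv^[2] f x)))
      + (p1 x * (deriv f x + p x * f x)
        + p x * (deriv^[2] f x + (p1 x * f x + p x * deriv f x)))) s2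
    (fun x hx => ((hf2 x hx).add (((hp1 x hx).mul (hf0 x hx)).add ((hp x hx).mul (hf1 x hx)))).add
      ((hp x hx).mul ((hf1 x hx).add ((hp x hx).mul (hf0 x hx)))))
  intro x hx
  have hx' : 1 < x := hx
  have t1 := s1 x hx'
  have t2 : deriv^[2] g x = _ := s2 x hx'
  have t3 : deriv^[3] g x = _ := s3 x hx'
  have m0 := n0 x hx'
  have m1 := n1 x hx'
  rw [sub_zero] at m0
  unfold Qop Rop
  rw [t1, t2, t3]
  have hgx : g x = (x : ℂ) ^ c * ((x : ℂ) - 1) ^ d * f x := rfl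
  rw [hgx]
  have e1 : (x : ℂ) ^ (A₀ + A₂) * (x : ℂ) ^ c = 1 := by
    rw [← Complex.cpow_add _ _ m0, ← hc]
    ring_nf
    exact Complex.cpow_zero _
  have e2 : ((x : ℂ) - 1) ^ (A₁ + A₂) * ((x : ℂ) - 1) ^ d = 1 := by
    rw [← Complex.cpow_add _ _ m1, ← hdd, show A₁ + A₂ + (-A₁ - A₂) = 0 by ring]
    exact Complex.cpow_zero _
  have e3 : (x : ℂ) ^ (A₀ + A₂) * ((x : ℂ) - 1) ^ (A₁ + A₂) * ((x : ℂ) ^ c * ((x : ℂ) - 1) ^ d)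
      = 1 := by
    rw [mul_mul_mul_comm, e1, e2, one_mul]
  simp only [p, p1, p2]
  rw [sub_zero]
  generalize (x : ℂ) ^ (A₀ + A₂) * ((x : ℂ) - 1) ^ (A₁ + A₂) = U at *
  generalize (x : ℂ) ^ c * ((x : ℂ) - 1) ^ d = V at *
  generalize deriv^[3] f x = f3
  generalize deriv^[2] f x = f2
  generalize deriv f x = f1
  generalize f x = f0
  generalize (x : ℂ) = z at *
  have hi : z * z⁻¹ = 1 := mul_inv_cancel₀ m0
  have hj : (z - 1) * (z - 1)⁻¹ = 1 := mul_inv_cancel₀ m1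
  clear * - e3 m0 m1 hc hdd
  have key : ∀ a b c d : ℂ, ∀ X Y Z W : ℂ,
      U * (a * (V * X) + b * (V * Y) + c * (V * Z) + d * (V * W))
        = a * X + b * Y + c * Z + d * W := by
    intro a b c d X Y Z W
    linear_combination (a * X + b * Y + c * Z + d * W) * e3
  rw [key]
  subst hc hdd
  field_simp
  ring

end Stmt8
end

section
/- Let A = (A₀, A₁, A₂, A₃) ∈ ℂ⁴ and suppose the power series f(x) = Σ_{n≥0} Cₙxⁿ has positive radius of convergence and satisfies Z(A)f = 0 on a neighborhood of 0 in ℂ. Then, with the convention C₋₁ := 0, for every integer n ≥ 1: n(n−2A₀)(2n−2A₀−1)(2n−2A₀+1)·Cₙ = (2(n−A₀)−1)²·(2n² − 4A₀n + A₀² + A₁² − A₂² − A₃² + 1 − 2(n−A₀))·C_{n−1} − 4(n−A₀−A₂−1)(n−A₀+A₂−1)(n−A₀−A₃−1)(n−A₀+A₃−1)·C_{n−2}. (This is the recurrence relation Rc₀(A).) -/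
namespace Stmt10

/-- The operator `Z(A)` acting on functions of a complex variable. -/
noncomputable def ZopC (A₀ A₁ A₂ A₃ : ℂ) (f : ℂ → ℂ) (x : ℂ) : ℂ :=
  (x ^ 3 * (x - 1) ^ 2) * deriv^[4] f x
    + (-2 * x ^ 2 * (x - 1) * (2 * A₀ * x - 2 * A₀ - 5 * x + 3)) * deriv^[3] f x
    + (x * ((6 * A₀ ^ 2 - A₂ ^ 2 - A₃ ^ 2 - 24 * A₀ + 25) * x ^ 2
        + (-11 * A₀ ^ 2 - A₁ ^ 2 + A₂ ^ 2 + A₃ ^ 2 + 36 * A₀ - 59 / 2) * x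
        + (10 * A₀ - 9) * (2 * A₀ - 3) / 4)) * deriv^[2] f x
    + (-((2 * A₀ - 3) * (2 * A₀ ^ 2 - A₂ ^ 2 - A₃ ^ 2 - 6 * A₀ + 5)) * x ^ 2
        + (A₀ - 1) * (6 * A₀ ^ 2 + 2 * A₁ ^ 2 - 2 * A₂ ^ 2 - 2 * A₃ ^ 2 - 16 * A₀ + 11) * x
        - (2 * A₀ - 3) * (2 * A₀ - 1) ^ 2 / 4) * deriv f x
    + ((A₀ - 1 + A₃) * (A₀ - 1 - A₃) * (A₀ - 1 + A₂) * (A₀ - 1 - A₂) * x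
        - (2 * A₀ - 1) ^ 2 * (A₀ ^ 2 + A₁ ^ 2 - A₂ ^ 2 - A₃ ^ 2 - 2 * A₀ + 1) / 4) * f x

open Filter Topology in
theorem has_iff (g : ℂ → ℂ) (c : ℕ → ℂ) :
    (∀ᶠ x in 𝓝 (0:ℂ), HasSum (fun n => c n * x ^ n) (g x)) ↔
      AnalyticAt ℂ g 0 ∧ ∀ n, c n = iteratedDeriv n g 0 / (n.factorial : ℂ) := by
  have key : ∀ (c : ℕ → ℂ), (∀ᶠ x in 𝓝 (0:ℂ), HasSum (fun n => c n * x ^ n) (g x)) ↔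
      HasFPowerSeriesAt g (FormalMultilinearSeries.ofScalars ℂ c) 0 := by
    intro c
    rw [hasFPowerSeriesAt_iff]
    simp only [zero_add, FormalMultilinearSeries.coeff_ofScalars, smul_eq_mul, mul_comm]
  rw [key]
  constructor
  · intro h
    refine ⟨h.analyticAt, fun n => ?_⟩
    have h2 := h.eq_formalMultilinearSeries h.analyticAt.hasFPowerSeriesAt
    have := congrArg (fun p => FormalMultilinearSeries.coeff p n) h2
    simpa [FormalMultilinearSeries.coeff_ofScalars] using this
  · rintro ⟨h, hc⟩
    have : c = fun n => iteratedDeriv n g 0 / (n.factorial : ℂ) := funext hc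
    rw [this]
    exact h.hasFPowerSeriesAt

open Filter Topology in
theorem has_deriv {g : ℂ → ℂ} {c : ℕ → ℂ}
    (h : ∀ᶠ x in 𝓝 (0:ℂ), HasSum (fun n => c n * x ^ n) (g x)) :
    ∀ᶠ x in 𝓝 (0:ℂ), HasSum (fun n : ℕ => (((n:ℂ) + 1) * c (n+1)) * x ^ n) (deriv g x) := by
  rw [has_iff] at h ⊢
  refine ⟨h.1.deriv, fun n => ?_⟩
  rw [h.2, iteratedDeriv_succ', Nat.factorial_succ]
  have : (n.factorial : ℂ) ≠ 0 := by exact_mod_cast n.factorial_ne_zero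
  have : (n : ℂ) + 1 ≠ 0 := by exact_mod_cast n.succ_ne_zero
  push_cast
  field_simp

/-- multiplication by `x` -/
theorem has_shift {c d : ℕ → ℂ} {x s : ℂ} (h : HasSum (fun n => c n * x ^ n) s)
    (h0 : d 0 = 0) (hd : ∀ n, d (n+1) = c n) : HasSum (fun n => d n * x ^ n) (x * s) := by
  rw [← hasSum_nat_add_iff' 1]
  have := h.mul_left x
  simp only [Finset.sum_range_one, h0, zero_mul, sub_zero, hd]
  refine Eq.mp (congrArg (fun F => HasSum F _) (funext ?_)) this
  intro n
  ring

/-- The coefficients of a power-series solution of `Z(A)f = 0` near `0` satisfy the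
recurrence `Rc₀(A)` (with the convention `C₋₁ = 0`). -/
theorem stmt_10 (A₀ A₁ A₂ A₃ : ℂ) (C : ℕ → ℂ) (f : ℂ → ℂ) (ε : ℝ) (hε : 0 < ε)
    (hsum : ∀ x : ℂ, ‖x‖ < ε → HasSum (fun n => C n * x ^ n) (f x))
    (hode : ∀ x : ℂ, ‖x‖ < ε → ZopC A₀ A₁ A₂ A₃ f x = 0) :
    ∀ n : ℕ, 1 ≤ n →
      (n : ℂ) * ((n : ℂ) - 2 * A₀) * (2 * (n : ℂ) - 2 * A₀ - 1) * (2 * (n : ℂ) - 2 * A₀ + 1)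
          * C n
        = (2 * ((n : ℂ) - A₀) - 1) ^ 2
            * (2 * (n : ℂ) ^ 2 - 4 * A₀ * (n : ℂ) + A₀ ^ 2 + A₁ ^ 2 - A₂ ^ 2 - A₃ ^ 2 + 1
                - 2 * ((n : ℂ) - A₀)) * C (n - 1)
          - 4 * ((n : ℂ) - A₀ - A₂ - 1) * ((n : ℂ) - A₀ + A₂ - 1)
              * ((n : ℂ) - A₀ - A₃ - 1) * ((n : ℂ) - A₀ + A₃ - 1)
              * (if n = 1 then 0 else C (n - 2)) := by
  have h0 : ∀ᶠ x in nhds (0:ℂ), HasSum (fun n => C n * x ^ n) (f x) := by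
    filter_upwards [Metric.ball_mem_nhds (0:ℂ) hε] with x hx
    exact hsum x (by simpa using hx)
  have h1 := has_deriv h0
  have h2 := has_deriv h1
  have h3 := has_deriv h2
  have h4 := has_deriv h3
  let S : ℕ → ℂ := fun n => if n = 0 then 0 else C (n - 1)
  let T : ℕ → ℂ := fun n => if n = 0 then 0 else S (n - 1)
  let P : ℂ → ℂ := fun n => n * (n - 2 * A₀) * (2 * n - 2 * A₀ - 1) * (2 * n - 2 * A₀ + 1)
  let Q : ℂ → ℂ := fun n => (2 * (n - A₀) - 1) ^ 2
            * (2 * n ^ 2 - 4 * A₀ * n + A₀ ^ 2 + A₁ ^ 2 - A₂ ^ 2 - A₃ ^ 2 + 1 - 2 * (n - A₀))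
  let R : ℂ → ℂ := fun n => 4 * (n - A₀ - A₂ - 1) * (n - A₀ + A₂ - 1)
              * (n - A₀ - A₃ - 1) * (n - A₀ + A₃ - 1)
  have hz : ∀ᶠ x in nhds (0:ℂ), HasSum (fun n : ℕ => (P n * C n - Q n * S n + R n * T n) * x ^ n)
      ((fun _ => (0:ℂ)) x) := by
    filter_upwards [h0, h1, h2, h3, h4, Metric.ball_mem_nhds (0:ℂ) hε] with x k0 k1 k2 k3 k4 hx
    have hZ := hode x (by simpa using hx)
    have e1 : HasSum (fun n : ℕ => ((n:ℂ) * C n) * x ^ n) (x * deriv f x) :=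
      has_shift k1 (by simp) (by intro n; push_cast; ring)
    have e2 : HasSum (fun n : ℕ => ((n:ℂ) * (n - 1) * C n) * x ^ n)
        (x * (x * deriv (deriv f) x)) :=
      has_shift (has_shift (d := fun n : ℕ => ((n:ℂ) + 1) * n * C (n+1)) k2 (by simp)
        (by intro n; push_cast; ring)) (by simp) (by intro n; push_cast; ring)
    have e3 : HasSum (fun n : ℕ => ((n:ℂ) * (n - 1) * (n - 2) * C n) * x ^ n)
        (x * (x * (x * deriv (deriv (deriv f)) x))) :=
      has_shift (has_shift (d := fun n : ℕ => ((n:ℂ) + 1) * n * (n - 1) * C (n+1))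
        (has_shift (d := fun n : ℕ => ((n:ℂ) + 2) * (n + 1) * n * C (n+2)) k3 (by simp)
        (by intro n; push_cast; ring)) (by simp)
        (by intro n; push_cast; ring)) (by simp) (by intro n; push_cast; ring)
    have e4 : HasSum (fun n : ℕ => ((n:ℂ) * (n - 1) * (n - 2) * (n - 3) * C n) * x ^ n)
        (x * (x * (x * (x * deriv (deriv (deriv (deriv f))) x)))) :=
      has_shift (has_shift (d := fun n : ℕ => ((n:ℂ) + 1) * n * (n - 1) * (n - 2) * C (n+1))
        (has_shift (d := fun n : ℕ => ((n:ℂ) + 2) * (n + 1) * n * (n - 1) * C (n+2)) 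
        (has_shift (d := fun n : ℕ => ((n:ℂ) + 3) * (n + 2) * (n + 1) * n * C (n+3)) k4 (by simp)
        (by intro n; push_cast; ring)) (by simp)
        (by intro n; push_cast; ring)) (by simp)
        (by intro n; push_cast; ring)) (by simp) (by intro n; push_cast; ring)
    -- each of the three pieces
    have mk : ∀ a b c d e : ℂ, HasSum (fun n : ℕ => ((a * ((n:ℂ) * (n - 1) * (n - 2) * (n - 3))
        + b * ((n:ℂ) * (n - 1) * (n - 2)) + c * ((n:ℂ) * (n - 1)) + d * n + e) * C n) * x ^ n)
        (a * (x * (x * (x * (x * deriv (deriv (deriv (deriv f))) x))))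
          + b * (x * (x * (x * deriv (deriv (deriv f)) x)))
          + c * (x * (x * deriv (deriv f) x)) + d * (x * deriv f x) + e * f x) := by
      intro a b c d e
      have := ((((e4.mul_left a).add (e3.mul_left b)).add (e2.mul_left c)).add
        (e1.mul_left d)).add (k0.mul_left e)
      refine Eq.mp (congrArg (fun F => HasSum F _) (funext ?_)) this
      intro n
      ring
    have p0 := mk 4 (-8 * (2 * A₀ - 3)) ((10 * A₀ - 9) * (2 * A₀ - 3))
      (- (2 * A₀ - 3) * (2 * A₀ - 1) ^ 2) 0
    have p1 := has_shift (d := fun n : ℕ => - Q n * S n) (mk (-8)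
      (8 * (4 * A₀ - 8)) (4 * (-11 * A₀ ^ 2 - A₁ ^ 2 + A₂ ^ 2 + A₃ ^ 2 + 36 * A₀ - 59 / 2))
      (4 * ((A₀ - 1) * (6 * A₀ ^ 2 + 2 * A₁ ^ 2 - 2 * A₂ ^ 2 - 2 * A₃ ^ 2 - 16 * A₀ + 11)))
      (- (2 * A₀ - 1) ^ 2 * (A₀ ^ 2 + A₁ ^ 2 - A₂ ^ 2 - A₃ ^ 2 - 2 * A₀ + 1)))
      (by simp [S]) (by intro n; simp only [S, Q]; simp; ring)
    have p2 := has_shift (d := fun n : ℕ => R n * T n) (has_shift (d := fun n : ℕ => R (n+1) * S n) (mk 4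
      (-8 * (2 * A₀ - 5)) (4 * (6 * A₀ ^ 2 - A₂ ^ 2 - A₃ ^ 2 - 24 * A₀ + 25))
      (-4 * ((2 * A₀ - 3) * (2 * A₀ ^ 2 - A₂ ^ 2 - A₃ ^ 2 - 6 * A₀ + 5)))
      (4 * ((A₀ - 1 + A₃) * (A₀ - 1 - A₃) * (A₀ - 1 + A₂) * (A₀ - 1 - A₂))))
      (by simp [S]) (by intro n; simp only [S, R, Nat.succ_ne_zero, if_false, Nat.add_sub_cancel]; push_cast; ring))
      (by simp [T]) (by intro n; simp [T])
    have tot := (p0.add p1).add p2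
    have hZ' := congrArg (fun z => 4 * x * z) hZ
    simp only [ZopC, Function.iterate_succ, Function.iterate_zero, Function.comp, id] at hZ'
    convert tot using 1
    · funext n
      simp only [P]
      ring
    · linear_combination -hZ'
  have hc := ((has_iff _ _).1 hz).2
  intro n hn
  have hn' := hc n
  have hzero : iteratedDeriv n (fun _ : ℂ => (0:ℂ)) 0 = 0 := by
    simp [iteratedDeriv_const]
  rw [hzero, zero_div] at hn'
  obtain ⟨m, rfl⟩ : ∃ m, n = m + 1 := ⟨n - 1, by omega⟩
  have hS : S (m + 1) = C (m + 1 - 1) := by simp [S]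
  have hT : T (m + 1) = if m + 1 = 1 then 0 else C (m + 1 - 2) := by
    simp only [T, S]
    simp
  rw [← hS, ← hT]
  simp only [P, Q, R] at hn'
  linear_combination hn'

end Stmt10
end

section
/- Let p₁, p₂, q₁, q₂ be ℂ-valued functions on the positive integers with p₁(n) ≠ 0, q₁(n) ≠ 0, p₂(n) ≠ 0, q₂(n) ≠ 0 for all n ≥ 1, and suppose the invariants of the two difference equations agree: p₁(n)·p₁(n+1)·q₂(n+1) = q₁(n)·q₁(n+1)·p₂(n+1) for all n ≥ 1. Define λ : ℕ → ℂ by λ(0) = 1 and λ(n) = λ(n−1)·p₁(n)/q₁(n) for n ≥ 1. Then: (a) if C : ℕ → ℂ satisfies Cₙ = p₁(n)C_{n−1} + p₂(n)C_{n−2} for all n ≥ 2, the sequence Dₙ := Cₙ/λ(n) satisfies Dₙ = q₁(n)D_{n−1} + q₂(n)D_{n−2} for all n ≥ 2; and (b) conversely, if D satisfies the second recurrence, then Cₙ := λ(n)·Dₙ satisfies the first; so C ↦ C/λ is a bijection between the solution sets of the two recurrences. -/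
/-- If the invariants `p₁(n)p₁(n+1)/p₂(n+1)` and `q₁(n)q₁(n+1)/q₂(n+1)` of two
second-order linear difference equations agree, then the two equations are
essentially the same: division by `λ` (with `λ(0)=1`, `λ(n)=λ(n−1)p₁(n)/q₁(n)`)
maps solutions of the first to solutions of the second, bijectively. -/
theorem stmt_11 (p₁ p₂ q₁ q₂ : ℕ → ℂ)
    (hp₁ : ∀ n, 1 ≤ n → p₁ n ≠ 0) (hp₂ : ∀ n, 1 ≤ n → p₂ n ≠ 0)
    (hq₁ : ∀ n, 1 ≤ n → q₁ n ≠ 0) (hq₂ : ∀ n, 1 ≤ n → q₂ n ≠ 0)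
    (hinv : ∀ n, 1 ≤ n → p₁ n * p₁ (n + 1) * q₂ (n + 1) = q₁ n * q₁ (n + 1) * p₂ (n + 1))
    (lam : ℕ → ℂ) (hlam0 : lam 0 = 1)
    (hlamrec : ∀ n, 1 ≤ n → lam n = lam (n - 1) * p₁ n / q₁ n) :
    (∀ C : ℕ → ℂ, (∀ n, 2 ≤ n → C n = p₁ n * C (n - 1) + p₂ n * C (n - 2)) →
        ∀ n, 2 ≤ n →
          C n / lam n = q₁ n * (C (n - 1) / lam (n - 1)) + q₂ n * (C (n - 2) / lam (n - 2)))
    ∧ (∀ D : ℕ → ℂ, (∀ n, 2 ≤ n → D n = q₁ n * D (n - 1) + q₂ n * D (n - 2)) →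
        ∀ n, 2 ≤ n →
          lam n * D n = p₁ n * (lam (n - 1) * D (n - 1)) + p₂ n * (lam (n - 2) * D (n - 2)))
    ∧ Set.BijOn (fun C : ℕ → ℂ => fun n => C n / lam n)
        {C : ℕ → ℂ | ∀ n, 2 ≤ n → C n = p₁ n * C (n - 1) + p₂ n * C (n - 2)}
        {D : ℕ → ℂ | ∀ n, 2 ≤ n → D n = q₁ n * D (n - 1) + q₂ n * D (n - 2)} := by
  have hne : ∀ n, lam n ≠ 0 := by
    intro n
    induction n with
    | zero => rw [hlam0]; exact one_ne_zero
    | succ k ih =>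
      rw [hlamrec (k + 1) (by omega)]
      exact div_ne_zero (mul_ne_zero ih (hp₁ _ (by omega))) (hq₁ _ (by omega))
  have h1 : ∀ n, 1 ≤ n → lam n * q₁ n = lam (n - 1) * p₁ n := by
    intro n hn
    rw [hlamrec n hn, div_mul_cancel₀ _ (hq₁ n hn)]
  have h2 : ∀ n, 2 ≤ n → lam n * q₂ n = lam (n - 2) * p₂ n := by
    intro n hn
    obtain ⟨k, rfl⟩ := Nat.exists_eq_add_of_le' hn
    have e1 : lam (k + 2) * q₁ (k + 2) = lam (k + 1) * p₁ (k + 2) := h1 (k + 2) (by omega)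
    have e2 : lam (k + 1) * q₁ (k + 1) = lam k * p₁ (k + 1) := h1 (k + 1) (by omega)
    have e3 : p₁ (k + 1) * p₁ (k + 2) * q₂ (k + 2) = q₁ (k + 1) * q₁ (k + 2) * p₂ (k + 2) :=
      hinv (k + 1) (by omega)
    change lam (k + 2) * q₂ (k + 2) = lam k * p₂ (k + 2)
    apply mul_left_cancel₀ (mul_ne_zero (hq₁ (k + 1) (by omega)) (hq₁ (k + 2) (by omega)))
    linear_combination q₁ (k + 1) * q₂ (k + 2) * e1 + p₁ (k + 2) * q₂ (k + 2) * e2 + lam k * e3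
  have ha : ∀ C : ℕ → ℂ, (∀ n, 2 ≤ n → C n = p₁ n * C (n - 1) + p₂ n * C (n - 2)) →
        ∀ n, 2 ≤ n →
          C n / lam n = q₁ n * (C (n - 1) / lam (n - 1)) + q₂ n * (C (n - 2) / lam (n - 2)) := by
    intro C hC n hn
    have c1 : lam (n - 1) * (C (n - 1) / lam (n - 1)) = C (n - 1) := mul_div_cancel₀ _ (hne _)
    have c2 : lam (n - 2) * (C (n - 2) / lam (n - 2)) = C (n - 2) := mul_div_cancel₀ _ (hne _)
    rw [div_eq_iff (hne n)]
    linear_combination hC n hn - (C (n - 1) / lam (n - 1)) * h1 n (by omega)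
      - (C (n - 2) / lam (n - 2)) * h2 n hn - p₁ n * c1 - p₂ n * c2
  have hb : ∀ D : ℕ → ℂ, (∀ n, 2 ≤ n → D n = q₁ n * D (n - 1) + q₂ n * D (n - 2)) →
        ∀ n, 2 ≤ n →
          lam n * D n = p₁ n * (lam (n - 1) * D (n - 1)) + p₂ n * (lam (n - 2) * D (n - 2)) := by
    intro D hD n hn
    linear_combination lam n * hD n hn + D (n - 1) * h1 n (by omega) + D (n - 2) * h2 n hn
  refine ⟨ha, hb, fun C hC => ha C hC, ?_, ?_⟩
  · intro C _ C' _ h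
    funext n
    exact (div_left_inj' (hne n)).1 (congrFun h n)
  · intro D hD
    refine ⟨fun n => lam n * D n, hb D hD, ?_⟩
    funext n
    exact mul_div_cancel_left₀ _ (hne n)
end

section
/- Let p₁, p₂, q₁, q₂ be ℂ-valued functions on the positive integers, nowhere vanishing, whose invariants agree: p₁(n)p₁(n+1)q₂(n+1) = q₁(n)q₁(n+1)p₂(n+1) for all n ≥ 1. Suppose moreover that for all n ≥ 1, q₁(n)/p₁(n) = w·∏_{i=1}^{r}(n+uᵢ) / ∏_{j=1}^{s}(n+vⱼ), where w ∈ ℂ, w ≠ 0, and u₁,…,u_r, v₁,…,v_s ∈ ℂ are none of them negative integers or zero (so that n+uᵢ+1 and n+vⱼ+1 are never nonpositive integers for n ∈ ℕ). Then for every sequence D : ℕ → ℂ satisfying Dₙ = q₁(n)D_{n−1} + q₂(n)D_{n−2} for all n ≥ 2, the sequence Cₙ := w^{−(n+1)}·(∏_{j=1}^{s}Γ(n+vⱼ+1) / ∏_{i=1}^{r}Γ(n+uᵢ+1))·Dₙ satisfies Cₙ = p₁(n)C_{n−1} + p₂(n)C_{n−2} for all n ≥ 2, and this correspondence is a bijection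 between the two solution sets. -/
open scoped BigOperators

/-- Gamma-product form of the equivalence between two second-order difference
equations with equal invariants, when `q₁(n)/p₁(n) = w ∏ᵢ(n+uᵢ)/∏ⱼ(n+vⱼ)`:
the map `D ↦ C`, `Cₙ = w^{−(n+1)} (∏ⱼΓ(n+vⱼ+1)/∏ᵢΓ(n+uᵢ+1)) Dₙ`, carries
solutions of the `q`-recurrence to solutions of the `p`-recurrence, bijectively. -/
theorem stmt_12 (p₁ p₂ q₁ q₂ : ℕ → ℂ)
    (hp₁ : ∀ n, 1 ≤ n → p₁ n ≠ 0) (hp₂ : ∀ n, 1 ≤ n → p₂ n ≠ 0)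
    (hq₁ : ∀ n, 1 ≤ n → q₁ n ≠ 0) (hq₂ : ∀ n, 1 ≤ n → q₂ n ≠ 0)
    (hinv : ∀ n, 1 ≤ n → p₁ n * p₁ (n + 1) * q₂ (n + 1) = q₁ n * q₁ (n + 1) * p₂ (n + 1))
    (r s : ℕ) (u : Fin r → ℂ) (v : Fin s → ℂ) (w : ℂ) (hw : w ≠ 0)
    (hu : ∀ i, ∀ k : ℕ, u i ≠ -(k : ℂ)) (hv : ∀ j, ∀ k : ℕ, v j ≠ -(k : ℂ))
    (hratio : ∀ n : ℕ, 1 ≤ n →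
      q₁ n / p₁ n = w * (∏ i, ((n : ℂ) + u i)) / ∏ j, ((n : ℂ) + v j)) :
    (∀ D : ℕ → ℂ, (∀ n : ℕ, 2 ≤ n → D n = q₁ n * D (n - 1) + q₂ n * D (n - 2)) →
        ∀ n : ℕ, 2 ≤ n →
          (w ^ (-((n : ℤ) + 1))
              * ((∏ j, Complex.Gamma ((n : ℂ) + v j + 1))
                  / ∏ i, Complex.Gamma ((n : ℂ) + u i + 1)) * D n)
            = p₁ n * (w ^ (-(((n : ℤ) - 1) + 1))
                * ((∏ j, Complex.Gamma (((n : ℂ) - 1) + v j + 1))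
                    / ∏ i, Complex.Gamma (((n : ℂ) - 1) + u i + 1)) * D (n - 1))
              + p₂ n * (w ^ (-(((n : ℤ) - 2) + 1))
                * ((∏ j, Complex.Gamma (((n : ℂ) - 2) + v j + 1))
                    / ∏ i, Complex.Gamma (((n : ℂ) - 2) + u i + 1)) * D (n - 2)))
    ∧ Set.BijOn
        (fun D : ℕ → ℂ => fun n : ℕ =>
          w ^ (-((n : ℤ) + 1))
            * ((∏ j, Complex.Gamma ((n : ℂ) + v j + 1))
                / ∏ i, Complex.Gamma ((n : ℂ) + u i + 1)) * D n)
        {D : ℕ → ℂ | ∀ n, 2 ≤ n → D n = q₁ n * D (n - 1) + q₂ n * D (n - 2)}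
        {C : ℕ → ℂ | ∀ n, 2 ≤ n → C n = p₁ n * C (n - 1) + p₂ n * C (n - 2)} := by
  obtain ⟨L, hL⟩ : ∃ L : ℕ → ℂ, ∀ n : ℕ, L n = w ^ (-((n : ℤ) + 1))
            * ((∏ j, Complex.Gamma ((n : ℂ) + v j + 1))
                / ∏ i, Complex.Gamma ((n : ℂ) + u i + 1)) := ⟨_, fun _ => rfl⟩
  have hne : ∀ (x : ℂ), (∀ k : ℕ, x ≠ -(k : ℂ)) → ∀ n : ℕ, (n : ℂ) + x ≠ 0 := by
    intro x hx n h
    exact hx n (by linear_combination h)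
  have hG : ∀ (x : ℂ), (∀ k : ℕ, x ≠ -(k : ℂ)) → ∀ n : ℕ,
      Complex.Gamma ((n : ℂ) + x + 1) ≠ 0 := by
    intro x hx n
    apply Complex.Gamma_ne_zero
    intro m h
    apply hx (n + 1 + m)
    push_cast
    linear_combination h
  have hS : ∀ (x : ℂ), (∀ k : ℕ, x ≠ -(k : ℂ)) → ∀ n : ℕ,
      Complex.Gamma (((n + 1 : ℕ) : ℂ) + x + 1)
        = (((n + 1 : ℕ) : ℂ) + x) * Complex.Gamma ((n : ℂ) + x + 1) := by
    intro x hx n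
    rw [Complex.Gamma_add_one _ (hne x hx (n + 1))]
    congr 2
    push_cast
    ring
  have hL0 : ∀ n, L n ≠ 0 := by
    intro n
    rw [hL]
    refine mul_ne_zero (zpow_ne_zero _ hw) (div_ne_zero ?_ ?_)
    · exact Finset.prod_ne_zero_iff.2 fun j _ => hG _ (hv j) n
    · exact Finset.prod_ne_zero_iff.2 fun j _ => hG _ (hu j) n
  have h1 : ∀ n, L (n + 1) * q₁ (n + 1) = p₁ (n + 1) * L n := by
    intro n
    have hr := hratio (n + 1) (by omega)
    have hV : ∏ j, (((n + 1 : ℕ) : ℂ) + v j) ≠ 0 :=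
      Finset.prod_ne_zero_iff.2 fun j _ => hne _ (hv j) (n + 1)
    have hU : ∏ j, (((n + 1 : ℕ) : ℂ) + u j) ≠ 0 :=
      Finset.prod_ne_zero_iff.2 fun j _ => hne _ (hu j) (n + 1)
    have hGU : ∏ i, Complex.Gamma ((n : ℂ) + u i + 1) ≠ 0 :=
      Finset.prod_ne_zero_iff.2 fun j _ => hG _ (hu j) n
    have hp := hp₁ (n + 1) (by omega)
    rw [div_eq_iff hp] at hr
    rw [hr, hL, hL, Finset.prod_congr rfl fun j _ => hS _ (hv j) n,
      Finset.prod_congr rfl fun j _ => hS _ (hu j) n,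
      Finset.prod_mul_distrib, Finset.prod_mul_distrib]
    have hz : w ^ (-((n : ℤ) + 1)) = w ^ (-(((n + 1 : ℕ) : ℤ) + 1)) * w := by
      rw [← zpow_add_one₀ hw]
      congr 1
    rw [hz]
    generalize ∏ j, (((n + 1 : ℕ) : ℂ) + v j) = a at *
    generalize ∏ j, (((n + 1 : ℕ) : ℂ) + u j) = b at *
    generalize w ^ (-(((n + 1 : ℕ) : ℤ) + 1)) = z at *
    field_simp
  have h2 : ∀ n, L (n + 2) * q₂ (n + 2) = p₂ (n + 2) * L n := by
    intro n
    have ha := h1 n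
    have hb := h1 (n + 1)
    have hi := hinv (n + 1) (by omega)
    have hqa := hq₁ (n + 1) (by omega)
    have hqb := hq₁ (n + 2) (by omega)
    simp only [add_assoc, Nat.reduceAdd] at hb hi
    apply mul_left_cancel₀ (mul_ne_zero hqa hqb)
    linear_combination q₂ (n + 2) * q₁ (n + 1) * hb + q₂ (n + 2) * p₁ (n + 2) * ha
      + L n * hi
  have key : ∀ D : ℕ → ℂ, ∀ n, L (n + 2) * D (n + 2) - (p₁ (n + 2) * (L (n + 1) * D (n + 1))
      + p₂ (n + 2) * (L n * D n))
      = L (n + 2) * (D (n + 2) - (q₁ (n + 2) * D (n + 1) + q₂ (n + 2) * D n)) := by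
    intro D n
    have hb := h1 (n + 1)
    simp only [add_assoc, Nat.reduceAdd] at hb
    linear_combination D (n + 1) * hb + D n * h2 n
  have iff : ∀ D : ℕ → ℂ, (∀ n, 2 ≤ n → D n = q₁ n * D (n - 1) + q₂ n * D (n - 2)) ↔
      (∀ n, 2 ≤ n → L n * D n = p₁ n * (L (n - 1) * D (n - 1))
        + p₂ n * (L (n - 2) * D (n - 2))) := by
    intro D
    refine forall_congr' fun n => forall_congr' fun hn => ?_
    obtain ⟨m, rfl⟩ : ∃ m, n = m + 2 := ⟨n - 2, by omega⟩
    have e1 : m + 2 - 1 = m + 1 := by omega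
    have e2 : m + 2 - 2 = m := by omega
    rw [e1, e2, ← sub_eq_zero, ← sub_eq_zero (a := L (m + 2) * D (m + 2)), key D m,
      mul_eq_zero, or_iff_right (hL0 _)]
  constructor
  · intro D hD n hn
    have h := (iff D).1 hD n hn
    rw [hL, hL, hL] at h
    have c1 : ((n - 1 : ℕ) : ℂ) = (n : ℂ) - 1 := by
      rw [Nat.cast_sub (by omega)]; simp
    have c2 : ((n - 2 : ℕ) : ℂ) = (n : ℂ) - 2 := by
      rw [Nat.cast_sub (by omega)]; simp
    have z1 : ((n - 1 : ℕ) : ℤ) = (n : ℤ) - 1 := by omega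
    have z2 : ((n - 2 : ℕ) : ℤ) = (n : ℤ) - 2 := by omega
    rw [c1, c2, z1, z2] at h
    exact h
  · simp only [← hL]
    refine ⟨fun D hD => (iff D).1 hD, ?_, ?_⟩
    · intro D _ D' _ h
      funext n
      exact mul_left_cancel₀ (hL0 n) (congrFun h n)
    · intro C hC
      have hE : (fun n => L n * ((L n)⁻¹ * C n)) = C := by
        funext n
        rw [mul_inv_cancel_left₀ (hL0 n)]
      refine ⟨fun n => (L n)⁻¹ * C n, (iff _).2 ?_, hE⟩
      intro n hn
      simp only [mul_inv_cancel_left₀ (hL0 _)]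
      exact hC n hn
end

section
/- Let α = (α₀, α₁, α₂, α₃; β₁, β₂, β₃) with α₀ = −N for an integer N ≥ 2, satisfying the balanced condition β₁ + β₂ + β₃ − α₀ − α₁ − α₂ − α₃ = 1. Assume all of the following quantities are nonzero: β₁, β₂, β₁+1, β₂+1, β₃−α₀−1, β₃−α₀−2, β₃−α₁−1, U₁⁽⁰⁾(α+e₁₂), and the Pochhammer denominators (β₁)_k, (β₂)_k, (β₃)_k for 0 ≤ k ≤ N, (β₁+1)_k, (β₂+1)_k for 0 ≤ k ≤ N−1, and (β₁+2)_k, (β₂+2)_k for 0 ≤ k ≤ N−2. Then the terminating balanced series satisfy the three-term relation ₄F₃(α; 1) = q₁⁽⁰⁾(α)·₄F₃(α+e₁₂; 1) + q₂⁽⁰⁾(α)·₄F₃(α+2e₁₂; 1), where q₁⁽⁰⁾(α) = U₁⁽⁰⁾(α)U₂⁽⁰⁾(α+e₁) + V₁⁽⁰⁾(α) + U₁⁽⁰⁾(α)V₂⁽⁰⁾(α+e₁)/U₁⁽⁰⁾(α+e₁₂) and q₂⁽⁰⁾(α) = −U₁⁽⁰⁾(α)V₁⁽⁰⁾(α+e₁₂)V₂⁽⁰⁾(α+e₁)/U₁⁽⁰⁾(α+e₁₂).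 -/
namespace Stmt13

/-- The Pochhammer symbol `(a)ₖ = a(a+1)⋯(a+k−1)`. -/
noncomputable def poch (a : ℂ) (k : ℕ) : ℂ := ∏ i ∈ Finset.range k, (a + (i : ℂ))

/-- A parameter tuple `(α₀, α₁, α₂, α₃; β₁, β₂, β₃)` for `₄F₃`. -/
structure HGParam where
  a0 : ℂ
  a1 : ℂ
  a2 : ℂ
  a3 : ℂ
  b1 : ℂ
  b2 : ℂ
  b3 : ℂ

/-- The terminating value `₄F₃(α; 1) = Σ_{k=0}^{N} (α₀)ₖ(α₁)ₖ(α₂)ₖ(α₃)ₖ /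
((β₁)ₖ(β₂)ₖ(β₃)ₖ k!)` (where `α₀ = −N`). -/
noncomputable def F43 (p : HGParam) (N : ℕ) : ℂ :=
  ∑ k ∈ Finset.range (N + 1),
    poch p.a0 k * poch p.a1 k * poch p.a2 k * poch p.a3 k /
      (poch p.b1 k * poch p.b2 k * poch p.b3 k * (Nat.factorial k : ℂ))

/-- The shift `e₁`: add `1` to `α₀` and `β₁`. -/
def e1 (p : HGParam) : HGParam := ⟨p.a0 + 1, p.a1, p.a2, p.a3, p.b1 + 1, p.b2, p.b3⟩

/-- The shift `e₁₂`: add `1` to each of `α₀, α₁, β₁, β₂`. -/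
def e12 (p : HGParam) : HGParam := ⟨p.a0 + 1, p.a1 + 1, p.a2, p.a3, p.b1 + 1, p.b2 + 1, p.b3⟩

noncomputable def U1 (p : HGParam) : ℂ :=
  -((p.b1 - p.a1) * (p.b1 + p.b2 - p.a2 - p.a3)) / (p.b1 * (p.b3 - p.a0 - 1))

noncomputable def V1 (p : HGParam) : ℂ :=
  -(p.a1 * (p.b2 - p.a2) * (p.b2 - p.a3)) / (p.b1 * p.b2 * (p.b3 - p.a0 - 1))

noncomputable def U2 (p : HGParam) : ℂ :=
  -((p.b2 - p.a0) * (p.b1 + p.b2 - p.a2 - p.a3)) / (p.b2 * (p.b3 - p.a1 - 1))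

noncomputable def V2 (p : HGParam) : ℂ :=
  -(p.a0 * (p.b1 - p.a2) * (p.b1 - p.a3)) / (p.b1 * p.b2 * (p.b3 - p.a1 - 1))

noncomputable def q1 (p : HGParam) : ℂ :=
  U1 p * U2 (e1 p) + V1 p + U1 p * V2 (e1 p) / U1 (e12 p)

noncomputable def q2 (p : HGParam) : ℂ :=
  -(U1 p * V1 (e12 p) * V2 (e1 p)) / U1 (e12 p)


lemma poch_succ (a : ℂ) (k : ℕ) : poch a (k+1) = poch a k * (a + k) := by
  simp [poch, Finset.prod_range_succ]

lemma poch_succ' (a : ℂ) (k : ℕ) : poch a (k+1) = a * poch (a+1) k := by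
  unfold poch
  rw [Finset.prod_range_succ']
  simp only [Nat.cast_zero, add_zero, mul_comm]
  congr 1
  refine Finset.prod_congr rfl fun i _ => ?_
  push_cast; ring

lemma poch_zero (a : ℂ) : poch a 0 = 1 := by simp [poch]

lemma poch_shift (a : ℂ) (ha : a ≠ 0) (k : ℕ) : poch (a+1) k = poch a k * (a + k) / a := by
  rw [← poch_succ, poch_succ']; field_simp

lemma poch_neg (m : ℕ) (x : ℂ) (h : x = -(m:ℂ)) : poch x (m+1) = 0 := by
  rw [poch_succ, h]; simp

noncomputable def T (x y a e b c d : ℂ) (k : ℕ) : ℂ :=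
  poch x k * poch y k * poch a k * poch e k /
    (poch b k * poch c k * poch d k * (Nat.factorial k : ℂ))

noncomputable def UU (x y a e b c d : ℂ) : ℂ := -((b - y) * (b + c - a - e)) / (b * (d - x - 1))
noncomputable def VV (x y a e b c d : ℂ) : ℂ :=
  -(y * (c - a) * (c - e)) / (b * c * (d - x - 1))

noncomputable def G (x y a e b c d : ℂ) (n : ℕ) : ℂ :=
  poch (x+1) n * poch y (n+1) * poch a (n+1) * poch e (n+1) /
    (poch b (n+1) * poch c (n+1) * poch d n * (Nat.factorial n : ℂ) * (d - x - 1))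

noncomputable def L (x y a e b c d : ℂ) (k : ℕ) : ℂ :=
  T x y a e b c d k - UU x y a e b c d * T (x+1) y a e (b+1) c d k
    - VV x y a e b c d * T (x+1) (y+1) a e (b+1) (c+1) d k

lemma L_zero (x y a e b c d : ℂ) (hbal : b + c + d - x - y - a - e = 1)
    (hb : b ≠ 0) (hc : c ≠ 0) (hd : d - x - 1 ≠ 0) :
    L x y a e b c d 0 = G x y a e b c d 0 := by
  have he : e = b + c + d - x - y - a - 1 := by linear_combination -hbal
  simp only [L, G, T, UU, VV, poch_succ, poch_zero, Nat.factorial_zero, Nat.cast_one,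
    Nat.cast_zero, add_zero]
  subst he
  field_simp
  ring

lemma V_mul (x y a e b c d Q : ℂ) (n : ℕ) (A : ℂ) :
    VV x y a e b c d * (A * poch (y+1) n * Q) =
    (-((c - a) * (c - e)) / (b * c * (d - x - 1))) * (A * poch y (n+1) * Q) := by
  rw [poch_succ' y]; unfold VV; ring

lemma L_succ (x y a e b c d : ℂ) (n : ℕ) (hbal : b + c + d - x - y - a - e = 1)
    (hb : poch b (n+2) ≠ 0) (hc : poch c (n+2) ≠ 0) (hdd : poch d (n+1) ≠ 0)
    (hd : d - x - 1 ≠ 0) :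
    L x y a e b c d (n+1) = G x y a e b c d (n+1) - G x y a e b c d n := by
  have hb0 : b ≠ 0 := by rw [poch_succ'] at hb; exact left_ne_zero_of_mul hb
  have hc0 : c ≠ 0 := by rw [poch_succ'] at hc; exact left_ne_zero_of_mul hc
  have he : e = b + c + d - x - y - a - 1 := by linear_combination -hbal
  have hV : VV x y a e b c d * T (x+1) (y+1) a e (b+1) (c+1) d (n+1) =
    (-((c - a) * (c - e)) / (b * c * (d - x - 1))) *
     (poch (x+1) (n+1) * poch y (n+2) * (poch a (n+1) * poch e (n+1) /
    (poch (b+1) (n+1) * poch (c+1) (n+1) * poch d (n+1) * (Nat.factorial (n+1) : ℂ)))) := by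
    rw [← V_mul]; unfold T; ring
  unfold L
  rw [hV]
  unfold G T UU
  rw [poch_shift b hb0, poch_shift c hc0, poch_succ' x n]
  rw [poch_succ b (n+1)] at hb ⊢
  rw [poch_succ c (n+1)] at hc ⊢
  rw [poch_succ d n] at hdd ⊢
  rw [poch_succ (x+1) n, poch_succ y (n+1), poch_succ a (n+1), poch_succ e (n+1),
    Nat.factorial_succ]
  have hf : (Nat.factorial n : ℂ) ≠ 0 := Nat.cast_ne_zero.mpr (Nat.factorial_ne_zero n)
  have hn : (n : ℂ) + 1 ≠ 0 := by exact_mod_cast Nat.succ_ne_zero n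
  have k1 := left_ne_zero_of_mul hb
  have k2 := right_ne_zero_of_mul hb
  have k3 := left_ne_zero_of_mul hc
  have k4 := right_ne_zero_of_mul hc
  have k5 := left_ne_zero_of_mul hdd
  have k6 := right_ne_zero_of_mul hdd
  push_cast at *
  generalize poch b (n+1) = B at *
  generalize poch c (n+1) = C at *
  generalize poch d n = D at *
  generalize poch (x+1) n = X at *
  generalize poch y (n+1) = Y at *
  generalize poch a (n+1) = A at *
  generalize poch e (n+1) = E at *
  generalize (Nat.factorial n : ℂ) = f at *
  generalize (n : ℂ) = z at *
  clear hV
  subst he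
  field_simp
  ring

lemma L_sum (x y a e b c d : ℂ) (n : ℕ) (hbal : b + c + d - x - y - a - e = 1)
    (hb : poch b (n+1) ≠ 0) (hc : poch c (n+1) ≠ 0) (hdd : poch d n ≠ 0)
    (hd : d - x - 1 ≠ 0) :
    ∑ k ∈ Finset.range (n+1), L x y a e b c d k = G x y a e b c d n := by
  induction n with
  | zero =>
    simp only [zero_add, Finset.sum_range_one]
    apply L_zero _ _ _ _ _ _ _ hbal _ _ hd
    · rw [poch_succ'] at hb; exact left_ne_zero_of_mul hb
    · rw [poch_succ'] at hc; exact left_ne_zero_of_mul hc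
  | succ n ih =>
    rw [Finset.sum_range_succ, L_succ _ _ _ _ _ _ _ _ hbal hb hc hdd hd, ih]
    · ring
    · rw [poch_succ] at hb; exact left_ne_zero_of_mul hb
    · rw [poch_succ] at hc; exact left_ne_zero_of_mul hc
    · rw [poch_succ] at hdd; exact left_ne_zero_of_mul hdd

lemma L_sum_split (x y a e b c d : ℂ) (n : ℕ) :
    ∑ k ∈ Finset.range n, L x y a e b c d k =
    ∑ k ∈ Finset.range n, T x y a e b c d k
     - UU x y a e b c d * ∑ k ∈ Finset.range n, T (x+1) y a e (b+1) c d k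
     - VV x y a e b c d * ∑ k ∈ Finset.range n, T (x+1) (y+1) a e (b+1) (c+1) d k := by
  simp only [L, Finset.sum_sub_distrib, Finset.mul_sum]

lemma rel1 (x y a e b c d : ℂ) (m : ℕ) (hbal : b + c + d - x - y - a - e = 1)
    (hx : x = -((m : ℂ) + 1))
    (hb : poch b (m+1) ≠ 0) (hc : poch c (m+1) ≠ 0) (hdd : poch d (m+1) ≠ 0)
    (hd : d - x - 1 ≠ 0) :
    ∑ k ∈ Finset.range (m+2), T x y a e b c d k =
     UU x y a e b c d * ∑ k ∈ Finset.range (m+1), T (x+1) y a e (b+1) c d k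
     + VV x y a e b c d * ∑ k ∈ Finset.range (m+1), T (x+1) (y+1) a e (b+1) (c+1) d k := by
  rw [poch_succ] at hdd
  have k5 := left_ne_zero_of_mul hdd
  have k6 := right_ne_zero_of_mul hdd
  have h := L_sum x y a e b c d m hbal hb hc k5 hd
  rw [L_sum_split] at h
  rw [Finset.sum_range_succ]
  have key : G x y a e b c d m + T x y a e b c d (m+1) = 0 := by
    unfold G T
    rw [poch_succ' x m, poch_succ d m, Nat.factorial_succ]
    have hf : (Nat.factorial m : ℂ) ≠ 0 := Nat.cast_ne_zero.mpr (Nat.factorial_ne_zero m)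
    have hn : (m : ℂ) + 1 ≠ 0 := by exact_mod_cast Nat.succ_ne_zero m
    push_cast
    generalize poch (x+1) m = X at *
    subst hx
    have hd' : d + m ≠ 0 := k6
    have : d - -((m:ℂ)+1) - 1 = d + m := by ring
    rw [this]
    field_simp
    ring
  linear_combination h + key

lemma rel2 (x y a e b c d : ℂ) (m : ℕ) (hbal : b + c + d - x - y - a - e = 1)
    (hy : y = -((m : ℂ) + 1))
    (hb : poch b (m+2) ≠ 0) (hc : poch c (m+1) ≠ 0) (hdd : poch d (m+1) ≠ 0)
    (hd : d - x - 1 ≠ 0) :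
    ∑ k ∈ Finset.range (m+2), T x y a e b c d k =
     UU x y a e b c d * ∑ k ∈ Finset.range (m+2), T (x+1) y a e (b+1) c d k
     + VV x y a e b c d * ∑ k ∈ Finset.range (m+1), T (x+1) (y+1) a e (b+1) (c+1) d k := by
  have hb0 : b ≠ 0 := by rw [poch_succ'] at hb; exact left_ne_zero_of_mul hb
  rw [poch_succ] at hdd
  have k5 := left_ne_zero_of_mul hdd
  have k6 := right_ne_zero_of_mul hdd
  rw [poch_succ] at hb
  have k1 := left_ne_zero_of_mul hb
  have k2 := right_ne_zero_of_mul hb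
  have h := L_sum x y a e b c d m hbal k1 hc k5 hd
  rw [L_sum_split] at h
  rw [Finset.sum_range_succ, Finset.sum_range_succ _ (m+1)]
  have key : G x y a e b c d m + T x y a e b c d (m+1)
      - UU x y a e b c d * T (x+1) y a e (b+1) c d (m+1) = 0 := by
    have he : e = b + c + d - x - y - a - 1 := by linear_combination -hbal
    unfold G T UU
    rw [poch_shift b hb0, poch_succ' x m, poch_succ d m, poch_succ (x+1) m, Nat.factorial_succ]
    have hf : (Nat.factorial m : ℂ) ≠ 0 := Nat.cast_ne_zero.mpr (Nat.factorial_ne_zero m)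
    have hn : (m : ℂ) + 1 ≠ 0 := by exact_mod_cast Nat.succ_ne_zero m
    push_cast at *
    generalize poch (x+1) m = X at *
    generalize poch y (m+1) = Y at *
    generalize poch a (m+1) = A at *
    generalize poch e (m+1) = E at *
    generalize poch b (m+1) = B at *
    generalize poch c (m+1) = C at *
    generalize poch d m = D at *
    generalize (Nat.factorial m : ℂ) = f at *
    generalize (m : ℂ) = z at *
    clear h
    subst he
    subst hy
    field_simp
    ring
  linear_combination h + key

lemma T_swap (x y a e b c d : ℂ) (k : ℕ) : T x y a e b c d k = T y x a e c b d k := by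
  unfold T; ring

/-- Three-term relation for terminating balanced `₄F₃(·;1)`:
`₄F₃(α;1) = q₁⁽⁰⁾(α) ₄F₃(α+e₁₂;1) + q₂⁽⁰⁾(α) ₄F₃(α+2e₁₂;1)`. -/
theorem stmt_13 (N : ℕ) (hN : 2 ≤ N) (p : HGParam) (hp0 : p.a0 = -(N : ℂ))
    (hbal : p.b1 + p.b2 + p.b3 - p.a0 - p.a1 - p.a2 - p.a3 = 1)
    (h1 : p.b1 ≠ 0) (h2 : p.b2 ≠ 0) (h3 : p.b1 + 1 ≠ 0) (h4 : p.b2 + 1 ≠ 0)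
    (h5 : p.b3 - p.a0 - 1 ≠ 0) (h6 : p.b3 - p.a0 - 2 ≠ 0) (h7 : p.b3 - p.a1 - 1 ≠ 0)
    (h8 : U1 (e12 p) ≠ 0)
    (hpochb : ∀ k ≤ N, poch p.b1 k ≠ 0 ∧ poch p.b2 k ≠ 0 ∧ poch p.b3 k ≠ 0)
    (hpochb1 : ∀ k ≤ N - 1, poch (p.b1 + 1) k ≠ 0 ∧ poch (p.b2 + 1) k ≠ 0)
    (hpochb2 : ∀ k ≤ N - 2, poch (p.b1 + 2) k ≠ 0 ∧ poch (p.b2 + 2) k ≠ 0) :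
    F43 p N = q1 p * F43 (e12 p) (N - 1) + q2 p * F43 (e12 (e12 p)) (N - 2) := by
  obtain ⟨x, y, a, e, b, c, d⟩ := p
  obtain ⟨m, rfl⟩ : ∃ m, N = m + 2 := ⟨N - 2, by omega⟩
  simp only at *
  have r1 := rel1 x y a e b c d (m+1) hbal (by rw [hp0]; push_cast; ring)
    (hpochb _ (by omega)).1 (hpochb _ (by omega)).2.1 (hpochb _ (by omega)).2.2 h5
  have r2 := rel2 y (x+1) a e c (b+1) d m (by linear_combination hbal)
    (by rw [hp0]; push_cast; ring)
    (hpochb _ (by omega)).2.1 (hpochb1 _ (by omega)).1 (hpochb _ (by omega)).2.2 h7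
  have r3 := rel1 (x+1) (y+1) a e (b+1) (c+1) d m (by linear_combination hbal)
    (by rw [hp0]; push_cast; ring)
    (hpochb1 _ (by omega)).1 (hpochb1 _ (by omega)).2 (hpochb _ (by omega)).2.2
    (by intro h; apply h6; linear_combination h)
  simp only [T_swap y (x+1) a e c (b+1) d, T_swap (y+1) (x+1) a e (c+1) (b+1) d,
    T_swap (y+1) (x+1+1) a e (c+1) (b+1+1) d] at r2
  have u1 : U1 ⟨x, y, a, e, b, c, d⟩ = UU x y a e b c d := rfl
  have v1 : V1 ⟨x, y, a, e, b, c, d⟩ = VV x y a e b c d := rfl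
  have u1' : U1 (e12 ⟨x, y, a, e, b, c, d⟩) = UU (x+1) (y+1) a e (b+1) (c+1) d := rfl
  have v1' : V1 (e12 ⟨x, y, a, e, b, c, d⟩) = VV (x+1) (y+1) a e (b+1) (c+1) d := rfl
  have u2 : U2 (e1 ⟨x, y, a, e, b, c, d⟩) = UU y (x+1) a e c (b+1) d := by
    simp only [U2, e1, UU]; ring
  have v2 : V2 (e1 ⟨x, y, a, e, b, c, d⟩) = VV y (x+1) a e c (b+1) d := by
    simp only [V2, e1, VV]; ring
  have f0 : F43 ⟨x, y, a, e, b, c, d⟩ (m+2) = ∑ k ∈ Finset.range (m+1+2), T x y a e b c d k := rfl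
  have f1 : F43 (e12 ⟨x, y, a, e, b, c, d⟩) (m+2-1) =
    ∑ k ∈ Finset.range (m+2), T (x+1) (y+1) a e (b+1) (c+1) d k := rfl
  have f2 : F43 (e12 (e12 ⟨x, y, a, e, b, c, d⟩)) (m+2-2) =
    ∑ k ∈ Finset.range (m+1), T (x+1+1) (y+1+1) a e (b+1+1) (c+1+1) d k := rfl
  rw [f0, f1, f2, q1, q2]
  rw [u1'] at h8
  rw [u1, v1, u1', v1', u2, v2]
  rw [show m + 1 + 1 = m + 2 from rfl, r2] at r1
  rw [r1]
  field_simp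
  linear_combination (-(UU x y a e b c d * VV y (x+1) a e c (b+1) d)) * r3

end Stmt13
end

section
/- Let A = (A₀, A₁, A₂, A₃) ∈ ℂ⁴ and assume: 2A₀ is not an integer ≥ 2 (so (1−A₀)_k and (3/2−A₀)_n never vanish), and neither A₀+A₁−A₂−A₃ nor A₀+A₁+A₂+A₃ is an odd integer (so (A₊₊₋₋−n)_k and (A₊₊₊₊−n)_k never vanish for 0 ≤ k ≤ n). Define, for n ∈ ℕ, Cₙ := [(A₋₋₋₋)ₙ(A₋₋₊₊)ₙ / (n!·(3/2−A₀)ₙ)] · Σ_{k=0}^{n} (−n)_k(A₀−n)_k(A₋₊₋₊)_k(A₋₊₊₋)_k / ((A₊₊₋₋−n)_k(A₊₊₊₊−n)_k(1−A₀)_k·k!). Then C₀ = 1 and, with C₋₁ := 0, for every integer n ≥ 1: n(n−2A₀)(2n−2A₀−1)(2n−2A₀+1)·Cₙ = (2(n−A₀)−1)²·(2n² − 4A₀n + A₀² + A₁² − A₂² − A₃² + 1 − 2(n−A₀))·C_{n−1} − 4(n−A₀−A₂−1)(n−A₀+A₂−1)(n−A₀−A₃−1)(n−A₀+A₃−1)·C_{n−2}.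 (These Cₙ are the coefficients of the holomorphic solution f⁽⁰,⁰⁾(A; x) of Z(A) at x = 0.) -/
namespace Stmt15

/-- The Pochhammer symbol `(a)ₖ = a(a+1)⋯(a+k−1)`. -/
noncomputable def poch (a : ℂ) (k : ℕ) : ℂ := ∏ i ∈ Finset.range k, (a + (i : ℂ))

/-- The coefficients of the holomorphic solution `f⁽⁰,⁰⁾(A;x)` of `Z(A)` at `x = 0`:
`Cₙ = (A₋₋₋₋)ₙ(A₋₋₊₊)ₙ/(n!(3/2−A₀)ₙ) ·
₄F₃(−n, A₀−n, A₋₊₋₊, A₋₊₊₋; A₊₊₋₋−n, A₊₊₊₊−n, 1−A₀; 1)`. -/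
noncomputable def C (A₀ A₁ A₂ A₃ : ℂ) (n : ℕ) : ℂ :=
  poch ((-A₀ - A₁ - A₂ - A₃ + 1) / 2) n * poch ((-A₀ - A₁ + A₂ + A₃ + 1) / 2) n /
      ((Nat.factorial n : ℂ) * poch (3 / 2 - A₀) n) *
    ∑ k ∈ Finset.range (n + 1),
      poch (-(n : ℂ)) k * poch (A₀ - (n : ℂ)) k * poch ((-A₀ + A₁ - A₂ + A₃ + 1) / 2) k
          * poch ((-A₀ + A₁ + A₂ - A₃ + 1) / 2) k /
        (poch ((A₀ + A₁ - A₂ - A₃ + 1) / 2 - (n : ℂ)) k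
          * poch ((A₀ + A₁ + A₂ + A₃ + 1) / 2 - (n : ℂ)) k
          * poch (1 - A₀) k * (Nat.factorial k : ℂ))

lemma poch_succ (a : ℂ) (k : ℕ) : poch a (k + 1) = poch a k * (a + k) := by
  simp [poch, Finset.prod_range_succ]

lemma poch_zero (a : ℂ) : poch a 0 = 1 := by simp [poch]

lemma poch_succ_left (a : ℂ) (k : ℕ) : poch a (k + 1) = a * poch (a + 1) k := by
  simp only [poch, Finset.prod_range_succ']
  rw [mul_comm]
  congr 1
  · simp
  · refine Finset.prod_congr rfl fun i _ => ?_
    push_cast; ring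

lemma poch_one (n : ℕ) : poch 1 n = (Nat.factorial n : ℂ) := by
  induction n with
  | zero => simp [poch]
  | succ n ih => rw [poch_succ, ih, Nat.factorial_succ]; push_cast; ring

lemma poch_ne (a : ℂ) (h : ∀ i : ℕ, a + i ≠ 0) (k : ℕ) : poch a k ≠ 0 :=
  Finset.prod_ne_zero_iff.mpr fun i _ => h i

lemma poch_flip (a : ℂ) (j k : ℕ) :
    poch a (j + k) = (-1) ^ k * poch (1 - a - ((j + k : ℕ) : ℂ)) k * poch a j := by
  induction k with
  | zero => simp [poch]
  | succ k ih =>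
    rw [← add_assoc, poch_succ, ih, poch_succ_left]
    have e : 1 - a - ((j + k + 1 : ℕ) : ℂ) + 1 = 1 - a - ((j + k : ℕ) : ℂ) := by
      push_cast; ring
    rw [e, pow_succ]
    push_cast; ring

noncomputable def U (a b g : ℂ) (j : ℕ) : ℂ :=
  poch a j * poch b j / ((Nat.factorial j : ℂ) * poch (1 + g) j)

lemma U_succ (a b g : ℂ) (hg : ∀ i : ℕ, 1 + g + i ≠ 0) (j : ℕ) :
    ((j : ℂ) + 1) * ((j : ℂ) + 1 + g) * U a b g (j + 1)
      = ((j : ℂ) + a) * ((j : ℂ) + b) * U a b g j := by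
  unfold U
  rw [poch_succ, poch_succ, poch_succ, Nat.factorial_succ]
  have h1 := poch_ne _ hg j
  have h2 := hg j
  have h3 : (Nat.factorial j : ℂ) ≠ 0 := by exact_mod_cast Nat.factorial_ne_zero j
  have h4 : (j : ℂ) + 1 ≠ 0 := by exact_mod_cast Nat.succ_ne_zero j
  push_cast
  field_simp
  ring

/-- bracket sums -/
noncomputable def Br (u v : ℕ → ℂ) (f : ℂ → ℂ → ℂ) (n : ℕ) : ℂ :=
  ∑ p ∈ Finset.HasAntidiagonal.antidiagonal n, f p.1 p.2 * (u p.1 * v p.2)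

lemma Br_left (a b g : ℂ) (hg : ∀ i : ℕ, 1 + g + i ≠ 0) (v : ℕ → ℂ) (f : ℂ → ℂ → ℂ) (n : ℕ) :
    Br (U a b g) v (fun x y => x * (x + g) * f x y) (n + 1)
      = Br (U a b g) v (fun x y => (x + a) * (x + b) * f (x + 1) y) n := by
  unfold Br
  rw [Finset.Nat.sum_antidiagonal_succ]
  simp only [Nat.cast_zero, zero_mul, zero_add]
  refine Finset.sum_congr rfl fun p _ => ?_
  have := U_succ a b g hg p.1
  push_cast
  linear_combination (f (p.1 + 1) p.2 * v p.2) * this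

lemma Br_right (a b g : ℂ) (hg : ∀ i : ℕ, 1 + g + i ≠ 0) (u : ℕ → ℂ) (f : ℂ → ℂ → ℂ) (n : ℕ) :
    Br u (U a b g) (fun x y => y * (y + g) * f x y) (n + 1)
      = Br u (U a b g) (fun x y => (y + a) * (y + b) * f x (y + 1)) n := by
  unfold Br
  rw [Finset.Nat.sum_antidiagonal_succ']
  simp only [Nat.cast_zero, zero_mul, zero_add]
  refine Finset.sum_congr rfl fun p _ => ?_
  have := U_succ a b g hg p.2
  push_cast
  linear_combination (f p.1 (p.2 + 1) * u p.1) * this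

lemma Br_add (u v : ℕ → ℂ) (f f' : ℂ → ℂ → ℂ) (n : ℕ) :
    Br u v f n + Br u v f' n = Br u v (fun x y => f x y + f' x y) n := by
  unfold Br
  rw [← Finset.sum_add_distrib]
  exact Finset.sum_congr rfl fun p _ => by ring

lemma Br_congr (u v : ℕ → ℂ) (f f' : ℂ → ℂ → ℂ) (n : ℕ)
    (h : ∀ x y : ℂ, x + y = n → f x y = f' x y) : Br u v f n = Br u v f' n := by
  unfold Br
  refine Finset.sum_congr rfl fun p hp => ?_
  rw [h]
  have := Finset.HasAntidiagonal.mem_antidiagonal.mp hp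
  exact_mod_cast this

lemma Br_const (u v : ℕ → ℂ) (c : ℂ) (n : ℕ) :
    Br u v (fun _ _ => c) n = c * Br u v (fun _ _ => 1) n := by
  unfold Br
  rw [Finset.mul_sum]
  exact Finset.sum_congr rfl fun p _ => by ring

lemma S_rec (g A₁ A₂ A₃ a b c d : ℂ) (hg : ∀ i : ℕ, 1 + g + i ≠ 0)
    (ha : a = (g - A₁ - A₂ - A₃ + 1) / 2) (hb : b = (g - A₁ + A₂ + A₃ + 1) / 2)
    (hc : c = (g + A₁ - A₂ + A₃ + 1) / 2) (hd : d = (g + A₁ + A₂ - A₃ + 1) / 2)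
    (m : ℕ) (n : ℂ) (hn : n = m + 2) :
    n * (n + 2 * g) * (n + g) * (n + g - 1)
        * Br (U a b g) (U c d g) (fun _ _ => 1) (m + 2)
      - (n + g - 1 / 2) * (n + g - 1)
        * (2 * n ^ 2 + 4 * g * n + g ^ 2 + A₁ ^ 2 - A₂ ^ 2 - A₃ ^ 2 + 1 - 2 * (n + g))
        * Br (U a b g) (U c d g) (fun _ _ => 1) (m + 1)
      + (n + g - A₂ - 1) * (n + g + A₂ - 1) * (n + g - A₃ - 1) * (n + g + A₃ - 1)
        * Br (U a b g) (U c d g) (fun _ _ => 1) m = 0 := by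
  set u := U a b g with hu
  set v := U c d g with hv
  let g1 : ℂ → ℂ → ℂ := fun x y => (n + g - 1) * (n + 2 * g + 2 * y)
  let h1 : ℂ → ℂ → ℂ := fun x y => (n + g - 1) * (n + 2 * g + 2 * x)
  let g2 : ℂ → ℂ → ℂ := fun x y =>
    -((n - 2 + d + a) * (n - 2 + d + b) + (2 * n - 2 + 2 * g) * (y + c))
  let h2 : ℂ → ℂ → ℂ := fun x y =>
    -((n - 2 + b + c) * (n - 2 + b + d) + (2 * n - 2 + 2 * g) * (x + a))
  have e1 := Br_left a b g hg v g1 (m + 1)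
  have e2 := Br_right c d g hg u h1 (m + 1)
  have e3 := Br_left a b g hg v g2 m
  have e4 := Br_right c d g hg u h2 m
  have f1 : Br u v (fun x y => x * (x + g) * g1 x y + y * (y + g) * h1 x y) (m + 2)
      = Br u v (fun _ _ => n * (n + 2 * g) * (n + g) * (n + g - 1)) (m + 2) := by
    refine Br_congr _ _ _ _ _ fun x y h => ?_
    have hy : y = n - x := by rw [hn]; push_cast at h; linear_combination h
    simp only [g1, h1]
    subst hy
    ring
  have f2 : Br u v (fun x y => ((x + a) * (x + b) * g1 (x + 1) y
        + (y + c) * (y + d) * h1 x (y + 1))) (m + 1)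
      = Br u v (fun x y => (n + g - 1 / 2) * (n + g - 1)
        * (2 * n ^ 2 + 4 * g * n + g ^ 2 + A₁ ^ 2 - A₂ ^ 2 - A₃ ^ 2 + 1 - 2 * (n + g))
        + (x * (x + g) * g2 x y + y * (y + g) * h2 x y)) (m + 1) := by
    refine Br_congr _ _ _ _ _ fun x y h => ?_
    have hy : y = n - 1 - x := by rw [hn]; push_cast at h; linear_combination h
    simp only [g1, h1, g2, h2]
    subst hy ha hb hc hd
    ring
  have f3 : Br u v (fun x y => ((x + a) * (x + b) * g2 (x + 1) y
        + (y + c) * (y + d) * h2 x (y + 1))) m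
      = Br u v (fun x y => -((n + g - A₂ - 1) * (n + g + A₂ - 1) * (n + g - A₃ - 1)
          * (n + g + A₃ - 1))) m := by
    refine Br_congr _ _ _ _ _ fun x y h => ?_
    have hy : y = n - 2 - x := by rw [hn]; linear_combination h
    simp only [g2, h2]
    subst hy ha hb hc hd
    ring
  rw [← Br_add, Br_const] at f1
  rw [← Br_add, ← Br_add, ← Br_add, Br_const] at f2
  rw [← Br_add, Br_const] at f3
  linear_combination -f1 + e1 + e2 + f2 + e3 + e4 + f3

lemma C_eq (A₀ A₁ A₂ A₃ : ℂ)
    (hg : ∀ i : ℕ, 1 + -A₀ + i ≠ 0)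
    (ha : ∀ i : ℕ, (-A₀ - A₁ - A₂ - A₃ + 1) / 2 + (i : ℂ) ≠ 0)
    (hb : ∀ i : ℕ, (-A₀ - A₁ + A₂ + A₃ + 1) / 2 + (i : ℂ) ≠ 0)
    (n : ℕ) :
    C A₀ A₁ A₂ A₃ n = poch (1 + -A₀) n / poch (3 / 2 - A₀) n *
      Br (U ((-A₀ - A₁ - A₂ - A₃ + 1) / 2) ((-A₀ - A₁ + A₂ + A₃ + 1) / 2) (-A₀))
        (U ((-A₀ + A₁ - A₂ + A₃ + 1) / 2) ((-A₀ + A₁ + A₂ - A₃ + 1) / 2) (-A₀))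
        (fun _ _ => 1) n := by
  unfold C Br
  rw [← Finset.Nat.sum_antidiagonal_eq_sum_range_succ_mk
    (f := fun p : ℕ × ℕ => poch (-(n : ℂ)) p.1 * poch (A₀ - (n : ℂ)) p.1
          * poch ((-A₀ + A₁ - A₂ + A₃ + 1) / 2) p.1
          * poch ((-A₀ + A₁ + A₂ - A₃ + 1) / 2) p.1 /
        (poch ((A₀ + A₁ - A₂ - A₃ + 1) / 2 - (n : ℂ)) p.1
          * poch ((A₀ + A₁ + A₂ + A₃ + 1) / 2 - (n : ℂ)) p.1
          * poch (1 - A₀) p.1 * (Nat.factorial p.1 : ℂ))),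
    ← Finset.Nat.sum_antidiagonal_swap, Finset.mul_sum, Finset.mul_sum]
  refine Finset.sum_congr rfl fun p hp => ?_
  obtain ⟨j, k⟩ := p
  have hjk : j + k = n := Finset.HasAntidiagonal.mem_antidiagonal.mp hp
  subst hjk
  simp only [Prod.swap, U]
  have p1 := poch_flip 1 j k
  have p2 := poch_flip (1 + -A₀) j k
  have p3 := poch_flip ((-A₀ - A₁ - A₂ - A₃ + 1) / 2) j k
  have p4 := poch_flip ((-A₀ - A₁ + A₂ + A₃ + 1) / 2) j k
  rw [poch_one, poch_one] at p1
  have n3 := poch_ne _ ha (j + k)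
  have n4 := poch_ne _ hb (j + k)
  have q1 : (1 : ℂ) - 1 - ((j + k : ℕ) : ℂ) = -((j + k : ℕ) : ℂ) := by ring
  have q2 : (1 : ℂ) - (1 + -A₀) - ((j + k : ℕ) : ℂ) = A₀ - ((j + k : ℕ) : ℂ) := by ring
  have q3 : (1 : ℂ) - (-A₀ - A₁ - A₂ - A₃ + 1) / 2 - ((j + k : ℕ) : ℂ)
    = (A₀ + A₁ + A₂ + A₃ + 1) / 2 - ((j + k : ℕ) : ℂ) := by ring
  have q4 : (1 : ℂ) - (-A₀ - A₁ + A₂ + A₃ + 1) / 2 - ((j + k : ℕ) : ℂ)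
    = (A₀ + A₁ - A₂ - A₃ + 1) / 2 - ((j + k : ℕ) : ℂ) := by ring
  rw [q1] at p1
  rw [q2] at p2
  rw [q3] at p3
  rw [q4] at p4
  have q5 : 1 - A₀ = 1 + -A₀ := by ring
  rw [q5]
  have m1 : (Nat.factorial (j + k) : ℂ) ≠ 0 := by exact_mod_cast Nat.factorial_ne_zero _
  have m2 : (Nat.factorial j : ℂ) ≠ 0 := by exact_mod_cast Nat.factorial_ne_zero _
  have m3 : (Nat.factorial k : ℂ) ≠ 0 := by exact_mod_cast Nat.factorial_ne_zero _
  have m4 := poch_ne _ hg j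
  have m5 := poch_ne _ hg k
  have m6 := poch_ne _ hg (j + k)
  have r3 : poch ((A₀ + A₁ + A₂ + A₃ + 1) / 2 - ((j + k : ℕ) : ℂ)) k ≠ 0 := by
    intro h; rw [h] at p3; exact n3 (by rw [p3]; ring)
  have r4 : poch ((A₀ + A₁ - A₂ - A₃ + 1) / 2 - ((j + k : ℕ) : ℂ)) k ≠ 0 := by
    intro h; rw [h] at p4; exact n4 (by rw [p4]; ring)
  have r1 : poch (-((j + k : ℕ) : ℂ)) k ≠ 0 := by
    intro h; rw [h] at p1; exact m1 (by rw [p1]; ring)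
  rw [p1, p2, p3, p4]
  generalize poch (-((j + k : ℕ) : ℂ)) k = X1 at *
  generalize poch (A₀ - ((j + k : ℕ) : ℂ)) k = X2 at *
  generalize poch ((A₀ + A₁ + A₂ + A₃ + 1) / 2 - ((j + k : ℕ) : ℂ)) k = X3 at *
  generalize poch ((A₀ + A₁ - A₂ - A₃ + 1) / 2 - ((j + k : ℕ) : ℂ)) k = X4 at *
  generalize poch (3 / 2 - A₀) (j + k) = X5 at *
  have hs : ((-1 : ℂ) ^ k) ≠ 0 := pow_ne_zero _ (by norm_num)
  generalize (-1 : ℂ) ^ k = s at *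
  by_cases h5 : X5 = 0
  · simp [h5]
  field_simp

/-- The explicit `₄F₃(·;1)`-coefficients solve the recurrence `Rc₀(A)` with
`C₀ = 1` and the convention `C₋₁ = 0`. -/
theorem stmt_15 (A₀ A₁ A₂ A₃ : ℂ)
    (hA0 : ∀ m : ℕ, 2 ≤ m → 2 * A₀ ≠ (m : ℂ))
    (hodd1 : ∀ m : ℤ, Odd m → A₀ + A₁ - A₂ - A₃ ≠ (m : ℂ))
    (hodd2 : ∀ m : ℤ, Odd m → A₀ + A₁ + A₂ + A₃ ≠ (m : ℂ)) :
    C A₀ A₁ A₂ A₃ 0 = 1 ∧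
    ∀ n : ℕ, 1 ≤ n →
      (n : ℂ) * ((n : ℂ) - 2 * A₀) * (2 * (n : ℂ) - 2 * A₀ - 1) * (2 * (n : ℂ) - 2 * A₀ + 1)
          * C A₀ A₁ A₂ A₃ n
        = (2 * ((n : ℂ) - A₀) - 1) ^ 2
            * (2 * (n : ℂ) ^ 2 - 4 * A₀ * (n : ℂ) + A₀ ^ 2 + A₁ ^ 2 - A₂ ^ 2 - A₃ ^ 2 + 1
                - 2 * ((n : ℂ) - A₀)) * C A₀ A₁ A₂ A₃ (n - 1)
          - 4 * ((n : ℂ) - A₀ - A₂ - 1) * ((n : ℂ) - A₀ + A₂ - 1)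
              * ((n : ℂ) - A₀ - A₃ - 1) * ((n : ℂ) - A₀ + A₃ - 1)
              * (if n = 1 then 0 else C A₀ A₁ A₂ A₃ (n - 2)) := by
  have hg : ∀ i : ℕ, 1 + -A₀ + i ≠ 0 := by
    intro i h
    refine hA0 (2 * (i + 1)) (by omega) ?_
    push_cast; linear_combination (-2) * h
  have hh : ∀ i : ℕ, 3 / 2 - A₀ + i ≠ 0 := by
    intro i h
    refine hA0 (2 * i + 3) (by omega) ?_
    push_cast; linear_combination (-2) * h
  have ha : ∀ i : ℕ, (-A₀ - A₁ - A₂ - A₃ + 1) / 2 + (i : ℂ) ≠ 0 := by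
    intro i h
    refine hodd2 (2 * i + 1) ⟨i, rfl⟩ ?_
    push_cast; linear_combination (-2) * h
  have hb : ∀ i : ℕ, (-A₀ - A₁ + A₂ + A₃ + 1) / 2 + (i : ℂ) ≠ 0 := by
    intro i h
    refine hodd1 (2 * i + 1) ⟨i, rfl⟩ ?_
    push_cast; linear_combination (-2) * h
  have hC := C_eq A₀ A₁ A₂ A₃ hg ha hb
  refine ⟨by simp [C, poch], ?_⟩
  intro n hn
  obtain rfl | ⟨m, rfl⟩ : n = 1 ∨ ∃ m, n = m + 2 := by
    rcases n with _ | _ | m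
    · omega
    · left; rfl
    · right; exact ⟨m, rfl⟩
  · have h1 := hg 0
    have h2 := hh 0
    simp only [Nat.cast_zero, add_zero] at h1 h2
    rw [hC, hC]
    simp only [Br, U, Finset.Nat.antidiagonal_succ, Finset.Nat.antidiagonal_zero]
    simp [poch]
    have h3 : 3 - 2 * A₀ ≠ 0 := fun h => h2 (by linear_combination h / 2)
    field_simp
    ring
  · have key := S_rec (-A₀) A₁ A₂ A₃ _ _ _ _ hg rfl rfl rfl rfl m ((m : ℂ) + 2) rfl
    rw [if_neg (by omega), show m + 2 - 1 = m + 1 by omega, show m + 2 - 2 = m by omega,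
      hC, hC, hC]
    generalize Br _ _ _ (m + 2) = S2 at *
    generalize Br _ _ _ (m + 1) = S1 at *
    generalize Br _ _ _ m = S0 at *
    rw [poch_succ _ (m + 1), poch_succ _ m, poch_succ _ (m + 1), poch_succ _ m]
    have h0 := poch_ne _ hh m
    have h1 := hh m
    have h2 := hh (m + 1)
    generalize poch (3 / 2 - A₀) m = Y at *
    generalize poch (1 + -A₀) m = X at *
    push_cast at *
    generalize (m : ℂ) = t at *
    have E1 : X * (1 + -A₀ + t) / (Y * (3 / 2 - A₀ + t))
        = X / Y * ((1 + -A₀ + t) / (3 / 2 - A₀ + t)) := by field_simp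
    have E2 : X * (1 + -A₀ + t) * (1 + -A₀ + (t + 1)) /
          (Y * (3 / 2 - A₀ + t) * (3 / 2 - A₀ + (t + 1)))
        = X / Y * ((1 + -A₀ + t) / (3 / 2 - A₀ + t))
          * ((1 + -A₀ + (t + 1)) / (3 / 2 - A₀ + (t + 1))) := by field_simp
    rw [E1, E2]
    obtain ⟨p, hp⟩ : ∃ p, p = (1 + -A₀ + t) / (3 / 2 - A₀ + t) := ⟨_, rfl⟩
    obtain ⟨q, hq⟩ : ∃ q, q = (1 + -A₀ + (t + 1)) / (3 / 2 - A₀ + (t + 1)) := ⟨_, rfl⟩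
    rw [← hp, ← hq]
    rw [eq_div_iff h1] at hp
    rw [eq_div_iff h2] at hq
    generalize X / Y = w at *
    linear_combination (4 * w) * key
      + (4 * (t + 2) * (t + 2 - 2 * A₀) * (t + 2 - A₀ - 1 / 2) * w * p * S2) * hq
      + (4 * (t + 2) * (t + 2 - 2 * A₀) * (t + 2 - A₀) * w * S2
        - 4 * (t + 2 - A₀ - 1 / 2) * w * S1 *
          (2 * (t + 2) ^ 2 - 4 * A₀ * (t + 2) + A₀ ^ 2 + A₁ ^ 2 - A₂ ^ 2 - A₃ ^ 2 + 1
                - 2 * ((t + 2) - A₀))) * hp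


end Stmt15
end

section
/- Let α, β, γ, a, b, c ∈ ℂ with a, b ∉ ℤ and with γ and c not nonpositive integers. Then for every n ∈ ℕ: Σ_{k=0}^{n} [(α)_k(β)_k / ((γ)_k·k!)] · [(a)_{n−k}(b)_{n−k} / ((c)_{n−k}·(n−k)!)] = [(a)ₙ(b)ₙ / ((c)ₙ·n!)] · Σ_{k=0}^{n} (−n)_k(1−c−n)_k(α)_k(β)_k / ((1−a−n)_k(1−b−n)_k(γ)_k·k!). Consequently, for |x| < 1, ₂F₁(α, β; γ; x)·₂F₁(a, b; c; x) = Σ_{n≥0} xⁿ·[(a)ₙ(b)ₙ / ((c)ₙ·n!)]·₄F₃(−n, 1−c−n, α, β; 1−a−n, 1−b−n, γ; 1). -/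
namespace Stmt16

/-- The Pochhammer symbol `(a)ₖ = a(a+1)⋯(a+k−1)`. -/
noncomputable def poch (a : ℂ) (k : ℕ) : ℂ := ∏ i ∈ Finset.range k, (a + (i : ℂ))

lemma poch_succ (a : ℂ) (k : ℕ) : poch a (k + 1) = poch a k * (a + k) := by
  simp [poch, Finset.prod_range_succ]

lemma poch_ne {a : ℂ} (h : ∀ m : ℕ, a ≠ -(m : ℂ)) (k : ℕ) : poch a k ≠ 0 := by
  rw [poch, Finset.prod_ne_zero_iff]
  intro i _ h0
  exact h i (eq_neg_of_add_eq_zero_left h0)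

lemma poch_one (k : ℕ) : poch 1 k = (Nat.factorial k : ℂ) := by
  induction k with
  | zero => simp [poch]
  | succ k ih => rw [poch_succ, ih, Nat.factorial_succ]; push_cast; ring

lemma poch_split (z : ℂ) (m k : ℕ) :
    poch z (m + k) = poch z m * ((-1) ^ k * poch (1 - z - ((m + k : ℕ) : ℂ)) k) := by
  have h : ((-1 : ℂ)) ^ k = ∏ i ∈ Finset.range k, (-1 : ℂ) := by simp
  unfold poch
  rw [Finset.prod_range_add, h, ← Finset.prod_mul_distrib]
  congr 1
  rw [← Finset.prod_range_reflect]
  refine Finset.prod_congr rfl fun i hi => ?_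
  have hi' : i + 1 ≤ k := Finset.mem_range.mp hi
  have e : k - 1 - i = k - (i + 1) := by omega
  rw [e]
  push_cast [Nat.cast_sub hi']
  ring

lemma summ (α β γ x : ℂ) (hx : ‖x‖ < 1) :
    Summable fun n : ℕ =>
      ‖poch α n * poch β n / (poch γ n * (Nat.factorial n : ℂ)) * x ^ n‖ := by
  obtain ⟨r, hr, hr1⟩ := exists_between hx
  have t1 := tendsto_add_mul_div_add_mul_atTop_nhds (𝕜 := ℂ) α 1 1 (d := 1) one_ne_zero
  have t2 := tendsto_add_mul_div_add_mul_atTop_nhds (𝕜 := ℂ) β γ 1 (d := 1) one_ne_zero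
  have t := ((t1.mul t2).mul_const x).norm
  simp only [div_one, one_mul] at t
  have ev := t.eventually (gt_mem_nhds hr)
  refine summable_of_ratio_norm_eventually_le hr1 ?_
  filter_upwards [ev] with n hn
  rw [norm_norm, norm_norm]
  have : poch α (n + 1) * poch β (n + 1) / (poch γ (n + 1) * (Nat.factorial (n + 1) : ℂ))
      * x ^ (n + 1) = ((α + n) / (1 + n) * ((β + n) / (γ + n)) * x) *
      (poch α n * poch β n / (poch γ n * (Nat.factorial n : ℂ)) * x ^ n) := by
    rw [poch_succ, poch_succ, poch_succ, Nat.factorial_succ, pow_succ]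
    push_cast
    simp only [div_eq_mul_inv, mul_inv]
    rw [add_comm (n : ℂ) 1]
    ring
  rw [this, norm_mul]
  exact mul_le_mul_of_nonneg_right hn.le (norm_nonneg _)

lemma ne_refl {a : ℂ} (ha : ∀ m : ℤ, a ≠ (m : ℂ)) (n : ℕ) (m : ℕ) :
    1 - a - (n : ℂ) ≠ -(m : ℂ) := by
  intro h
  apply ha (1 - n + m)
  push_cast
  linear_combination -h

lemma coeff (α β γ a b c : ℂ)
    (ha : ∀ m : ℤ, a ≠ (m : ℂ)) (hb : ∀ m : ℤ, b ≠ (m : ℂ))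
    (hc : ∀ m : ℕ, c ≠ -(m : ℂ)) (n : ℕ) :
      ∑ k ∈ Finset.range (n + 1),
          (poch α k * poch β k / (poch γ k * (Nat.factorial k : ℂ)))
            * (poch a (n - k) * poch b (n - k)
                / (poch c (n - k) * (Nat.factorial (n - k) : ℂ)))
        = (poch a n * poch b n / (poch c n * (Nat.factorial n : ℂ)))
            * ∑ k ∈ Finset.range (n + 1),
                poch (-(n : ℂ)) k * poch (1 - c - (n : ℂ)) k * poch α k * poch β k /
                  (poch (1 - a - (n : ℂ)) k * poch (1 - b - (n : ℂ)) k * poch γ k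
                    * (Nat.factorial k : ℂ)) := by
  rw [Finset.mul_sum]
  refine Finset.sum_congr rfl fun k hk => ?_
  obtain ⟨m, rfl⟩ : ∃ m, n = m + k :=
    ⟨n - k, by have := Finset.mem_range.mp hk; omega⟩
  rw [Nat.add_sub_cancel]
  have hA := poch_ne (ne_refl ha (m + k)) k
  have hB := poch_ne (ne_refl hb (m + k)) k
  have sA := poch_split a m k
  have sB := poch_split b m k
  have sC := poch_split c m k
  have sF := poch_split 1 m k
  have hC := poch_ne hc (m + k)
  have hF : poch 1 (m + k) ≠ 0 := by
    rw [poch_one]; exact_mod_cast Nat.factorial_ne_zero _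
  rw [sub_self, zero_sub] at sF
  rw [sC] at hC
  rw [sF] at hF
  rw [← poch_one (m + k), ← poch_one m, sA, sB, sC, sF]
  generalize poch (1 - a - ((m + k : ℕ) : ℂ)) k = A at *
  generalize poch (1 - b - ((m + k : ℕ) : ℂ)) k = B at *
  generalize poch (1 - c - ((m + k : ℕ) : ℂ)) k = C at *
  generalize poch (-((m + k : ℕ) : ℂ)) k = F at *
  have h1 := left_ne_zero_of_mul hC
  have h2 := right_ne_zero_of_mul (right_ne_zero_of_mul hC)
  have h3 := left_ne_zero_of_mul hF
  have h4 := right_ne_zero_of_mul (right_ne_zero_of_mul hF)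
  have hs : ((-1 : ℂ)) ^ k ≠ 0 := left_ne_zero_of_mul (right_ne_zero_of_mul hF)
  generalize ((-1 : ℂ)) ^ k = s at *
  rw [mul_assoc (A * B), mul_assoc (F * C), mul_div_mul_comm (F * C)]
  rw [mul_comm (F * C / (A * B)), ← mul_assoc, mul_comm (_ / _) (poch α k * poch β k / _),
    mul_assoc]
  congr 1
  field_simp

/-- The Cauchy-product coefficients of two Gauss hypergeometric series are special
values `₄F₃(·;1)`, and consequently
`₂F₁(α,β;γ;x)·₂F₁(a,b;c;x) = Σₙ xⁿ (a)ₙ(b)ₙ/((c)ₙ n!) ₄F₃(−n,1−c−n,α,β;1−a−n,1−b−n,γ;1)`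
for `|x| < 1`. -/
theorem stmt_16 (α β γ a b c : ℂ)
    (ha : ∀ m : ℤ, a ≠ (m : ℂ)) (hb : ∀ m : ℤ, b ≠ (m : ℂ))
    (hγ : ∀ m : ℕ, γ ≠ -(m : ℂ)) (hc : ∀ m : ℕ, c ≠ -(m : ℂ)) :
    (∀ n : ℕ,
      ∑ k ∈ Finset.range (n + 1),
          (poch α k * poch β k / (poch γ k * (Nat.factorial k : ℂ)))
            * (poch a (n - k) * poch b (n - k)
                / (poch c (n - k) * (Nat.factorial (n - k) : ℂ)))
        = (poch a n * poch b n / (poch c n * (Nat.factorial n : ℂ)))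
            * ∑ k ∈ Finset.range (n + 1),
                poch (-(n : ℂ)) k * poch (1 - c - (n : ℂ)) k * poch α k * poch β k /
                  (poch (1 - a - (n : ℂ)) k * poch (1 - b - (n : ℂ)) k * poch γ k
                    * (Nat.factorial k : ℂ)))
    ∧ ∀ x : ℂ, ‖x‖ < 1 →
        (∑' n : ℕ, poch α n * poch β n / (poch γ n * (Nat.factorial n : ℂ)) * x ^ n)
          * (∑' n : ℕ, poch a n * poch b n / (poch c n * (Nat.factorial n : ℂ)) * x ^ n)
          = ∑' n : ℕ, x ^ n * (poch a n * poch b n / (poch c n * (Nat.factorial n : ℂ)))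
              * ∑ k ∈ Finset.range (n + 1),
                  poch (-(n : ℂ)) k * poch (1 - c - (n : ℂ)) k * poch α k * poch β k /
                    (poch (1 - a - (n : ℂ)) k * poch (1 - b - (n : ℂ)) k * poch γ k
                      * (Nat.factorial k : ℂ)) := by
  refine ⟨coeff α β γ a b c ha hb hc, fun x hx => ?_⟩
  rw [tsum_mul_tsum_eq_tsum_sum_range_of_summable_norm (summ α β γ x hx) (summ a b c x hx)]
  refine tsum_congr fun n => ?_
  rw [mul_assoc, ← coeff α β γ a b c ha hb hc n, Finset.mul_sum]
  refine Finset.sum_congr rfl fun k hk => ?_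
  have : x ^ n = x ^ k * x ^ (n - k) := by
    rw [← pow_add]; congr 1; have := Finset.mem_range.mp hk; omega
  rw [this]
  ring

end Stmt16
end

section
/- Let A = (A₀, A₁, A₂, A₃) ∈ ℂ⁴ and assume: A₂ is not a negative integer, A₂+A₃ and A₂−A₃ are not negative integers, and neither −A₀+A₁−A₂−A₃ nor A₀+A₁−A₂+A₃ is an odd integer (so that all Pochhammer denominators below are nonzero). Define, for n ∈ ℕ, Cₙ := [(1/2+A₂)ₙ(A₋₋₊₋)ₙ(A₊₋₊₊)ₙ / (n!·(1+A₂−A₃)ₙ(1+A₂+A₃)ₙ)] · Σ_{k=0}^{n} (−n)_k(−A₂−n)_k(A₋₊₊₊)_k(A₊₊₊₋)_k / ((A₋₊₋₋−n)_k(A₊₊₋₊−n)_k(1+A₂)_k·k!). Then C₀ = 1 and, with C₋₁ := 0, for every integer n ≥ 1: 4n(n+2A₂)(n+A₂+A₃)(n+A₂−A₃)·Cₙ = (2(n+A₂)−1)²·(2n² + 4A₂n − A₀² + A₁² + A₂² − A₃² + 1 − 2(n+A₂))·C_{n−1} − (2n+2A₂−1)(2n+2A₂−3)(n+A₀+A₂−1)(n−A₀+A₂−1)·C_{n−2}.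 (These Cₙ are the coefficients of the local solution f⁽∞,+A₂⁾(A; x) = x^{−(1−A₀+A₂)}Σₙ Cₙx^{−n} of Z(A) at x = ∞ with exponent 1−A₀+A₂.) -/
namespace Stmt17

/-- The Pochhammer symbol `(a)ₖ = a(a+1)⋯(a+k−1)`. -/
noncomputable def poch (a : ℂ) (k : ℕ) : ℂ := ∏ i ∈ Finset.range k, (a + (i : ℂ))

/-- The coefficients of the local solution `f⁽∞,+A₂⁾(A;x)` of `Z(A)` at `x = ∞`:
`Cₙ = (1/2+A₂)ₙ(A₋₋₊₋)ₙ(A₊₋₊₊)ₙ/(n!(1+A₂−A₃)ₙ(1+A₂+A₃)ₙ) ·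
₄F₃(−n, −A₂−n, A₋₊₊₊, A₊₊₊₋; A₋₊₋₋−n, A₊₊₋₊−n, 1+A₂; 1)`. -/
noncomputable def C (A₀ A₁ A₂ A₃ : ℂ) (n : ℕ) : ℂ :=
  poch (1 / 2 + A₂) n * poch ((-A₀ - A₁ + A₂ - A₃ + 1) / 2) n
      * poch ((A₀ - A₁ + A₂ + A₃ + 1) / 2) n /
      ((Nat.factorial n : ℂ) * poch (1 + A₂ - A₃) n * poch (1 + A₂ + A₃) n) *
    ∑ k ∈ Finset.range (n + 1),
      poch (-(n : ℂ)) k * poch (-A₂ - (n : ℂ)) k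
          * poch ((-A₀ + A₁ + A₂ + A₃ + 1) / 2) k * poch ((A₀ + A₁ + A₂ - A₃ + 1) / 2) k /
        (poch ((-A₀ + A₁ - A₂ - A₃ + 1) / 2 - (n : ℂ)) k
          * poch ((A₀ + A₁ - A₂ + A₃ + 1) / 2 - (n : ℂ)) k
          * poch (1 + A₂) k * (Nat.factorial k : ℂ))

/-- coefficient -/
noncomputable def al (A₂ n : ℂ) : ℂ := 2 * n * (n + 2 * A₂) * (n + A₂) * (n - 1 + A₂)
/-- coefficient -/
noncomputable def be (A₀ A₁ A₂ A₃ n : ℂ) : ℂ := (2 * (n + A₂) - 1) * (2 * n ^ 2 + 4 * A₂ * n - A₀ ^ 2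
  + A₁ ^ 2 + A₂ ^ 2 - A₃ ^ 2 + 1 - 2 * (n + A₂)) * (n - 1 + A₂)
/-- coefficient -/
noncomputable def de (A₀ A₂ A₃ n : ℂ) : ℂ :=
  2 * (n - 1 + A₂ + A₀) * (n - 1 + A₂ - A₀) * (n - 1 + A₂ + A₃) * (n - 1 + A₂ - A₃)
/-- certificate -/
noncomputable def yy (A₀ A₁ A₂ A₃ n t : ℂ) : ℂ :=
  -2 * (n + 2 * A₂) * (n - 1 + A₂) * (1 - (-A₀ - A₁ + A₂ - A₃ + 1) / 2) * (1 - (A₀ - A₁ + A₂ + A₃ + 1) / 2)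
  + (2 * ((n - 1 + A₂ + A₀) * (n - 1 + A₂ + A₃) * (1 + A₂ - (-A₀ - A₁ + A₂ - A₃ + 1) / 2)
      + (n + 2 * A₂) * (n - 1 + A₂) * (1 - (A₀ - A₁ + A₂ + A₃ + 1) / 2))
    - 2 * ((n - 1 + A₂) * A₁ + A₀ * A₃) * (1 - (-A₀ - A₁ + A₂ - A₃ + 1) / 2)) * t
  + 2 * ((n - 1 + A₂) * A₁ + A₀ * A₃) * t ^ 2

/-- main telescoping step -/
lemma step (A₀ A₁ A₂ A₃ : ℂ) (K j u u' v0 v1 v2 : ℂ)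
    (a b c d n α β δ : ℂ) (y : ℂ → ℂ)
    (ha : a = (-A₀ + A₁ + A₂ + A₃ + 1) / 2) (hb : b = (A₀ + A₁ + A₂ - A₃ + 1) / 2)
    (hc : c = (-A₀ - A₁ + A₂ - A₃ + 1) / 2) (hd : d = (A₀ - A₁ + A₂ + A₃ + 1) / 2)
    (hn : n = K + j + 2)
    (hα : α = al A₂ n) (hβ : β = be A₀ A₁ A₂ A₃ n) (hδ : δ = de A₀ A₂ A₃ n)
    (hy : ∀ t, y t = yy A₀ A₁ A₂ A₃ n t)
    (hu : (1 + A₂ + K) * (K + 1) * u' = (a + K) * (b + K) * u)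
    (hv1 : (1 + A₂ + j) * (j + 1) * v1 = (c + j) * (d + j) * v0)
    (hv2 : (1 + A₂ + (j + 1)) * (j + 1 + 1) * v2 = (c + (j + 1)) * (d + (j + 1)) * v1)
    (h1 : 1 + A₂ + j ≠ 0) (h2 : j + 1 ≠ 0) (h3 : 1 + A₂ + (j + 1) ≠ 0) (h4 : j + 1 + 1 ≠ 0) :
    α * (u * v2) - β * (u * v1) + δ * (u * v0)
      = (K + 1) * (1 + A₂ + K) * u' * v0 * y (j + 1) / ((j + 1) * (1 + A₂ + j))
        - K * (A₂ + K) * u * v1 * y (j + 2) / ((j + 1 + 1) * (1 + A₂ + (j + 1))) := by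
  have e1 : v1 = (c + j) * (d + j) * v0 / ((1 + A₂ + j) * (j + 1)) := by
    rw [eq_div_iff (mul_ne_zero h1 h2)]; linear_combination hv1
  have e2 : v2 = (c + (j + 1)) * (d + (j + 1)) * v1 / ((1 + A₂ + (j + 1)) * (j + 1 + 1)) := by
    rw [eq_div_iff (mul_ne_zero h3 h4)]; linear_combination hv2
  have e3 : (K + 1) * (1 + A₂ + K) * u' = (a + K) * (b + K) * u := by linear_combination hu
  have key : α * ((c + (j + 1)) * (d + (j + 1)) * ((c + j) * (d + j)))
      - β * ((c + j) * (d + j) * ((1 + A₂ + (j + 1)) * (j + 1 + 1)))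
      + δ * ((1 + A₂ + j) * (j + 1) * ((1 + A₂ + (j + 1)) * (j + 1 + 1)))
      = (a + K) * (b + K) * y (j + 1) * ((1 + A₂ + (j + 1)) * (j + 1 + 1))
        - K * (A₂ + K) * ((c + j) * (d + j)) * y (j + 2) := by
    rw [hy, hy, hα, hβ, hδ, hn, ha, hb, hc, hd]
    unfold al be de yy
    ring
  rw [e3, e2, e1]
  field_simp
  linear_combination u * v0 * key

lemma core (A₀ A₁ A₂ A₃ : ℂ) (u v : ℕ → ℂ) (a b c d : ℂ)
    (ha : a = (-A₀ + A₁ + A₂ + A₃ + 1) / 2) (hb : b = (A₀ + A₁ + A₂ - A₃ + 1) / 2)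
    (hc : c = (-A₀ - A₁ + A₂ - A₃ + 1) / 2) (hd : d = (A₀ - A₁ + A₂ + A₃ + 1) / 2)
    (h : ∀ k : ℕ, 1 + A₂ + (k : ℂ) ≠ 0)
    (hu : ∀ k : ℕ, (1 + A₂ + (k : ℂ)) * ((k : ℂ) + 1) * u (k + 1) = (a + k) * (b + k) * u k)
    (hv : ∀ k : ℕ, (1 + A₂ + (k : ℂ)) * ((k : ℂ) + 1) * v (k + 1) = (c + k) * (d + k) * v k)
    (N : ℕ) :
    al A₂ ((N : ℂ) + 2) * ∑ k ∈ Finset.range (N + 3), u k * v (N + 2 - k)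
      - be A₀ A₁ A₂ A₃ ((N : ℂ) + 2) * ∑ k ∈ Finset.range (N + 2), u k * v (N + 1 - k)
      + de A₀ A₂ A₃ ((N : ℂ) + 2) * ∑ k ∈ Finset.range (N + 1), u k * v (N - k) = 0 := by
  have hs : ∀ k : ℕ, (k : ℂ) + 1 ≠ 0 := fun k => Nat.cast_add_one_ne_zero k
  have hp : ∀ K : ℕ, K ≤ N + 1 →
      ∑ k ∈ Finset.range K, (al A₂ ((N : ℂ) + 2) * (u k * v (N + 2 - k))
        - be A₀ A₁ A₂ A₃ ((N : ℂ) + 2) * (u k * v (N + 1 - k))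
        + de A₀ A₂ A₃ ((N : ℂ) + 2) * (u k * v (N - k)))
      = K * (A₂ + K) * u K * v (N + 1 - K) * yy A₀ A₁ A₂ A₃ ((N : ℂ) + 2) ((N : ℂ) + 2 - K)
        / (((N : ℂ) + 2 - K) * (A₂ + ((N : ℂ) + 2 - K))) := by
    intro K
    induction K with
    | zero => intro _; simp
    | succ K ih =>
      intro hK
      obtain ⟨j, rfl⟩ : ∃ j, N = K + j := ⟨N - K, by omega⟩
      rw [Finset.sum_range_succ, ih (by omega)]
      rw [show K + j + 2 - K = j + 1 + 1 by omega, show K + j + 1 - K = j + 1 by omega,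
        show K + j - K = j by omega, show K + j + 1 - (K + 1) = j by omega]
      have hv2 := hv (j + 1)
      have h3 := h (j + 1)
      have h4 := hs (j + 1)
      push_cast at hv2 h3 h4 ⊢
      have := step A₀ A₁ A₂ A₃ K j (u K) (u (K + 1)) (v j) (v (j + 1)) (v (j + 1 + 1)) a b c d
        ((K : ℂ) + j + 2) _ _ _ _ ha hb hc hd rfl rfl rfl rfl (fun t => rfl) (hu K) (hv j) hv2
        (h j) (hs j) h3 h4
      rw [this]
      rw [show (K : ℂ) + j + 2 - (K + 1) = j + 1 by ring, show (K : ℂ) + j + 2 - K = j + 2 by ring,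
        show A₂ + ((j : ℂ) + 2) = 1 + A₂ + (j + 1) by ring,
        show A₂ + ((j : ℂ) + 1) = 1 + A₂ + j by ring,
        show A₂ + ((K : ℂ) + 1) = 1 + A₂ + K by ring,
        show (j : ℂ) + 1 + 1 = j + 2 by ring]
      ring
  have hN := hp (N + 1) le_rfl
  rw [Finset.sum_add_distrib, Finset.sum_sub_distrib, ← Finset.mul_sum, ← Finset.mul_sum,
    ← Finset.mul_sum] at hN
  rw [Finset.sum_range_succ _ (N + 2), Finset.sum_range_succ _ (N + 1),
    Finset.sum_range_succ _ (N + 1)]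
  rw [show N + 2 - (N + 2) = 0 by omega, show N + 2 - (N + 1) = 1 by omega,
    show N + 1 - (N + 1) = 0 by omega]
  rw [show N + 1 - (N + 1) = 0 by omega] at hN
  have hu1 := hu (N + 1)
  have hv0 := hv 0
  have h0 := h 0
  push_cast at hN hu1 hv0 h0
  rw [show (N : ℂ) + 2 - (N + 1) = 1 by ring] at hN
  have e0 : A₂ + 1 ≠ 0 := by intro hh; apply h0; linear_combination hh
  have hN2 := hN
  rw [eq_div_iff (by simpa using e0)] at hN2
  apply mul_left_cancel₀ e0
  simp only [zero_add, add_zero] at hv0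
  have fin : (A₂ + 1) * (al A₂ ((N : ℂ) + 2) * (u (N + 1) * v 1 + u (N + 2) * v 0)
      - be A₀ A₁ A₂ A₃ ((N : ℂ) + 2) * (u (N + 1) * v 0))
      + (N + 1) * (A₂ + (N + 1)) * u (N + 1) * v 0 * yy A₀ A₁ A₂ A₃ ((N : ℂ) + 2) 1 = 0 := by
    rw [show N + 1 + 1 = N + 2 by omega] at hu1
    have t1 : (A₂ + 1) * v 1 = c * d * v 0 := by linear_combination hv0
    have t2 : al A₂ ((N : ℂ) + 2) * u (N + 2)
        = 2 * ((N : ℂ) + 2 + 2 * A₂) * ((N : ℂ) + 1 + A₂) * ((a + (N + 1)) * (b + (N + 1))) * u (N + 1) := by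
      unfold al
      linear_combination 2 * ((N : ℂ) + 2 + 2 * A₂) * ((N : ℂ) + 1 + A₂) * hu1
    have key : al A₂ ((N : ℂ) + 2) * (c * d)
        + (A₂ + 1) * (2 * ((N : ℂ) + 2 + 2 * A₂) * ((N : ℂ) + 1 + A₂) * ((a + (N + 1)) * (b + (N + 1))))
        - (A₂ + 1) * be A₀ A₁ A₂ A₃ ((N : ℂ) + 2)
        + (N + 1) * (A₂ + (N + 1)) * yy A₀ A₁ A₂ A₃ ((N : ℂ) + 2) 1 = 0 := by
      rw [ha, hb, hc, hd]
      unfold al be yy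
      ring
    linear_combination al A₂ ((N : ℂ) + 2) * u (N + 1) * t1 + (A₂ + 1) * v 0 * t2
      + u (N + 1) * v 0 * key
  linear_combination fin + hN2

lemma poch_succ (x : ℂ) (k : ℕ) : poch x (k + 1) = poch x k * (x + k) := by
  unfold poch; rw [Finset.prod_range_succ]

lemma poch_zero (x : ℂ) : poch x 0 = 1 := by simp [poch]

lemma poch_ne (x : ℂ) (h : ∀ k : ℕ, x + (k : ℂ) ≠ 0) (k : ℕ) : poch x k ≠ 0 := by
  unfold poch; exact Finset.prod_ne_zero_iff.2 fun i _ => h i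

lemma poch_one (k : ℕ) : poch 1 k = (k.factorial : ℂ) := by
  induction k with
  | zero => simp [poch]
  | succ k ih => rw [poch_succ, ih, Nat.factorial_succ]; push_cast; ring

lemma poch_refl (x y : ℂ) (n k : ℕ) (hk : k ≤ n) (hy : y = 1 - x - n) :
    poch x n = (-1) ^ k * poch y k * poch x (n - k) := by
  subst hy
  induction k with
  | zero => simp [poch]
  | succ k ih =>
    rw [ih (by omega), poch_succ, show n - k = (n - (k + 1)) + 1 by omega, poch_succ,
      Nat.cast_sub hk]
    push_cast
    ring

/-- hypergeometric coefficient -/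
noncomputable def hy (a b g : ℂ) (k : ℕ) : ℂ := poch a k * poch b k / (poch g k * (k.factorial : ℂ))

lemma hy_rec (a b g : ℂ) (h : ∀ k : ℕ, g + (k : ℂ) ≠ 0) (k : ℕ) :
    (g + (k : ℂ)) * ((k : ℂ) + 1) * hy a b g (k + 1) = (a + k) * (b + k) * hy a b g k := by
  unfold hy
  have h1 := poch_ne g h k
  have h2 := h k
  have h3 : (k : ℂ) + 1 ≠ 0 := Nat.cast_add_one_ne_zero k
  have h4 : (k.factorial : ℂ) ≠ 0 := by exact_mod_cast k.factorial_ne_zero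
  rw [poch_succ, poch_succ, poch_succ, Nat.factorial_succ]
  push_cast
  field_simp

/-- prefactor -/
noncomputable def rr (A₂ A₃ : ℂ) (n : ℕ) : ℂ :=
  poch (1 / 2 + A₂) n * poch (1 + A₂) n / (poch (1 + A₂ - A₃) n * poch (1 + A₂ + A₃) n)

lemma C_eq (A₀ A₁ A₂ A₃ : ℂ)
    (g1 : ∀ k : ℕ, 1 + A₂ + (k : ℂ) ≠ 0)
    (h4 : ∀ m : ℤ, Odd m → -A₀ + A₁ - A₂ - A₃ ≠ (m : ℂ))
    (h5 : ∀ m : ℤ, Odd m → A₀ + A₁ - A₂ + A₃ ≠ (m : ℂ)) (n : ℕ) :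
    C A₀ A₁ A₂ A₃ n = rr A₂ A₃ n * ∑ k ∈ Finset.range (n + 1),
      hy ((-A₀ + A₁ + A₂ + A₃ + 1) / 2) ((A₀ + A₁ + A₂ - A₃ + 1) / 2) (1 + A₂) k *
      hy ((-A₀ - A₁ + A₂ - A₃ + 1) / 2) ((A₀ - A₁ + A₂ + A₃ + 1) / 2) (1 + A₂) (n - k) := by
  unfold C
  rw [Finset.mul_sum, Finset.mul_sum]
  refine Finset.sum_congr rfl fun k hk => ?_
  have hk : k ≤ n := by simpa [Nat.lt_succ_iff] using hk
  have n1 : poch ((-A₀ + A₁ - A₂ - A₃ + 1) / 2 - (n : ℂ)) k ≠ 0 := by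
    apply poch_ne
    intro i hi
    apply h4 (2 * (n - i) - 1) ⟨n - i - 1, by ring⟩
    push_cast
    linear_combination 2 * hi
  have n2 : poch ((A₀ + A₁ - A₂ + A₃ + 1) / 2 - (n : ℂ)) k ≠ 0 := by
    apply poch_ne
    intro i hi
    apply h5 (2 * (n - i) - 1) ⟨n - i - 1, by ring⟩
    push_cast
    linear_combination 2 * hi
  have r1 := poch_refl ((-A₀ - A₁ + A₂ - A₃ + 1) / 2) ((A₀ + A₁ - A₂ + A₃ + 1) / 2 - (n : ℂ)) n k hk
    (by ring)
  have r2 := poch_refl ((A₀ - A₁ + A₂ + A₃ + 1) / 2) ((-A₀ + A₁ - A₂ - A₃ + 1) / 2 - (n : ℂ)) n k hk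
    (by ring)
  have r3 := poch_refl (1 + A₂) (-A₂ - n) n k hk (by ring)
  have r4 := poch_refl 1 (-(n : ℂ)) n k hk (by ring)
  have p3 := poch_ne _ g1 n
  have p3' := poch_ne _ g1 (n - k)
  have p3'' := poch_ne _ g1 k
  rw [poch_one, poch_one] at r4
  have f1 : (n.factorial : ℂ) ≠ 0 := by exact_mod_cast n.factorial_ne_zero
  have f2 : ((n - k).factorial : ℂ) ≠ 0 := by exact_mod_cast (n - k).factorial_ne_zero
  have f3 : (k.factorial : ℂ) ≠ 0 := by exact_mod_cast k.factorial_ne_zero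
  unfold rr hy
  have s2 : ((-1 : ℂ) ^ k) ≠ 0 := by simp
  have m4 : poch (-(n : ℂ)) k ≠ 0 := by
    intro h0; rw [h0] at r4; simp at r4; exact n.factorial_ne_zero r4
  have m3 : poch (-A₂ - n) k ≠ 0 := by
    intro h0; rw [h0] at r3; simp at r3; exact p3 r3
  rw [r1, r2, r3, r4]
  generalize (-1 : ℂ) ^ k = s at *
  clear r1 r2 r3 r4 f1 p3
  generalize poch ((-A₀ + A₁ - A₂ - A₃ + 1) / 2 - (n : ℂ)) k = Z1 at *
  generalize poch ((A₀ + A₁ - A₂ + A₃ + 1) / 2 - (n : ℂ)) k = Z2 at *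
  generalize poch (1 + A₂ - A₃) n = X
  generalize poch (1 + A₂ + A₃) n = Y
  rw [mul_comm, mul_div_assoc, mul_div_assoc] 
  simp only [div_eq_mul_inv, mul_inv]
  generalize X⁻¹ = X'
  generalize Y⁻¹ = Y'
  field_simp

/-- The explicit `₄F₃(·;1)`-coefficients solve the recurrence `Rc_∞(A)` with
`C₀ = 1` and the convention `C₋₁ = 0`. -/
theorem stmt_17 (A₀ A₁ A₂ A₃ : ℂ)
    (h1 : ∀ m : ℕ, 1 ≤ m → A₂ ≠ -(m : ℂ))
    (h2 : ∀ m : ℕ, 1 ≤ m → A₂ + A₃ ≠ -(m : ℂ))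
    (h3 : ∀ m : ℕ, 1 ≤ m → A₂ - A₃ ≠ -(m : ℂ))
    (h4 : ∀ m : ℤ, Odd m → -A₀ + A₁ - A₂ - A₃ ≠ (m : ℂ))
    (h5 : ∀ m : ℤ, Odd m → A₀ + A₁ - A₂ + A₃ ≠ (m : ℂ)) :
    C A₀ A₁ A₂ A₃ 0 = 1 ∧
    ∀ n : ℕ, 1 ≤ n →
      4 * (n : ℂ) * ((n : ℂ) + 2 * A₂) * ((n : ℂ) + A₂ + A₃) * ((n : ℂ) + A₂ - A₃)
          * C A₀ A₁ A₂ A₃ n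
        = (2 * ((n : ℂ) + A₂) - 1) ^ 2
            * (2 * (n : ℂ) ^ 2 + 4 * A₂ * (n : ℂ) - A₀ ^ 2 + A₁ ^ 2 + A₂ ^ 2 - A₃ ^ 2 + 1
                - 2 * ((n : ℂ) + A₂)) * C A₀ A₁ A₂ A₃ (n - 1)
          - (2 * (n : ℂ) + 2 * A₂ - 1) * (2 * (n : ℂ) + 2 * A₂ - 3)
              * ((n : ℂ) + A₀ + A₂ - 1) * ((n : ℂ) - A₀ + A₂ - 1)
              * (if n = 1 then 0 else C A₀ A₁ A₂ A₃ (n - 2)) := by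
  have g1 : ∀ k : ℕ, 1 + A₂ + (k : ℂ) ≠ 0 := by
    intro k hk; apply h1 (k + 1) (by omega); push_cast; linear_combination hk
  have g2 : ∀ k : ℕ, 1 + A₂ + A₃ + (k : ℂ) ≠ 0 := by
    intro k hk; apply h2 (k + 1) (by omega); push_cast; linear_combination hk
  have g3 : ∀ k : ℕ, 1 + A₂ - A₃ + (k : ℂ) ≠ 0 := by
    intro k hk; apply h3 (k + 1) (by omega); push_cast; linear_combination hk
  refine ⟨by simp [C, poch], ?_⟩
  intro n hn
  have rs : ∀ m : ℕ, (1 + A₂ - A₃ + m) * (1 + A₂ + A₃ + m) * rr A₂ A₃ (m + 1)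
      = (1 / 2 + A₂ + m) * (1 + A₂ + m) * rr A₂ A₃ m := by
    intro m
    have e1 := poch_ne _ g2 m
    have e2 := poch_ne _ g3 m
    have e3 := g2 m
    have e4 := g3 m
    unfold rr
    rw [poch_succ, poch_succ, poch_succ, poch_succ]
    rw [mul_div_assoc', mul_div_assoc', div_eq_div_iff (by simp [*]) (by simp [*])]
    ring
  simp only [C_eq A₀ A₁ A₂ A₃ g1 h4 h5]
  have hu := hy_rec ((-A₀ + A₁ + A₂ + A₃ + 1) / 2) ((A₀ + A₁ + A₂ - A₃ + 1) / 2) (1 + A₂) g1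
  have hv := hy_rec ((-A₀ - A₁ + A₂ - A₃ + 1) / 2) ((A₀ - A₁ + A₂ + A₃ + 1) / 2) (1 + A₂) g1
  have hco := core A₀ A₁ A₂ A₃ _ _ _ _ _ _ rfl rfl rfl rfl g1 hu hv
  have hu0 : hy ((-A₀ + A₁ + A₂ + A₃ + 1) / 2) ((A₀ + A₁ + A₂ - A₃ + 1) / 2) (1 + A₂) 0 = 1 := by
    simp [hy, poch]
  have hv0 : hy ((-A₀ - A₁ + A₂ - A₃ + 1) / 2) ((A₀ - A₁ + A₂ + A₃ + 1) / 2) (1 + A₂) 0 = 1 := by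
    simp [hy, poch]
  generalize hy ((-A₀ + A₁ + A₂ + A₃ + 1) / 2) ((A₀ + A₁ + A₂ - A₃ + 1) / 2) (1 + A₂) = u at *
  generalize hy ((-A₀ - A₁ + A₂ - A₃ + 1) / 2) ((A₀ - A₁ + A₂ + A₃ + 1) / 2) (1 + A₂) = v at *
  obtain rfl | ⟨N, rfl⟩ : n = 1 ∨ ∃ N, n = N + 2 := by
    rcases n with _ | _ | N
    · omega
    · left; rfl
    · right; exact ⟨N, rfl⟩
  · have hu1 := hu 0
    have hv1 := hv 0
    have r1 := rs 0
    simp [Finset.sum_range_succ, hu0, hv0] at hu1 hv1 r1 ⊢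
    linear_combination 4 * (1 + 2 * A₂) * (u 1 + v 1) * r1
      + 4 * (1 + 2 * A₂) * (1 / 2 + A₂) * rr A₂ A₃ 0 * (hu1 + hv1)
  · have r1 := rs N
    have r2 := rs (N + 1)
    have e3 := g2 N
    have e4 := g3 N
    have hc := hco N
    rw [if_neg (by omega), show N + 2 - 1 = N + 1 by omega, show N + 2 - 2 = N by omega]
    rw [show N + 1 + 1 = N + 2 by omega] at r2 ⊢
    rw [show N + 2 + 1 = N + 3 by omega]
    generalize ∑ k ∈ Finset.range (N + 3), u k * v (N + 2 - k) = S2 at *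
    generalize ∑ k ∈ Finset.range (N + 2), u k * v (N + 1 - k) = S1 at *
    generalize ∑ k ∈ Finset.range (N + 1), u k * v (N - k) = S0 at *
    generalize rr A₂ A₃ (N + 2) = R2 at *
    generalize rr A₂ A₃ (N + 1) = R1 at *
    generalize rr A₂ A₃ N = R0 at *
    push_cast at r1 r2 ⊢
    generalize (N : ℂ) = z at *
    unfold al be de at hc
    apply mul_left_cancel₀ (mul_ne_zero e3 e4)
    linear_combination (1 + A₂ + A₃ + z) * (1 + A₂ - A₃ + z) * 4 * (z + 2) * (z + 2 + 2 * A₂) * S2 * r2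
      + (4 * (z + 2) * (z + 2 + 2 * A₂) * (1 / 2 + A₂ + (z + 1)) * (1 + A₂ + (z + 1)) * S2
        - (2 * (z + 2 + A₂) - 1) ^ 2 * (2 * (z + 2) ^ 2 + 4 * A₂ * (z + 2) - A₀ ^ 2
  + A₁ ^ 2 + A₂ ^ 2 - A₃ ^ 2 + 1 - 2 * (z + 2 + A₂)) * S1) * r1
      + (2 * (z + 2) + 2 * A₂ - 1) * (1 / 2 + A₂ + z) * R0 * hc

end Stmt17
end

section
/- Let A = (A₀, A₁, A₂, A₃) ∈ ℂ⁴, let ε ∈ (0,1), and let C : ℕ → ℂ be such that the series Σ_{n≥0} Cₙxⁿ converges for x ∈ (0, ε) and the function u(x) := x^{A₀−1/2}·Σ_{n≥0} Cₙxⁿ (complex power of the positive real x) satisfies Z(A)u = 0 on (0, ε). Then for every integer n ≥ 2: n(n−1)(n+A₀−1/2)(n−A₀−1/2)·Cₙ = (n−1)²·(2n² − 4n − A₀² + A₁² − A₂² − A₃² + 5/2)·C_{n−1} − (n+A₂−3/2)(n−A₂−3/2)(n+A₃−3/2)(n−A₃−3/2)·C_{n−2}. (This is the recurrence relation Rc₁(A).)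 -/
namespace Stmt18

/-- The fourth-order Fuchsian operator `Z(A)` of the paper, acting on functions of
a real variable. -/
noncomputable def Zop (A₀ A₁ A₂ A₃ : ℂ) (f : ℝ → ℂ) (x : ℝ) : ℂ :=
  ((x : ℂ) ^ 3 * ((x : ℂ) - 1) ^ 2) * deriv^[4] f x
    + (-2 * (x : ℂ) ^ 2 * ((x : ℂ) - 1) * (2 * A₀ * (x : ℂ) - 2 * A₀ - 5 * (x : ℂ) + 3))
        * deriv^[3] f x
    + ((x : ℂ) * ((6 * A₀ ^ 2 - A₂ ^ 2 - A₃ ^ 2 - 24 * A₀ + 25) * (x : ℂ) ^ 2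
        + (-11 * A₀ ^ 2 - A₁ ^ 2 + A₂ ^ 2 + A₃ ^ 2 + 36 * A₀ - 59 / 2) * (x : ℂ)
        + (10 * A₀ - 9) * (2 * A₀ - 3) / 4)) * deriv^[2] f x
    + (-((2 * A₀ - 3) * (2 * A₀ ^ 2 - A₂ ^ 2 - A₃ ^ 2 - 6 * A₀ + 5)) * (x : ℂ) ^ 2
        + (A₀ - 1) * (6 * A₀ ^ 2 + 2 * A₁ ^ 2 - 2 * A₂ ^ 2 - 2 * A₃ ^ 2 - 16 * A₀ + 11) * (x : ℂ)
        - (2 * A₀ - 3) * (2 * A₀ - 1) ^ 2 / 4) * deriv f x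
    + ((A₀ - 1 + A₃) * (A₀ - 1 - A₃) * (A₀ - 1 + A₂) * (A₀ - 1 - A₂) * (x : ℂ)
        - (2 * A₀ - 1) ^ 2 * (A₀ ^ 2 + A₁ ^ 2 - A₂ ^ 2 - A₃ ^ 2 - 2 * A₀ + 1) / 4) * f x

/-- Absolute convergence on the interval. -/
def PP (ε : ℝ) (c : ℕ → ℂ) : Prop := ∀ r ∈ Set.Ioo (0 : ℝ) ε, Summable fun n : ℕ => ‖c n‖ * r ^ n

/-- Sum of the series. -/
noncomputable def SS (c : ℕ → ℂ) (x : ℂ) : ℂ := ∑' n : ℕ, c n * x ^ n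

/-- Shift of a sequence. -/
def sh (c : ℕ → ℂ) : ℕ → ℂ
  | 0 => 0
  | n + 1 => c n

/-- Coefficients of iterated derivatives. -/
def DD (s : ℂ) (C : ℕ → ℂ) : ℕ → ℕ → ℂ
  | 0 => C
  | k + 1 => fun n => (s - k + n) * DD s C k n

lemma PP.bound {ε : ℝ} {c : ℕ → ℂ} (d : ℕ → ℂ) (K : ℝ)
    (hd : ∀ n, ‖d n‖ ≤ (K + n) * ‖c n‖)
    (h : ∀ r ∈ Set.Ioo (0 : ℝ) ε, ∃ M, ∀ n, ‖c n‖ * r ^ n ≤ M) : PP ε d := by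
  intro r hr
  obtain ⟨r', h1, h2⟩ := exists_between hr.2
  have hr0 := hr.1
  have hr'0 : 0 < r' := hr.1.trans h1
  obtain ⟨M, hM⟩ := h r' ⟨hr'0, h2⟩
  have hq : ‖r / r'‖ < 1 := by
    rw [Real.norm_of_nonneg (by positivity)]
    exact (div_lt_one hr'0).2 h1
  have hs : Summable fun n : ℕ => (|K| + n) * M * (r / r') ^ n := by
    have a1 := (summable_geometric_of_norm_lt_one hq).mul_left (|K| * M)
    have a2 := (summable_pow_mul_geometric_of_norm_lt_one 1 hq).mul_left M
    refine (a1.add a2).congr fun n => ?_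
    simp only [pow_one]; ring
  refine Summable.of_nonneg_of_le (fun n => by positivity) (fun n => ?_) hs
  have e : r ^ n = r' ^ n * (r / r') ^ n := by
    rw [← mul_pow]; congr 1; field_simp
  calc ‖d n‖ * r ^ n ≤ ((|K| + n) * ‖c n‖) * r ^ n := by
        gcongr
        refine (hd n).trans ?_
        gcongr
        exact le_abs_self K
    _ = (|K| + n) * (‖c n‖ * r' ^ n) * (r / r') ^ n := by rw [e]; ring
    _ ≤ _ := by
        gcongr
        exact hM n

lemma PP.bdd {ε : ℝ} {c : ℕ → ℂ} (h : PP ε c) :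
    ∀ r ∈ Set.Ioo (0 : ℝ) ε, ∃ M, ∀ n, ‖c n‖ * r ^ n ≤ M := by
  intro r hr
  have hr0 := hr.1
  exact ⟨_, fun n => (h r hr).le_tsum n (fun j _ => by positivity)⟩

lemma PP.of_conv {ε : ℝ} {c : ℕ → ℂ}
    (h : ∀ x ∈ Set.Ioo (0 : ℝ) ε, Summable fun n : ℕ => c n * (x : ℂ) ^ n) : PP ε c := by
  intro r hr
  refine (h r hr).norm.congr fun n => ?_
  rw [norm_mul, norm_pow, Complex.norm_real, Real.norm_of_nonneg hr.1.le]

lemma PP.mulLin {ε : ℝ} {c : ℕ → ℂ} (h : PP ε c) (a : ℂ) : PP ε fun n => (a + n) * c n := by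
  refine PP.bound _ ‖a‖ (fun n => ?_) h.bdd
  rw [norm_mul]
  gcongr
  refine (norm_add_le _ _).trans ?_
  simp

lemma PP.mulC {ε : ℝ} {c : ℕ → ℂ} (h : PP ε c) (a : ℂ) : PP ε fun n => a * c n := by
  intro r hr
  refine ((h r hr).mul_left ‖a‖).congr fun n => ?_
  rw [norm_mul, mul_assoc]

lemma PP.add {ε : ℝ} {c d : ℕ → ℂ} (h : PP ε c) (h' : PP ε d) : PP ε fun n => c n + d n := by
  intro r hr
  have hr0 := hr.1
  refine Summable.of_nonneg_of_le (fun n => by positivity) (fun n => ?_) ((h r hr).add (h' r hr))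
  rw [← add_mul]
  gcongr
  exact norm_add_le _ _

lemma PP.sh {ε : ℝ} {c : ℕ → ℂ} (h : PP ε c) : PP ε (sh c) := by
  intro r hr
  rw [← summable_nat_add_iff 1]
  refine ((h r hr).mul_left r).congr fun n => ?_
  simp only [Stmt18.sh]; ring

lemma PP.summ {ε : ℝ} {c : ℕ → ℂ} (h : PP ε c) {x : ℂ} (hx : ‖x‖ < ε) :
    Summable fun n : ℕ => c n * x ^ n := by
  obtain ⟨r, h1, h2⟩ := exists_between hx
  have := h r ⟨(norm_nonneg x).trans_lt h1, h2⟩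
  refine Summable.of_norm_bounded this fun n => ?_
  rw [norm_mul, norm_pow]
  gcongr

lemma SS_mulC (c : ℕ → ℂ) (a x : ℂ) : SS (fun n => a * c n) x = a * SS c x := by
  simp only [SS, mul_assoc, tsum_mul_left]

lemma SS_add {ε : ℝ} {c d : ℕ → ℂ} (h : PP ε c) (h' : PP ε d) {x : ℂ} (hx : ‖x‖ < ε) :
    SS (fun n => c n + d n) x = SS c x + SS d x := by
  simp only [SS, add_mul]
  exact (h.summ hx).tsum_add (h'.summ hx)

lemma SS_sh {ε : ℝ} {c : ℕ → ℂ} (h : PP ε c) {x : ℂ} (hx : ‖x‖ < ε) :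
    SS (sh c) x = x * SS c x := by
  have := (h.sh.summ hx).tsum_eq_zero_add
  simp only [SS]
  rw [this, ← tsum_mul_left]
  simp only [sh, zero_mul, zero_add]
  congr 1; ext n; ring

lemma SS_deriv {ε : ℝ} {c : ℕ → ℂ} (h : PP ε c) {x : ℂ} (hx : ‖x‖ < ε) :
    HasDerivAt (SS c) (∑' n : ℕ, c n * (n * x ^ (n - 1))) x := by
  obtain ⟨r, h1, h2⟩ := exists_between hx
  have hr0 : 0 < r := (norm_nonneg x).trans_lt h1
  have hs := ((h.mulLin 0) r ⟨hr0, h2⟩).mul_left r⁻¹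
  refine hasDerivAt_tsum_of_isPreconnected (t := Metric.ball (0 : ℂ) r) (y₀ := x)
    (g := fun n z => c n * z ^ n) (g' := fun n z => c n * (n * z ^ (n - 1))) hs Metric.isOpen_ball
    (convex_ball _ _).isPreconnected (fun n y _ => ?_) (fun n y hy => ?_) ?_ (h.summ hx) ?_
  · exact (hasDerivAt_pow n y).const_mul (c n)
  · rw [mem_ball_zero_iff] at hy
    rcases n with _ | n
    · simp
    · simp only [norm_mul, norm_pow, zero_add, Nat.add_sub_cancel]
      have : r⁻¹ * (‖((n + 1 : ℕ) : ℂ)‖ * ‖c (n + 1)‖ * r ^ (n + 1))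
          = ‖c (n + 1)‖ * (‖((n + 1 : ℕ) : ℂ)‖ * r ^ n) := by
        field_simp
        ring
      rw [this]
      gcongr
  · simpa using h1
  · simpa using h1

lemma main_deriv {ε : ℝ} {c : ℕ → ℂ} (h : PP ε c) (s : ℂ) {x : ℝ} (hx : x ∈ Set.Ioo (0 : ℝ) ε) :
    HasDerivAt (fun t : ℝ => (t : ℂ) ^ s * SS c t)
      ((x : ℂ) ^ (s - 1) * SS (fun n => (s + n) * c n) x) x := by
  have hx0 : (x : ℂ) ≠ 0 := by exact_mod_cast hx.1.ne'
  have hn : ‖(x : ℂ)‖ < ε := by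
    rw [Complex.norm_real, Real.norm_of_nonneg hx.1.le]; exact hx.2
  have d1 : HasDerivAt (fun z : ℂ => z ^ s) (s * (x : ℂ) ^ (s - 1)) (x : ℂ) := by
    have := (hasDerivAt_id (x : ℂ)).cpow_const (c := s) (Or.inl (by simpa using hx.1))
    simpa using this
  have d := (d1.mul (SS_deriv h hn)).comp_ofReal
  refine HasDerivAt.congr_deriv (f := fun t : ℝ => (t : ℂ) ^ s * SS c t) d ?_
  have e1 : SS (fun n => (s + n) * c n) x = s * SS c x + SS (fun n => (0 + n) * c n) x := by
    rw [← SS_mulC, ← SS_add (h.mulC s) (h.mulLin 0) hn]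
    congr 1; ext n; ring
  have e2 : SS (fun n => (0 + n) * c n) x = x * ∑' n : ℕ, c n * (n * (x : ℂ) ^ (n - 1)) := by
    rw [SS, ← tsum_mul_left]
    congr 1; ext n
    rcases n with _ | n
    · simp
    · simp only [Nat.add_sub_cancel]; ring
  have e3 : (x : ℂ) ^ s = (x : ℂ) ^ (s - 1) * x := by
    rw [Complex.cpow_sub _ _ hx0, Complex.cpow_one]; field_simp
  rw [e1, e2, e3]; ring

lemma PP.DD {ε : ℝ} {C : ℕ → ℂ} (h : PP ε C) (s : ℂ) (k : ℕ) : PP ε (DD s C k) := by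
  induction k with
  | zero => exact h
  | succ k ih => exact ih.mulLin _

lemma iter_deriv {ε : ℝ} {C : ℕ → ℂ} (h : PP ε C) (s : ℂ) (k : ℕ) :
    ∀ x ∈ Set.Ioo (0 : ℝ) ε, deriv^[k] (fun t : ℝ => (t : ℂ) ^ s * SS C t) x
      = (x : ℂ) ^ (s - k) * SS (DD s C k) x := by
  induction k with
  | zero => intro x _; simp [DD]
  | succ k ih =>
    intro x hx
    rw [Function.iterate_succ_apply']
    have : deriv^[k] (fun t : ℝ => (t : ℂ) ^ s * SS C t) =ᶠ[nhds x]
        fun t : ℝ => (t : ℂ) ^ (s - k) * SS (DD s C k) t := by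
      filter_upwards [isOpen_Ioo.mem_nhds hx] with y hy using ih y hy
    rw [this.deriv_eq, (main_deriv (h.DD s k) (s - k) hx).deriv]
    simp only [DD]
    push_cast
    rw [sub_sub]

lemma identity {ε : ℝ} (hε : 0 < ε) {c : ℕ → ℂ} (h : PP ε c)
    (h0 : ∀ x ∈ Set.Ioo (0 : ℝ) ε, SS c x = 0) (n : ℕ) : c n = 0 := by
  induction n using Nat.strong_induction_on generalizing c with
  | _ n ih =>
  have z : c 0 = 0 := by
    have hc : ContinuousAt (SS c) ((0 : ℝ) : ℂ) := (SS_deriv h (by simpa using hε)).continuousAt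
    have hc' : ContinuousAt (fun t : ℝ => SS c t) 0 :=
      ContinuousAt.comp (f := fun t : ℝ => (t : ℂ)) hc Complex.continuous_ofReal.continuousAt
    have l1 : Filter.Tendsto (fun t : ℝ => SS c t) (nhdsWithin 0 (Set.Ioi 0)) (nhds (SS c (0 : ℝ))) :=
      hc'.tendsto.mono_left nhdsWithin_le_nhds
    have l2 : Filter.Tendsto (fun t : ℝ => SS c t) (nhdsWithin 0 (Set.Ioi 0)) (nhds 0) := by
      refine tendsto_const_nhds.congr' ?_
      filter_upwards [Ioo_mem_nhdsGT hε] with t ht using (h0 t ht).symm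
    have e := tendsto_nhds_unique l1 l2
    rw [SS, tsum_eq_single 0] at e
    · simpa using e
    · intro b hb; simp [hb]
  rcases n with _ | n
  · exact z
  · have hs : sh (fun k => c (k + 1)) = c := by
      ext k; rcases k with _ | k
      · exact z.symm
      · rfl
    have hp : PP ε (fun k => c (k + 1)) := by
      intro r hr
      have := ((summable_nat_add_iff 1).2 (h r hr)).mul_left r⁻¹
      refine this.congr fun k => ?_
      have := hr.1.ne'
      field_simp
      ring
    refine ih n (Nat.lt_succ_self n) hp fun x hx => ?_
    have hn : ‖(x : ℂ)‖ < ε := by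
      rw [Complex.norm_real, Real.norm_of_nonneg hx.1.le]; exact hx.2
    have h1 := SS_sh hp hn
    rw [hs, h0 x hx] at h1
    have hx0 : (x : ℂ) ≠ 0 := by exact_mod_cast hx.1.ne'
    exact (mul_eq_zero.1 h1.symm).resolve_left hx0

/-- Coefficients of `(q₀ + q₁ x + q₂ x²) * Σ c n xⁿ`. -/
def qq (q₀ q₁ q₂ : ℂ) (c : ℕ → ℂ) : ℕ → ℂ :=
  fun n => q₀ * c n + (q₁ * sh c n + q₂ * sh (sh c) n)

lemma PP.qq {ε : ℝ} {c : ℕ → ℂ} (h : PP ε c) (q₀ q₁ q₂ : ℂ) : PP ε (qq q₀ q₁ q₂ c) :=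
  (h.mulC q₀).add ((h.sh.mulC q₁).add (h.sh.sh.mulC q₂))

lemma SS_qq {ε : ℝ} {c : ℕ → ℂ} (h : PP ε c) (q₀ q₁ q₂ : ℂ) {x : ℂ} (hx : ‖x‖ < ε) :
    SS (qq q₀ q₁ q₂ c) x = (q₀ + q₁ * x + q₂ * x ^ 2) * SS c x := by
  unfold Stmt18.qq
  rw [SS_add (h.mulC q₀) ((h.sh.mulC q₁).add (h.sh.sh.mulC q₂)) hx,
    SS_add (h.sh.mulC q₁) (h.sh.sh.mulC q₂) hx, SS_mulC, SS_mulC, SS_mulC, SS_sh h.sh hx,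
    SS_sh h hx]
  ring

/-- The coefficients of a local solution `x^{A₀−1/2} Σ Cₙxⁿ` of `Z(A)` at `x = 0`
satisfy the recurrence `Rc₁(A)`. -/
theorem stmt_18 (A₀ A₁ A₂ A₃ : ℂ) (ε : ℝ) (hε : ε ∈ Set.Ioo (0 : ℝ) 1) (C : ℕ → ℂ)
    (hconv : ∀ x ∈ Set.Ioo (0 : ℝ) ε, Summable fun n : ℕ => C n * (x : ℂ) ^ n)
    (hode : ∀ x ∈ Set.Ioo (0 : ℝ) ε,
      Zop A₀ A₁ A₂ A₃
        (fun t : ℝ => (t : ℂ) ^ (A₀ - 1 / 2) * ∑' n : ℕ, C n * (t : ℂ) ^ n) x = 0) :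
    ∀ n : ℕ, 2 ≤ n →
      (n : ℂ) * ((n : ℂ) - 1) * ((n : ℂ) + A₀ - 1 / 2) * ((n : ℂ) - A₀ - 1 / 2) * C n
        = ((n : ℂ) - 1) ^ 2
            * (2 * (n : ℂ) ^ 2 - 4 * (n : ℂ) - A₀ ^ 2 + A₁ ^ 2 - A₂ ^ 2 - A₃ ^ 2 + 5 / 2)
            * C (n - 1)
          - ((n : ℂ) + A₂ - 3 / 2) * ((n : ℂ) - A₂ - 3 / 2) * ((n : ℂ) + A₃ - 3 / 2)
              * ((n : ℂ) - A₃ - 3 / 2) * C (n - 2) := by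
  have hC : PP ε C := PP.of_conv hconv
  set s : ℂ := A₀ - 1 / 2 with hs
  have P4 := (hC.DD s 4).qq 1 (-2) 1
  have P3 := (hC.DD s 3).qq (-2 * (2 * A₀ - 3)) (-2 * (-4 * A₀ + 8)) (-2 * (2 * A₀ - 5))
  have P2 := (hC.DD s 2).qq ((10 * A₀ - 9) * (2 * A₀ - 3) / 4)
    (-11 * A₀ ^ 2 - A₁ ^ 2 + A₂ ^ 2 + A₃ ^ 2 + 36 * A₀ - 59 / 2)
    (6 * A₀ ^ 2 - A₂ ^ 2 - A₃ ^ 2 - 24 * A₀ + 25)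
  have P1 := (hC.DD s 1).qq (-((2 * A₀ - 3) * (2 * A₀ - 1) ^ 2 / 4))
    ((A₀ - 1) * (6 * A₀ ^ 2 + 2 * A₁ ^ 2 - 2 * A₂ ^ 2 - 2 * A₃ ^ 2 - 16 * A₀ + 11))
    (-((2 * A₀ - 3) * (2 * A₀ ^ 2 - A₂ ^ 2 - A₃ ^ 2 - 6 * A₀ + 5)))
  have P0 := (hC.DD s 0).qq 0
    (-((2 * A₀ - 1) ^ 2 * (A₀ ^ 2 + A₁ ^ 2 - A₂ ^ 2 - A₃ ^ 2 - 2 * A₀ + 1) / 4))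
    ((A₀ - 1 + A₃) * (A₀ - 1 - A₃) * (A₀ - 1 + A₂) * (A₀ - 1 - A₂))
  have key := identity hε.1 (P4.add (P3.add (P2.add (P1.add P0)))) ?_
  · intro n hn
    obtain ⟨m, rfl⟩ := Nat.exists_eq_add_of_le' hn
    have k := key (m + 2)
    simp only [qq, sh, DD] at k
    simp only [Nat.add_sub_cancel, show m + 2 - 1 = m + 1 from rfl]
    rw [hs] at k
    push_cast at k ⊢
    linear_combination k
  · intro x hx
    have hx0 : (x : ℂ) ≠ 0 := by exact_mod_cast hx.1.ne'
    have hn : ‖(x : ℂ)‖ < ε := by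
      rw [Complex.norm_real, Real.norm_of_nonneg hx.1.le]; exact hx.2
    rw [SS_add P4 (P3.add (P2.add (P1.add P0))) hn, SS_add P3 (P2.add (P1.add P0)) hn,
      SS_add P2 (P1.add P0) hn, SS_add P1 P0 hn, SS_qq (hC.DD s 4) _ _ _ hn,
      SS_qq (hC.DD s 3) _ _ _ hn, SS_qq (hC.DD s 2) _ _ _ hn, SS_qq (hC.DD s 1) _ _ _ hn,
      SS_qq (hC.DD s 0) _ _ _ hn]
    have H := hode x hx
    have i4 := iter_deriv hC s 4 x hx
    have i3 := iter_deriv hC s 3 x hx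
    have i2 := iter_deriv hC s 2 x hx
    have i1 := iter_deriv hC s 1 x hx
    have i0 := iter_deriv hC s 0 x hx
    simp only [Function.iterate_one, Function.iterate_zero, id] at i1 i0
    change Zop A₀ A₁ A₂ A₃ (fun t : ℝ => (t : ℂ) ^ s * SS C t) x = 0 at H
    unfold Zop at H
    beta_reduce at H
    rw [i4, i3, i2, i1, i0] at H
    have c : ∀ j : ℕ, (x : ℂ) ^ (s - j) * x ^ j = (x : ℂ) ^ s := by
      intro j
      rw [Complex.cpow_sub _ _ hx0, Complex.cpow_natCast]; field_simp
    have hp : (x : ℂ) ^ (s - (4 : ℕ)) ≠ 0 := by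
      simp [Complex.cpow_eq_zero_iff, hx0]
    have c' : ∀ j i : ℕ, j + i = 4 → (x : ℂ) ^ (s - j) = (x : ℂ) ^ (s - (4 : ℕ)) * (x : ℂ) ^ i := by
      intro j i hij
      have hj : (x : ℂ) ^ j ≠ 0 := pow_ne_zero _ hx0
      apply mul_right_cancel₀ hj
      rw [c, mul_assoc, ← pow_add, add_comm i j, hij, c]
    rw [c' 3 1 rfl, c' 2 2 rfl, c' 1 3 rfl, c' 0 4 rfl] at H
    have hq : (x : ℂ) ^ (s - (4 : ℕ)) * (x : ℂ) ^ 3 ≠ 0 := mul_ne_zero hp (pow_ne_zero _ hx0)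
    apply mul_left_cancel₀ hq
    rw [mul_zero]
    linear_combination H

end Stmt18
end

section
/- Let A = (A₀, A₁, A₂, A₃) ∈ ℂ⁴. Then the solution space of Q(A) has the following symmetries. (i) If u : (0,1) → ℂ is three-times differentiable and Q(A₁, A₀, A₂, A₃)u = 0 on (0,1), then the function x ↦ u(1−x) satisfies Q(A₀, A₁, A₂, A₃) on (0,1). (ii) If u : (−∞,0) → ℂ is three-times differentiable and Q(A₃, A₁, A₂, A₀)u = 0 on (−∞,0), then the function v(x) := (−1/x)^{1+2A₂}·u(1/x) (complex power of the positive real −1/x) satisfies Q(A₀, A₁, A₂, A₃)v = 0 on (−∞,0). (iii) If u : (0,1) → ℂ is three-times differentiable and Q(A₀, A₃, A₂, A₁)u = 0 on (0,1), then the function v(x) := (1−x)^{−1−2A₂}·u(x/(x−1)) (complex power of the positive real 1−x) satisfies Q(A₀, A₁, A₂, A₃)v = 0 on (−∞,0). -/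
namespace Stmt19

/-- `f` is `n`-times differentiable on `U`. -/
def IterDiffOn (n : ℕ) (f : ℝ → ℂ) (U : Set ℝ) : Prop :=
  ∀ k < n, ∀ x ∈ U, DifferentiableAt ℝ (deriv^[k] f) x

/-- The third-order operator `Q(A)`. -/
noncomputable def Qop (A₀ A₁ A₂ A₃ : ℂ) (g : ℝ → ℂ) (x : ℝ) : ℂ :=
  (x : ℂ) ^ 2 * ((x : ℂ) - 1) ^ 2 * deriv^[3] g x
    + ((2 * A₂ + 3) * ((x : ℂ) - 1) * (x : ℂ) * (2 * (x : ℂ) - 1)) * deriv^[2] g x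
    + (A₀ ^ 2 * (x : ℂ) - A₀ ^ 2 - A₁ ^ 2 * (x : ℂ) + 5 * A₂ ^ 2 * (x : ℂ) ^ 2
        - 5 * A₂ ^ 2 * (x : ℂ) + A₂ ^ 2 + 12 * A₂ * (x : ℂ) ^ 2 - 12 * A₂ * (x : ℂ)
        + 2 * A₂ - A₃ ^ 2 * (x : ℂ) ^ 2 + A₃ ^ 2 * (x : ℂ) + 7 * (x : ℂ) ^ 2
        - 7 * (x : ℂ) + 1) * deriv g x
    + ((1 / 2) * (2 * A₂ + 1) * (A₀ ^ 2 - A₁ ^ 2 + 2 * A₂ ^ 2 * (x : ℂ) - A₂ ^ 2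
        + 4 * A₂ * (x : ℂ) - 2 * A₂ - 2 * A₃ ^ 2 * (x : ℂ) + A₃ ^ 2
        + 2 * (x : ℂ) - 1)) * g x

theorem aux {S T : Set ℝ} (hS : IsOpen S) (u : ℝ → ℂ) (hu : IterDiffOn 3 u T)
    (p l l1 l2 : ℝ → ℂ) (φ m m1 m2 : ℝ → ℝ) (hφT : ∀ t ∈ S, φ t ∈ T)
    (hp : ∀ t ∈ S, HasDerivAt p (p t * l t) t)
    (hl : ∀ t ∈ S, HasDerivAt l (l1 t) t)
    (hl1 : ∀ t ∈ S, HasDerivAt l1 (l2 t) t)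
    (hφ : ∀ t ∈ S, HasDerivAt φ (m t) t)
    (hm : ∀ t ∈ S, HasDerivAt m (m1 t) t)
    (hm1 : ∀ t ∈ S, HasDerivAt m1 (m2 t) t) (x : ℝ) (hx : x ∈ S) :
    deriv (fun t => p t * u (φ t)) x = p x * (l x * u (φ x) + m x * deriv u (φ x)) ∧
    deriv^[2] (fun t => p t * u (φ t)) x = p x * ((l x ^ 2 + l1 x) * u (φ x)
      + (2 * l x * m x + m1 x) * deriv u (φ x) + (m x : ℂ) ^ 2 * deriv^[2] u (φ x)) ∧
    deriv^[3] (fun t => p t * u (φ t)) x = p x * (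
      (l x ^ 3 + 3 * l x * l1 x + l2 x) * u (φ x)
      + (3 * l x ^ 2 * m x + 3 * l1 x * m x + 3 * l x * m1 x + m2 x) * deriv u (φ x)
      + (3 * l x * (m x : ℂ) ^ 2 + 3 * m x * m1 x) * deriv^[2] u (φ x)
      + (m x : ℂ) ^ 3 * deriv^[3] u (φ x)) := by
  have hc : ∀ k < 3, ∀ t ∈ S, HasDerivAt (fun t => deriv^[k] u (φ t))
      (m t * deriv^[k+1] u (φ t)) t := by
    intro k hk t ht
    have h1 := (hu k hk (φ t) (hφT t ht)).hasDerivAt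
    have h2 := h1.scomp t (hφ t ht)
    rw [Function.iterate_succ_apply', ← Complex.real_smul]
    exact h2
  have hmC : ∀ t ∈ S, HasDerivAt (fun t => (m t : ℂ)) (m1 t) t :=
    fun t ht => (hm t ht).ofReal_comp
  have hm1C : ∀ t ∈ S, HasDerivAt (fun t => (m1 t : ℂ)) (m2 t) t :=
    fun t ht => (hm1 t ht).ofReal_comp
  have c0 : ∀ t ∈ S, HasDerivAt (fun t => u (φ t)) (m t * deriv u (φ t)) t :=
    fun t ht => hc 0 (by norm_num) t ht
  have c1 : ∀ t ∈ S, HasDerivAt (fun t => deriv u (φ t)) (m t * deriv^[2] u (φ t)) t :=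
    fun t ht => hc 1 (by norm_num) t ht
  have c2 : ∀ t ∈ S, HasDerivAt (fun t => deriv^[2] u (φ t)) (m t * deriv^[3] u (φ t)) t :=
    fun t ht => hc 2 (by norm_num) t ht
  have d1 : ∀ t ∈ S, deriv (fun t => p t * u (φ t)) t
      = p t * (l t * u (φ t) + m t * deriv u (φ t)) := by
    intro t ht
    rw [((hp t ht).fun_mul (c0 t ht)).deriv]
    ring
  have d2 : ∀ t ∈ S, deriv^[2] (fun t => p t * u (φ t)) t
      = p t * ((l t ^ 2 + l1 t) * u (φ t)
      + (2 * l t * m t + m1 t) * deriv u (φ t) + (m t : ℂ) ^ 2 * deriv^[2] u (φ t)) := by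
    intro t ht
    rw [Function.iterate_succ_apply', Function.iterate_one]
    rw [(Filter.eventuallyEq_of_mem (hS.mem_nhds ht) d1).deriv_eq]
    rw [((hp t ht).fun_mul (((hl t ht).fun_mul (c0 t ht)).fun_add
      ((hmC t ht).fun_mul (c1 t ht)))).deriv]
    ring
  refine ⟨d1 x hx, d2 x hx, ?_⟩
  rw [Function.iterate_succ_apply']
  rw [(Filter.eventuallyEq_of_mem (hS.mem_nhds hx) d2).deriv_eq]
  rw [((hp x hx).fun_mul ((((((hl x hx).fun_pow 2).fun_add (hl1 x hx)).fun_mul (c0 x hx)).fun_add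
      (((((hl x hx).const_mul 2).fun_mul (hmC x hx)).fun_add (hm1C x hx)).fun_mul (c1 x hx))).fun_add
      (((hmC x hx).fun_pow 2).fun_mul (c2 x hx)))).deriv]
  norm_num
  ring

theorem cinv (c d : ℂ) (n : ℕ) (b : ℝ) (t : ℝ) (h : t - b ≠ 0) (hd : d = -c * n) :
    HasDerivAt (fun t : ℝ => c / ((t : ℂ) - b) ^ n) (d / ((t : ℂ) - b) ^ (n + 1)) t := by
  have h' : (t : ℂ) - b ≠ 0 := by exact_mod_cast h
  have h1 : HasDerivAt (fun t : ℝ => (t : ℂ) - b) 1 t :=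
    (HasDerivAt.ofReal_comp (hasDerivAt_id t)).sub_const _ |>.congr_deriv (by simp)
  have h2 := (hasDerivAt_const t c).fun_div (h1.fun_pow n) (pow_ne_zero _ h')
  refine h2.congr_deriv ?_
  subst hd
  rcases n with _ | n
  · simp
  · field_simp
    simp
    ring

theorem rinv (c d : ℝ) (n : ℕ) (b : ℝ) (t : ℝ) (h : t - b ≠ 0) (hd : d = -c * n) :
    HasDerivAt (fun t : ℝ => c / (t - b) ^ n) (d / (t - b) ^ (n + 1)) t := by
  have h1 : HasDerivAt (fun t : ℝ => t - b) 1 t := (hasDerivAt_id t).sub_const _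
  have h2 := (hasDerivAt_const t c).fun_div (h1.fun_pow n) (pow_ne_zero _ h)
  refine h2.congr_deriv ?_
  subst hd
  rcases n with _ | n
  · simp
  · field_simp
    simp
    ring

theorem cpw (f : ℝ → ℝ) (f' t : ℝ) (c : ℂ) (hf : HasDerivAt f f' t) (h : 0 < f t) :
    HasDerivAt (fun t : ℝ => (f t : ℂ) ^ c) ((f t : ℂ) ^ c * (c * f' / f t)) t := by
  have h0 : (f t : ℂ) ≠ 0 := by exact_mod_cast h.ne'
  have h2 : HasDerivAt (fun z : ℂ => z ^ c) (c * (f t : ℂ) ^ (c - 1) * 1) (f t : ℂ) :=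
    (hasDerivAt_id (f t : ℂ)).cpow_const (Or.inl (by simpa using h))
  have h1 := HasDerivAt.scomp t h2 hf.ofReal_comp
  refine HasDerivAt.congr_deriv h1 ?_
  rw [Complex.cpow_sub _ _ h0, Complex.cpow_one, smul_eq_mul]
  field_simp

/-- Symmetries of the solution space of `Q(A)`:
(i) `x ↦ 1−x` with `(A₀,A₁)` exchanged; (ii) the Euler-type transform
`v(x) = (−1/x)^{1+2A₂} u(1/x)` with `(A₀,A₃)` exchanged; (iii) the Pfaff-type
transform `v(x) = (1−x)^{−1−2A₂} u(x/(x−1))` with `(A₁,A₃)` exchanged. -/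
theorem stmt_19 (A₀ A₁ A₂ A₃ : ℂ) :
    (∀ u : ℝ → ℂ, IterDiffOn 3 u (Set.Ioo 0 1) →
      (∀ x ∈ Set.Ioo (0 : ℝ) 1, Qop A₁ A₀ A₂ A₃ u x = 0) →
      ∀ x ∈ Set.Ioo (0 : ℝ) 1, Qop A₀ A₁ A₂ A₃ (fun t : ℝ => u (1 - t)) x = 0)
    ∧ (∀ u : ℝ → ℂ, IterDiffOn 3 u (Set.Iio 0) →
      (∀ x ∈ Set.Iio (0 : ℝ), Qop A₃ A₁ A₂ A₀ u x = 0) →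
      ∀ x ∈ Set.Iio (0 : ℝ),
        Qop A₀ A₁ A₂ A₃
          (fun t : ℝ => ((-t⁻¹ : ℝ) : ℂ) ^ (1 + 2 * A₂) * u t⁻¹) x = 0)
    ∧ (∀ u : ℝ → ℂ, IterDiffOn 3 u (Set.Ioo 0 1) →
      (∀ x ∈ Set.Ioo (0 : ℝ) 1, Qop A₀ A₃ A₂ A₁ u x = 0) →
      ∀ x ∈ Set.Iio (0 : ℝ),
        Qop A₀ A₁ A₂ A₃
          (fun t : ℝ => ((1 - t : ℝ) : ℂ) ^ (-1 - 2 * A₂) * u (t / (t - 1))) x = 0) := by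
  refine ⟨?_, ?_, ?_⟩
  · intro u hu hQ x hx
    have hx' : 1 - x ∈ Set.Ioo (0 : ℝ) 1 := ⟨by linarith [hx.2], by linarith [hx.1]⟩
    obtain ⟨e1, e2, e3⟩ := aux isOpen_Ioo u hu (fun _ => 1) (fun _ => 0) (fun _ => 0) (fun _ => 0)
      (fun t => 1 - t) (fun _ => -1) (fun _ => 0) (fun _ => 0)
      (S := Set.Ioo (0 : ℝ) 1)
      (fun t ht => ⟨by linarith [ht.2], by linarith [ht.1]⟩)
      (fun t _ => (hasDerivAt_const t _).congr_deriv (by simp))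
      (fun t _ => hasDerivAt_const t _) (fun t _ => hasDerivAt_const t _)
      (fun t _ => (hasDerivAt_id t).const_sub 1)
      (fun t _ => hasDerivAt_const t _) (fun t _ => hasDerivAt_const t _) x hx
    have h := hQ _ hx'
    simp only [one_mul] at e1 e2 e3
    unfold Qop at h ⊢
    rw [e1, e2, e3]
    push_cast at h ⊢
    linear_combination -h
  · intro u hu hQ x hx
    have hne : ∀ t ∈ Set.Iio (0 : ℝ), t - 0 ≠ 0 := fun t ht => by
      rw [sub_zero]; exact ne_of_lt ht
    have hx' : x⁻¹ ∈ Set.Iio (0 : ℝ) := Set.mem_Iio.2 (inv_lt_zero.2 hx)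
    obtain ⟨e1, e2, e3⟩ := aux isOpen_Iio u hu
      (fun t : ℝ => ((-t⁻¹ : ℝ) : ℂ) ^ (1 + 2 * A₂))
      (fun t => (-(1 + 2 * A₂)) / ((t : ℂ) - (0 : ℝ)) ^ 1)
      (fun t => (1 + 2 * A₂) / ((t : ℂ) - (0 : ℝ)) ^ 2)
      (fun t => (-2 * (1 + 2 * A₂)) / ((t : ℂ) - (0 : ℝ)) ^ 3)
      (fun t => t⁻¹) (fun t => (-1) / (t - 0) ^ 2)
      (fun t => 2 / (t - 0) ^ 3) (fun t => (-6) / (t - 0) ^ 4)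
      (S := Set.Iio (0 : ℝ))
      (fun t ht => Set.mem_Iio.2 (inv_lt_zero.2 (Set.mem_Iio.1 ht)))
      (fun t ht => by
        have h0 : t ≠ 0 := ne_of_lt ht
        have h0' : (t : ℂ) ≠ 0 := by exact_mod_cast h0
        refine (cpw (fun t => -t⁻¹) _ t _ (hasDerivAt_inv h0).fun_neg
          (by have := inv_lt_zero.2 (Set.mem_Iio.1 ht); linarith)).congr_deriv ?_
        push_cast
        field_simp
        simp
        ring)
      (fun t ht => cinv _ _ 1 0 t (hne t ht) (by push_cast; ring))
      (fun t ht => cinv _ _ 2 0 t (hne t ht) (by push_cast; ring))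
      (fun t ht => by simpa [neg_div] using hasDerivAt_inv (ne_of_lt ht))
      (fun t ht => rinv _ _ 2 0 t (hne t ht) (by norm_num))
      (fun t ht => rinv _ _ 3 0 t (hne t ht) (by norm_num)) x hx
    have h := hQ _ hx'
    have hxC : (x : ℂ) ≠ 0 := by exact_mod_cast (ne_of_lt hx)
    unfold Qop at h ⊢
    rw [e1, e2, e3]
    beta_reduce
    generalize (((-x⁻¹ : ℝ) : ℂ) ^ (1 + 2 * A₂)) = P
    push_cast at h ⊢
    simp only [sub_zero]
    generalize u x⁻¹ = u0 at *
    generalize deriv u x⁻¹ = u1 at *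
    generalize deriv^[2] u x⁻¹ = u2 at *
    generalize deriv^[3] u x⁻¹ = u3 at *
    rw [← mul_zero (-P), ← h]
    field_simp
    ring
  · intro u hu hQ x hx
    have hne : ∀ t ∈ Set.Iio (0 : ℝ), t - 1 ≠ 0 := fun t ht => by
      have : t < 0 := ht
      linarith
    have hT : ∀ t ∈ Set.Iio (0 : ℝ), t / (t - 1) ∈ Set.Ioo (0 : ℝ) 1 := fun t ht => by
      have : t < 0 := ht
      refine ⟨div_pos_of_neg_of_neg this (by linarith), ?_⟩
      rw [div_lt_one_of_neg (by linarith)]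
      linarith
    obtain ⟨e1, e2, e3⟩ := aux isOpen_Iio u hu
      (fun t : ℝ => ((1 - t : ℝ) : ℂ) ^ (-1 - 2 * A₂))
      (fun t => (-(1 + 2 * A₂)) / ((t : ℂ) - (1 : ℝ)) ^ 1)
      (fun t => (1 + 2 * A₂) / ((t : ℂ) - (1 : ℝ)) ^ 2)
      (fun t => (-2 * (1 + 2 * A₂)) / ((t : ℂ) - (1 : ℝ)) ^ 3)
      (fun t => t / (t - 1)) (fun t => (-1) / (t - 1) ^ 2)
      (fun t => 2 / (t - 1) ^ 3) (fun t => (-6) / (t - 1) ^ 4)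
      (S := Set.Iio (0 : ℝ)) hT
      (fun t ht => by
        have h0 : t < 0 := ht
        have h0' : (t : ℂ) - 1 ≠ 0 := by exact_mod_cast hne t ht
        have h1' : 1 - (t : ℂ) ≠ 0 := by
          intro hh
          apply h0'
          linear_combination -hh
        refine (cpw (fun t => 1 - t) _ t _ ((hasDerivAt_id t).const_sub 1)
          (by linarith)).congr_deriv ?_
        push_cast
        congr 1
        rw [div_eq_div_iff h1' (by simpa using h0')]
        ring)
      (fun t ht => cinv _ _ 1 1 t (hne t ht) (by push_cast; ring))
      (fun t ht => cinv _ _ 2 1 t (hne t ht) (by push_cast; ring))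
      (fun t ht => ((hasDerivAt_id t).fun_div ((hasDerivAt_id t).sub_const 1)
        (hne t ht)).congr_deriv (by simp))
      (fun t ht => rinv _ _ 2 1 t (hne t ht) (by norm_num))
      (fun t ht => rinv _ _ 3 1 t (hne t ht) (by norm_num)) x hx
    have h := hQ _ (hT x hx)
    have hxC : (x : ℂ) - 1 ≠ 0 := by exact_mod_cast hne x hx
    unfold Qop at h ⊢
    rw [e1, e2, e3]
    beta_reduce
    generalize (((1 - x : ℝ) : ℂ) ^ (-1 - 2 * A₂)) = P
    generalize u (x / (x - 1)) = u0 at *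
    generalize deriv u (x / (x - 1)) = u1 at *
    generalize deriv^[2] u (x / (x - 1)) = u2 at *
    generalize deriv^[3] u (x / (x - 1)) = u3 at *
    push_cast at h ⊢
    rw [← mul_zero (-P), ← h]
    obtain ⟨y, hy⟩ : ∃ y : ℂ, y = (x : ℂ) - 1 := ⟨_, rfl⟩
    have hxy : (x : ℂ) = y + 1 := by rw [hy]; ring
    rw [← hy] at hxC
    rw [hxy]
    simp only [add_sub_cancel_right]
    field_simp
    ring

end Stmt19
end
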